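/- There exists an absolute constant c > 0 such that for every d > 0, every graph G with average degree at least d contains a balanced subdivision of the complete graph K_k for some integer k ≥ c·√d. -/

import Mathlib

open scoped BigOperators

/-- The average degree of a graph `G`: `(1/|G|) * sum of degrees`. -/
noncomputable def avgDeg {V : Type*} (G : SimpleGraph V) : Real :=
  (finsum fun v : V => ((G.neighborSet v).ncard : Real)) / (Nat.card V : Real)

/-- `S` is the vertex set of a copy of `TK_t^(l)` in `G`: a balanced subdivision of the
complete graph `K_t` in which each edge is replaced by a path with `l` internal vertices
(i.e. of length `l + 1`); the paths are pairwise internally vertex disjoint. -/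
def IsTK {V : Type*} (G : SimpleGraph V) (t l : Nat) (S : Set V) : Prop :=
  ∃ b : Fin t → V, Function.Injective b ∧
    ∃ P : ∀ i j : Fin t, i < j → G.Walk (b i) (b j),
      (∀ i j (h : i < j), (P i j h).IsPath) ∧
      (∀ i j (h : i < j), (P i j h).length = l + 1) ∧
      (∀ i j (h : i < j), ∀ i' j' (h' : i' < j'), (i, j) ≠ (i', j') →
        ∀ v : V, v ∈ (P i j h).support → v ∈ (P i' j' h').support →
          (v = b i ∨ v = b j) ∧ (v = b i' ∨ v = b j')) ∧
      S = {v : V | ∃ (i j : Fin t) (h : i < j), v ∈ (P i j h).support}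

/-- `G` contains a copy of `TK_t^(l)`. -/
def HasTK {V : Type*} (G : SimpleGraph V) (t l : Nat) : Prop :=
  ∃ S : Set V, IsTK G t l S

/-!
One reduces to graphs of maximum degree `O(d ^ 2)` and then, by extremality, to a bipartite robust
sublinear expander.

Choose `k = Θ(√d)` branch vertices on one side of the bipartition: arbitrarily if `d` is at least
polylogarithmic in the number of vertices, and pairwise far apart otherwise. The main point is that
for *every* weighting `w ≥ 0` of the vertices with `∑ w ^ 2 ≤ ε d`, any two branch vertices are
joined by a path of one prescribed length `l` whose interior has weight at most `8`. Such a path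
comes from expanding around its two ends while admitting heavy vertices only in late layers; its
length is corrected to exactly `l` by switches, each offering two routes whose lengths differ by
`2`.

Minimizing `∑ load ^ 2` over fractional selections of paths and using the minimizer's own load as
`w`, one obtains a fractional selection whose load along every used path is at most `1 / 4`. A
counting form of the local lemma then selects pairwise disjoint paths from its support.
-/

namespace BalancedSubdivision

open Finset

section ConflictProb

variable {ι Ω : Type*} [Fintype Ω]

/-- The probability that independent samples from `p` and `q` are in conflict. -/
def conflictProb (conf : Ω → Ω → Prop) [DecidableRel conf] (p q : Ω → ℝ) : ℝ :=
  ∑ x, p x * ∑ y with conf x y, q y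

variable {conf : Ω → Ω → Prop} [DecidableRel conf]

lemma conflictProb_nonneg {p q : Ω → ℝ} (hp : ∀ x, 0 ≤ p x) (hq : ∀ x, 0 ≤ q x) :
    0 ≤ conflictProb conf p q :=
  sum_nonneg fun x _ => mul_nonneg (hp x) (sum_nonneg fun y _ => hq y)

lemma sum_conflictProb_le [Fintype ι] {μ : ι → Ω → ℝ}
    (h0 : ∀ i x, 0 ≤ μ i x) (h1 : ∀ i, ∑ x, μ i x = 1) {δ : ℝ}
    (hδ : ∀ i x, 0 < μ i x → ∑ j, ∑ y with conf x y, μ j y ≤ δ) (s : Finset ι) (i : ι) :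
    ∑ j ∈ s, conflictProb conf (μ i) (μ j) ≤ δ := by
  calc ∑ j ∈ s, conflictProb conf (μ i) (μ j)
      ≤ ∑ j, conflictProb conf (μ i) (μ j) :=
        sum_le_univ_sum_of_nonneg fun j => conflictProb_nonneg (h0 i) (h0 j)
    _ = ∑ x, μ i x * ∑ j, ∑ y with conf x y, μ j y := by
        simp only [conflictProb, mul_sum]
        rw [sum_comm]
    _ ≤ ∑ x, μ i x * δ := by
        refine sum_le_sum fun x _ => ?_
        rcases (h0 i x).eq_or_lt with hzero | hpos
        · simp [← hzero]
        · exact mul_le_mul_of_nonneg_left (hδ i x hpos) hpos.le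
    _ = δ := by rw [← sum_mul, h1, one_mul]

end ConflictProb

section ConflictFree

variable {ι Ω : Type*}

/-- No two distinct coordinates of `f` in `s` are in conflict. -/
def ConflictFree (conf : Ω → Ω → Prop) (s : Finset ι) (f : ι → Ω) : Prop :=
  (s : Set ι).Pairwise fun i j => ¬ conf (f i) (f j)

lemma ConflictFree.mono {conf : Ω → Ω → Prop} {s t : Finset ι} {f : ι → Ω}
    (h : ConflictFree conf t f) (hst : s ⊆ t) : ConflictFree conf s f :=
  Set.Pairwise.mono (coe_subset.2 hst) h

variable [DecidableEq ι]

lemma conflictFree_update_iff {conf : Ω → Ω → Prop} {s : Finset ι} {i : ι} (hi : i ∉ s)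
    (f : ι → Ω) (x : Ω) : ConflictFree conf s (Function.update f i x) ↔ ConflictFree conf s f := by
  refine forall₂_congr fun j hj => forall₂_congr fun k hk => ?_
  simp only [Function.update_of_ne (show j ≠ i by rintro rfl; exact hi hj),
    Function.update_of_ne (show k ≠ i by rintro rfl; exact hi hk)]

lemma exists_conflict_of_not_conflictFree_insert {conf : Ω → Ω → Prop} [Std.Symm conf]
    {s : Finset ι} {i : ι} {f : ι → Ω} (hs : ConflictFree conf s f)
    (h : ¬ ConflictFree conf (insert i s) f) : ∃ j ∈ s, conf (f i) (f j) := by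
  by_contra! hfree
  refine h ?_
  rw [ConflictFree, coe_insert]
  exact Set.Pairwise.insert hs fun j hj _ => ⟨hfree j hj, fun hc => hfree j hj (symm hc)⟩

open Classical in
lemma ite_conflictFree_le_insert_add {conf : Ω → Ω → Prop} [DecidableRel conf] [Std.Symm conf]
    (s : Finset ι) (i : ι) (f : ι → Ω) :
    (if ConflictFree conf s f then (1 : ℝ) else 0) ≤
      (if ConflictFree conf (insert i s) f then 1 else 0) +
        ∑ j ∈ s, (if ConflictFree conf (s.erase j) f then 1 else 0) *
          (if conf (f i) (f j) then 1 else 0) := by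
  set term : ι → ℝ := fun j => (if ConflictFree conf (s.erase j) f then 1 else 0) *
    (if conf (f i) (f j) then 1 else 0) with hterm
  have hnonneg : ∀ j ∈ s, 0 ≤ term j := fun j _ => by positivity
  by_cases hs : ConflictFree conf s f
  · rw [if_pos hs]
    by_cases hins : ConflictFree conf (insert i s) f
    · rw [if_pos hins]
      exact le_add_of_nonneg_right (sum_nonneg hnonneg)
    · obtain ⟨j, hj, hconf⟩ := exists_conflict_of_not_conflictFree_insert hs hins
      have hone : term j = 1 := by
        simp only [hterm, if_pos hconf, if_pos (hs.mono (erase_subset j s)), one_mul]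
      rw [if_neg hins, zero_add, ← hone]
      exact single_le_sum hnonneg hj
  · rw [if_neg hs]
    exact add_nonneg (by positivity) (sum_nonneg hnonneg)

variable [Fintype ι]

lemma prod_update_mul (μ : ι → Ω → ℝ) (f : ι → Ω) (i : ι) (x : Ω) :
    (∏ j, μ j (Function.update f i x j)) * μ i (f i) = (∏ j, μ j (f j)) * μ i x := by
  have hcongr : ∏ j ∈ univ.erase i, μ j (Function.update f i x j) =
      ∏ j ∈ univ.erase i, μ j (f j) :=
    prod_congr rfl fun j hj => by rw [Function.update_of_ne (ne_of_mem_erase hj)]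
  rw [← mul_prod_erase univ _ (mem_univ i), ← mul_prod_erase univ (fun j => μ j (f j)) (mem_univ i),
    hcongr, Function.update_self]
  ring

variable [Fintype Ω]

/-- The expectation of `g` when the coordinates of its argument are drawn independently, the
`i`-th one with probabilities `μ i`. -/
noncomputable def productExpect (μ : ι → Ω → ℝ) (g : (ι → Ω) → ℝ) : ℝ :=
  ∑ f, (∏ i, μ i (f i)) * g f

lemma productExpect_mono {μ : ι → Ω → ℝ} (h0 : ∀ i x, 0 ≤ μ i x) {g g' : (ι → Ω) → ℝ}
    (h : ∀ f, g f ≤ g' f) : productExpect μ g ≤ productExpect μ g' :=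
  sum_le_sum fun f _ => mul_le_mul_of_nonneg_left (h f) (prod_nonneg fun i _ => h0 i (f i))

lemma productExpect_add_sum {κ : Type*} (μ : ι → Ω → ℝ) (g : (ι → Ω) → ℝ) (s : Finset κ)
    (h : κ → (ι → Ω) → ℝ) :
    productExpect μ (fun f => g f + ∑ k ∈ s, h k f) =
      productExpect μ g + ∑ k ∈ s, productExpect μ (h k) := by
  simp only [productExpect, mul_add, sum_add_distrib, mul_sum]
  rw [sum_comm]

lemma productExpect_mul_const (μ : ι → Ω → ℝ) (g : (ι → Ω) → ℝ) (c : ℝ) :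
    productExpect μ (fun f => g f * c) = productExpect μ g * c := by
  simp only [productExpect, sum_mul, mul_assoc]

lemma productExpect_one {μ : ι → Ω → ℝ} (h1 : ∀ i, ∑ x, μ i x = 1) :
    productExpect μ (fun _ => 1) = 1 := by
  simp only [productExpect, mul_one]
  rw [← Fintype.prod_sum]
  simp [h1]

lemma exists_pos_of_productExpect_pos {μ : ι → Ω → ℝ} (h0 : ∀ i x, 0 ≤ μ i x)
    {g : (ι → Ω) → ℝ} (h : 0 < productExpect μ g) : ∃ f, (∀ i, 0 < μ i (f i)) ∧ 0 < g f := by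
  obtain ⟨f, -, hf⟩ := exists_lt_of_sum_lt (by simpa [productExpect] using h :
    ∑ _f : ι → Ω, (0 : ℝ) < ∑ f, (∏ i, μ i (f i)) * g f)
  have hprod : 0 ≤ ∏ i, μ i (f i) := prod_nonneg fun i _ => h0 i (f i)
  refine ⟨f, fun i => (h0 i (f i)).lt_of_ne fun hz => ?_, pos_of_mul_pos_right hf hprod⟩
  rw [prod_eq_zero (mem_univ i) hz.symm, zero_mul] at hf
  exact lt_irrefl _ hf

lemma productExpect_resample {μ : ι → Ω → ℝ} (h1 : ∀ i, ∑ x, μ i x = 1) (i : ι)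
    (g : (ι → Ω) → ℝ) :
    productExpect μ g = productExpect μ fun f => ∑ x, μ i x * g (Function.update f i x) := by
  have hleft : productExpect μ g =
      ∑ p : (ι → Ω) × Ω, (∏ j, μ j (p.1 j)) * μ i p.2 * g p.1 := by
    rw [Fintype.sum_prod_type]
    refine sum_congr rfl fun f _ => ?_
    dsimp only
    rw [← sum_mul, ← mul_sum, h1, mul_one]
  have hright : (productExpect μ fun f => ∑ x, μ i x * g (Function.update f i x)) =
      ∑ p : (ι → Ω) × Ω, (∏ j, μ j (p.1 j)) * μ i p.2 * g (Function.update p.1 i p.2) := by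
    simp only [productExpect, Fintype.sum_prod_type, mul_sum, mul_assoc]
  -- Exchanging the old and the new value of coordinate `i` preserves the joint weight.
  have hswap : Function.Involutive
      fun p : (ι → Ω) × Ω => (Function.update p.1 i p.2, p.1 i) := fun p => by simp
  rw [hleft, hright]
  refine Fintype.sum_equiv hswap.toPerm _ _ fun p => ?_
  simp only [Function.Involutive.coe_toPerm, Function.update_idem, Function.update_eq_self]
  rw [prod_update_mul]

open Classical in
/-- The probability that a random selection is conflict-free on `s`. -/
noncomputable def conflictFreeProb (conf : Ω → Ω → Prop) (μ : ι → Ω → ℝ) (s : Finset ι) : ℝ :=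
  productExpect μ fun f => if ConflictFree conf s f then 1 else 0

variable {conf : Ω → Ω → Prop} [DecidableRel conf] {μ : ι → Ω → ℝ}

open Classical in
lemma productExpect_conflictFree_mul_conflict (h1 : ∀ i, ∑ x, μ i x = 1) {s : Finset ι} {i j : ι}
    (hij : i ≠ j) (hi : i ∉ s) (hj : j ∉ s) :
    (productExpect μ fun f => (if ConflictFree conf s f then 1 else 0) *
      if conf (f i) (f j) then 1 else 0) =
        conflictFreeProb conf μ s * conflictProb conf (μ i) (μ j) := by
  rw [productExpect_resample h1 j]
  simp only [conflictFree_update_iff hj, Function.update_of_ne hij, Function.update_self]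
  rw [productExpect_resample h1 i]
  simp only [conflictFree_update_iff hi, Function.update_self]
  rw [conflictFreeProb, ← productExpect_mul_const]
  congr 1
  funext f
  simp only [conflictProb, sum_filter, mul_sum]
  refine sum_congr rfl fun x _ => sum_congr rfl fun y _ => ?_
  split_ifs <;> ring

variable [Std.Symm conf]

lemma conflictFreeProb_le_insert_add (h0 : ∀ i x, 0 ≤ μ i x) (h1 : ∀ i, ∑ x, μ i x = 1)
    {s : Finset ι} {i : ι} (hi : i ∉ s) :
    conflictFreeProb conf μ s ≤ conflictFreeProb conf μ (insert i s) +
      ∑ j ∈ s, conflictFreeProb conf μ (s.erase j) * conflictProb conf (μ i) (μ j) := by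
  classical
  refine (productExpect_mono h0 (ite_conflictFree_le_insert_add s i)).trans_eq ?_
  rw [productExpect_add_sum]
  congr 1
  refine sum_congr rfl fun j hj => ?_
  exact productExpect_conflictFree_mul_conflict h1 (by rintro rfl; exact hi hj)
    (fun h => hi (mem_of_mem_erase h)) (notMem_erase j s)

-- Rosenfeld's counting form of the local lemma: each further coordinate at most halves the
-- probability of being conflict-free.
lemma conflictFreeProb_pos_and_le_two_mul_insert (h0 : ∀ i x, 0 ≤ μ i x)
    (h1 : ∀ i, ∑ x, μ i x = 1)
    (hquarter : ∀ i x, 0 < μ i x → ∑ j, ∑ y with conf x y, μ j y ≤ 1 / 4) (s : Finset ι) :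
    0 < conflictFreeProb conf μ s ∧
      ∀ i ∉ s, conflictFreeProb conf μ s ≤ 2 * conflictFreeProb conf μ (insert i s) := by
  induction s using Finset.strongInduction with
  | H s ih =>
    have hhalf : ∀ j ∈ s, conflictFreeProb conf μ (s.erase j) ≤ 2 * conflictFreeProb conf μ s := by
      intro j hj
      simpa only [insert_erase hj] using (ih _ (erase_ssubset hj)).2 j (notMem_erase j s)
    have hpos : 0 < conflictFreeProb conf μ s := by
      rcases s.eq_empty_or_nonempty with rfl | ⟨j, hj⟩
      · simp [conflictFreeProb, ConflictFree, productExpect_one h1]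
      · linarith [hhalf j hj, (ih _ (erase_ssubset hj)).1]
    refine ⟨hpos, fun i hi => ?_⟩
    have hloss : ∑ j ∈ s, conflictFreeProb conf μ (s.erase j) * conflictProb conf (μ i) (μ j) ≤
        2 * conflictFreeProb conf μ s * (1 / 4) := by
      calc _ ≤ ∑ j ∈ s, 2 * conflictFreeProb conf μ s * conflictProb conf (μ i) (μ j) :=
            sum_le_sum fun j hj => mul_le_mul_of_nonneg_right (hhalf j hj)
              (conflictProb_nonneg (h0 i) (h0 j))
        _ ≤ 2 * conflictFreeProb conf μ s * (1 / 4) := by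
            rw [← mul_sum]
            exact mul_le_mul_of_nonneg_left (sum_conflictProb_le h0 h1 hquarter s i) (by linarith)
    linarith [conflictFreeProb_le_insert_add (conf := conf) h0 h1 hi]

omit [DecidableEq ι] in
theorem exists_conflictFree_selection (h0 : ∀ i x, 0 ≤ μ i x) (h1 : ∀ i, ∑ x, μ i x = 1)
    (hquarter : ∀ i x, 0 < μ i x → ∑ j, ∑ y with conf x y, μ j y ≤ 1 / 4) :
    ∃ f : ι → Ω, (∀ i, 0 < μ i (f i)) ∧ Pairwise fun i j => ¬ conf (f i) (f j) := by
  classical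
  obtain ⟨f, hsupp, hf⟩ := exists_pos_of_productExpect_pos h0
    (conflictFreeProb_pos_and_le_two_mul_insert h0 h1 hquarter univ).1
  refine ⟨f, hsupp, ?_⟩
  by_contra hconf
  rw [if_neg (fun h => hconf (by simpa [ConflictFree, Set.pairwise_univ] using h))] at hf
  exact lt_irrefl _ hf

end ConflictFree

section Load

lemma exists_forall_dotProduct_self_le {V : Type*} [Fintype V] {K : Set (V → ℝ)}
    (hne : K.Nonempty) (hK : IsCompact K) (hconv : Convex ℝ K) :
    ∃ x ∈ K, ∀ y ∈ K, x ⬝ᵥ x ≤ x ⬝ᵥ y := by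
  let toE : (V → ℝ) ≃L[ℝ] EuclideanSpace ℝ V := (EuclideanSpace.equiv V ℝ).symm
  have hcompact : IsCompact (toE '' K) := hK.image toE.continuous
  have hconvE : Convex ℝ (toE '' K) := hconv.linear_image toE.toLinearMap
  obtain ⟨_, ⟨x, hx, rfl⟩, hmin⟩ := exists_norm_eq_iInf_of_complete_convex (hne.image toE)
    hcompact.isComplete hconvE 0
  refine ⟨x, hx, fun y hy => ?_⟩
  have hinner := (norm_eq_iInf_iff_real_inner_le_zero hconvE ⟨x, hx, rfl⟩).1 hmin _ ⟨y, hy, rfl⟩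
  have hexpand : inner ℝ (0 - toE x) (toE y - toE x) = x ⬝ᵥ x - x ⬝ᵥ y := by
    simp [toE, EuclideanSpace.inner_eq_star_dotProduct, -inner_self_eq_norm_sq_to_K,
      dotProduct_comm, sub_eq_add_neg, add_comm]
  linarith

variable {E V : Type*} [Fintype V] {F : E → Finset (Finset V)}

/-- The fractional selections of one set from each family `F e`. -/
def fractionalSelections (F : E → Finset (Finset V)) : Set (E → Finset V → ℝ) :=
  Set.univ.pi fun e => stdSimplex ℝ (Finset V) ∩ {p | ∀ I ∉ F e, p I = 0}

lemma nonempty_fractionalSelections (hF : ∀ e, (F e).Nonempty) :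
    (fractionalSelections F).Nonempty := by
  choose I hI using hF
  classical
  refine ⟨fun e => Pi.single (I e) 1, fun e _ => ⟨single_mem_stdSimplex ℝ (I e), fun J hJ => ?_⟩⟩
  exact Pi.single_eq_of_ne (by rintro rfl; exact hJ (hI e)) 1

lemma isCompact_fractionalSelections : IsCompact (fractionalSelections F) := by
  refine isCompact_univ_pi fun e => (isCompact_stdSimplex ℝ (Finset V)).inter_right ?_
  simp only [Set.ofPred_forall]
  exact isClosed_iInter fun I => isClosed_iInter fun _ => isClosed_eq (by fun_prop) (by fun_prop)

lemma convex_fractionalSelections : Convex ℝ (fractionalSelections F) := by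
  refine convex_pi fun e _ p hp q hq a b ha hb hab => ⟨?_, fun I hI => ?_⟩
  · exact convex_stdSimplex ℝ (Finset V) hp.1 hq.1 ha hb hab
  · simp [hp.2 I hI, hq.2 I hI]

variable [Fintype E] [DecidableEq V]

/-- The load vector of a fractional selection: `load μ v` is the expected number of sets containing
`v` when for each `e` a set is drawn with probabilities `μ e`. -/
def load : (E → Finset V → ℝ) →ₗ[ℝ] V → ℝ where
  toFun μ v := ∑ e, ∑ I with v ∈ I, μ e I
  map_add' μ ν := by ext v; simp [sum_add_distrib]
  map_smul' c μ := by ext v; simp [mul_sum]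

lemma load_apply (μ : E → Finset V → ℝ) (v : V) : load μ v = ∑ e, ∑ I with v ∈ I, μ e I := rfl

lemma load_nonneg {μ : E → Finset V → ℝ} (h0 : ∀ e I, 0 ≤ μ e I) (v : V) : 0 ≤ load μ v :=
  sum_nonneg fun e _ => sum_nonneg fun I _ => h0 e I

lemma dotProduct_load (w : V → ℝ) (μ : E → Finset V → ℝ) :
    w ⬝ᵥ load μ = ∑ e, ∑ I, μ e I * ∑ v ∈ I, w v := by
  simp only [dotProduct, load_apply, mul_sum]
  rw [sum_comm]
  refine sum_congr rfl fun e _ => ?_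
  simp only [sum_filter]
  rw [sum_comm]
  exact sum_congr rfl fun I _ => by simp [sum_ite_mem, mul_comm]

lemma sum_conflicts_le_sum_load {μ : E → Finset V → ℝ} (h0 : ∀ e I, 0 ≤ μ e I) (I : Finset V) :
    ∑ e, ∑ J with ¬ Disjoint I J, μ e J ≤ ∑ v ∈ I, load μ v := by
  simp only [load_apply, sum_filter]
  rw [sum_comm (s := I)]
  refine sum_le_sum fun e _ => ?_
  rw [sum_comm (s := I)]
  refine sum_le_sum fun J _ => ?_
  have hnonneg : ∀ v ∈ I, 0 ≤ if v ∈ J then μ e J else 0 := fun v _ => by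
    split_ifs
    exacts [h0 e J, le_rfl]
  by_cases hdisj : Disjoint I J
  · rw [if_neg (not_not.2 hdisj)]
    exact sum_nonneg hnonneg
  · obtain ⟨v, hvI, hvJ⟩ := not_disjoint_iff.1 hdisj
    rw [if_pos hdisj]
    exact (if_pos hvJ).ge.trans (single_le_sum hnonneg hvI)

-- If `load μ` is a load vector of minimal norm, moving the selection of `e` towards any single set
-- does not decrease the norm to first order.
lemma exists_fractionalSelection_forall_sum_load_le (hF : ∀ e, (F e).Nonempty) :
    ∃ μ ∈ fractionalSelections F, ∀ e, ∀ I ∈ F e,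
      ∑ J, μ e J * ∑ v ∈ J, load μ v ≤ ∑ v ∈ I, load μ v := by
  classical
  obtain ⟨_, ⟨μ, hμ, rfl⟩, hmin⟩ := exists_forall_dotProduct_self_le
    ((nonempty_fractionalSelections hF).image load)
    (isCompact_fractionalSelections.image load.continuous_of_finiteDimensional)
    (convex_fractionalSelections.linear_image load)
  refine ⟨μ, hμ, fun e I hI => ?_⟩
  have hupdate : Function.update μ e (Pi.single I 1) ∈ fractionalSelections F := by
    refine Set.update_mem_pi_iff_of_mem hμ |>.2 fun _ => ⟨single_mem_stdSimplex ℝ I, fun J hJ => ?_⟩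
    exact Pi.single_eq_of_ne (by rintro rfl; exact hJ hI) 1
  have hle := hmin _ ⟨_, hupdate, rfl⟩
  rw [dotProduct_load, dotProduct_load, ← add_sum_erase _ _ (mem_univ e),
    ← add_sum_erase univ (fun e' => ∑ J, Function.update μ e (Pi.single I 1) e' J *
      ∑ v ∈ J, load μ v) (mem_univ e)] at hle
  have hrest : ∑ e' ∈ univ.erase e, ∑ J, Function.update μ e (Pi.single I 1) e' J *
      ∑ v ∈ J, load μ v = ∑ e' ∈ univ.erase e, ∑ J, μ e' J * ∑ v ∈ J, load μ v :=
    sum_congr rfl fun e' he' => by rw [Function.update_of_ne (ne_of_mem_erase he')]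
  rw [hrest, add_le_add_iff_right, Function.update_self] at hle
  simpa [Pi.single_apply] using hle

lemma exists_fractionalSelection_forall_load_le (hF : ∀ e, (F e).Nonempty) :
    ∃ μ ∈ fractionalSelections F, ∀ e I, 0 < μ e I → ∀ J ∈ F e,
      ∑ v ∈ I, load μ v ≤ ∑ v ∈ J, load μ v := by
  obtain ⟨μ, hμ, haverage⟩ := exists_fractionalSelection_forall_sum_load_le hF
  refine ⟨μ, hμ, fun e I hI J hJ => ?_⟩
  obtain ⟨J₀, hJ₀, hmin⟩ := (F e).exists_min_image (fun J => ∑ v ∈ J, load μ v) (hF e)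
  have hexcess : ∀ K ∈ univ, 0 ≤ μ e K * (∑ v ∈ K, load μ v - ∑ v ∈ J₀, load μ v) := by
    intro K _
    by_cases hK : K ∈ F e
    · exact mul_nonneg ((hμ e trivial).1.1 K) (sub_nonneg.2 (hmin K hK))
    · rw [(hμ e trivial).2 K hK, zero_mul]
  have hsum : ∑ K, μ e K * (∑ v ∈ K, load μ v - ∑ v ∈ J₀, load μ v) ≤ 0 := by
    simp only [mul_sub, sum_sub_distrib, ← sum_mul]
    rw [(hμ e trivial).1.2, one_mul]
    exact sub_nonpos.2 (haverage e J₀ hJ₀)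
  have hI0 := (single_le_sum hexcess (mem_univ I)).trans hsum
  exact (sub_nonpos.1 (nonpos_of_mul_nonpos_right hI0 hI)).trans (hmin J hJ)

omit [DecidableEq V] in
lemma exists_mul_sq_sum_le {A : Finset (Finset V)} {B C : ℝ} (hB : 0 < B)
    (hA : ∀ w : V → ℝ, (∀ v, 0 ≤ w v) → ∑ v, w v ^ 2 ≤ B → ∃ I ∈ A, ∑ v ∈ I, w v ≤ C)
    {w : V → ℝ} (hw : ∀ v, 0 ≤ w v) :
    ∃ I ∈ A, B * (∑ v ∈ I, w v) ^ 2 ≤ C ^ 2 * ∑ v, w v ^ 2 := by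
  rcases (sum_nonneg fun v _ => sq_nonneg (w v) : 0 ≤ ∑ v, w v ^ 2).eq_or_lt with hzero | hpos
  · obtain ⟨I, hI, -⟩ := hA w hw (by rw [← hzero]; exact hB.le)
    have hw0 : ∀ v, w v = 0 := fun v => pow_eq_zero_iff two_ne_zero |>.1 <|
      (sum_eq_zero_iff_of_nonneg fun v _ => sq_nonneg (w v)).1 hzero.symm v (mem_univ v)
    exact ⟨I, hI, by simp [hw0]⟩
  set s := √(B / ∑ v, w v ^ 2)
  have hs : s ^ 2 * ∑ v, w v ^ 2 = B := by
    rw [Real.sq_sqrt (by positivity), div_mul_cancel₀ _ hpos.ne']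
  obtain ⟨I, hI, hle⟩ := hA (fun v => s * w v) (fun v => mul_nonneg (Real.sqrt_nonneg _) (hw v))
    (by simp only [mul_pow, ← mul_sum, hs, le_refl])
  rw [← mul_sum] at hle
  have hsq : (s * ∑ v ∈ I, w v) ^ 2 ≤ C ^ 2 :=
    pow_le_pow_left₀ (mul_nonneg (Real.sqrt_nonneg _) (sum_nonneg fun v _ => hw v)) hle 2
  refine ⟨I, hI, ?_⟩
  calc B * (∑ v ∈ I, w v) ^ 2 = (s * ∑ v ∈ I, w v) ^ 2 * ∑ v, w v ^ 2 := by rw [← hs]; ring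
    _ ≤ C ^ 2 * ∑ v, w v ^ 2 := mul_le_mul_of_nonneg_right hsq hpos.le

lemma sum_sq_load_le {μ : E → Finset V → ℝ} (hμ : μ ∈ fractionalSelections F) {m : ℝ}
    (hm : ∀ e I, 0 < μ e I → ∑ v ∈ I, load μ v ≤ m) :
    ∑ v, load μ v ^ 2 ≤ Fintype.card E * m := by
  calc ∑ v, load μ v ^ 2 = ∑ e, ∑ I, μ e I * ∑ v ∈ I, load μ v := by
        rw [← dotProduct_load]
        simp only [dotProduct, sq]
    _ ≤ ∑ e, ∑ I, μ e I * m := by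
        refine sum_le_sum fun e _ => sum_le_sum fun I _ => ?_
        rcases ((hμ e trivial).1.1 I).eq_or_lt with hzero | hpos
        · rw [← hzero, zero_mul, zero_mul]
        · exact mul_le_mul_of_nonneg_left (hm e I hpos) hpos.le
    _ = Fintype.card E * m := by
        simp only [← sum_mul]
        rw [sum_congr rfl fun e _ => (hμ e trivial).1.2]
        simp

lemma exists_fractionalSelection_forall_load_le_quarter {B C : ℝ} (hB : 0 < B) (hC : 0 ≤ C)
    (hF : ∀ e, ∀ w : V → ℝ, (∀ v, 0 ≤ w v) → ∑ v, w v ^ 2 ≤ B → ∃ I ∈ F e, ∑ v ∈ I, w v ≤ C)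
    (hE : 4 * (Fintype.card E : ℝ) * C ^ 2 ≤ B) :
    ∃ μ ∈ fractionalSelections F, ∀ e I, 0 < μ e I → ∑ v ∈ I, load μ v ≤ 1 / 4 := by
  obtain ⟨μ, hμ, hmin⟩ := exists_fractionalSelection_forall_load_le fun e =>
    let ⟨I, hI, _⟩ := hF e 0 (fun _ => le_rfl) (by simpa using hB.le)
    ⟨I, hI⟩
  refine ⟨μ, hμ, ?_⟩
  have hload : ∀ v, 0 ≤ load μ v := load_nonneg fun e => (hμ e trivial).1.1
  set Q := ∑ v, load μ v ^ 2
  have : 0 ≤ Q := sum_nonneg fun v _ => sq_nonneg _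
  set m := C * √(Q / B) with hm
  have hm0 : 0 ≤ m := by positivity
  have hmsq : m ^ 2 * B = C ^ 2 * Q := by
    rw [hm, mul_pow, Real.sq_sqrt (by positivity)]
    field_simp
  have hle : ∀ e I, 0 < μ e I → ∑ v ∈ I, load μ v ≤ m := by
    intro e I hI
    obtain ⟨J, hJ, hsq⟩ := exists_mul_sq_sum_le hB (hF e) hload
    refine (hmin e I hI J hJ).trans (le_of_sq_le_sq ?_ hm0)
    exact le_of_mul_le_mul_left (hsq.trans_eq (by rw [← hmsq, mul_comm])) hB
  have hquarter : m ≤ 1 / 4 := by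
    rcases hm0.eq_or_lt with hzero | hpos
    · rw [← hzero]
      norm_num
    have hbound : m * (m * B) ≤ m * (B / 4) :=
      calc m * (m * B) = C ^ 2 * Q := by rw [← hmsq]; ring
        _ ≤ C ^ 2 * (Fintype.card E * m) :=
          mul_le_mul_of_nonneg_left (sum_sq_load_le hμ hle) (sq_nonneg C)
        _ ≤ m * (B / 4) := by nlinarith
    linarith [le_of_mul_le_mul_right ((le_of_mul_le_mul_left hbound hpos).trans_eq (by ring :
      B / 4 = 1 / 4 * B)) hB]
  exact fun e I hI => (hle e I hI).trans hquarter

omit [DecidableEq V] in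
theorem exists_pairwise_disjoint_selection {B C : ℝ} (hB : 0 < B) (hC : 0 ≤ C)
    (hF : ∀ e, ∀ w : V → ℝ, (∀ v, 0 ≤ w v) → ∑ v, w v ^ 2 ≤ B → ∃ I ∈ F e, ∑ v ∈ I, w v ≤ C)
    (hE : 4 * (Fintype.card E : ℝ) * C ^ 2 ≤ B) :
    ∃ f : E → Finset V, (∀ e, f e ∈ F e) ∧ Pairwise (Function.onFun Disjoint f) := by
  classical
  obtain ⟨μ, hμ, hquarter⟩ := exists_fractionalSelection_forall_load_le_quarter hB hC hF hE
  have h0 : ∀ e I, 0 ≤ μ e I := fun e => (hμ e trivial).1.1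
  have : Std.Symm fun I J : Finset V => ¬ Disjoint I J := ⟨fun I J h h' => h h'.symm⟩
  obtain ⟨f, hsupp, hf⟩ := exists_conflictFree_selection h0 (fun e => (hμ e trivial).1.2)
    (conf := fun I J => ¬ Disjoint I J)
    fun e I hI => (sum_conflicts_le_sum_load h0 I).trans (hquarter e I hI)
  refine ⟨f, fun e => ?_, fun e e' hee' => not_not.1 (hf hee')⟩
  by_contra hnot
  exact (hsupp e).ne' ((hμ e trivial).2 _ hnot)

end Load

section BalancedSubdivisions

variable {V W : Type*} {G : SimpleGraph V} {H : SimpleGraph W} {k l : ℕ}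

lemma _root_.HasTK.map (h : HasTK G k l) (f : G →g H) (hf : Function.Injective f) :
    HasTK H k l := by
  obtain ⟨_, b, hb, P, hpath, hlen, hdisj, -⟩ := h
  refine ⟨_, f ∘ b, hf.comp hb, fun i j hij => (P i j hij).map f,
    fun i j hij => (hpath i j hij).map hf, fun i j hij => by simp [hlen], ?_, rfl⟩
  intro i j hij i' j' hij' hne v hv hv'
  rw [SimpleGraph.Walk.support_map, List.mem_map] at hv hv'
  obtain ⟨x, hx, rfl⟩ := hv
  obtain ⟨x', hx', heq⟩ := hv'
  obtain rfl := hf heq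
  simpa [hf.eq_iff] using hdisj i j hij i' j' hij' hne x' hx hx'

lemma hasTK_one (G : SimpleGraph V) (v : V) : HasTK G 1 0 := by
  have hnot : ∀ i j : Fin 1, ¬ i < j := fun i j => by simp [Subsingleton.elim i j]
  exact ⟨_, fun _ => v, Function.injective_of_subsingleton _, fun i j hij => (hnot i j hij).elim,
    fun i j hij => (hnot i j hij).elim, fun i j hij => (hnot i j hij).elim,
    fun i j hij => (hnot i j hij).elim, rfl⟩

lemma hasTK_zero_of_not_cliqueFree (h : ¬ G.CliqueFree k) : HasTK G k 0 := by
  obtain ⟨f⟩ := SimpleGraph.not_cliqueFree_iff_top_isContained k |>.1 h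
  have hadj : ∀ i j : Fin k, i < j → G.Adj (f i) (f j) := fun i j hij => f.toHom.map_adj hij.ne
  refine ⟨_, f, f.injective, fun i j hij => (hadj i j hij).toWalk, fun i j hij => ?_,
    fun i j hij => by simp, fun i j hij i' j' hij' _ v hv hv' => ?_, rfl⟩
  · exact (hadj i j hij).isPath_toWalk
  · simp only [SimpleGraph.Adj.toWalk, SimpleGraph.Walk.support_cons,
      SimpleGraph.Walk.support_nil, List.mem_cons, List.not_mem_nil, or_false] at hv hv'
    exact ⟨hv, hv'⟩

/-- An embedding into `G` of the graph obtained from `H` by subdividing every edge once. The values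
of `mid` outside the edge set of `H` are irrelevant. -/
structure OneSubdivision (H : SimpleGraph W) (G : SimpleGraph V) where
  /-- the image of an original vertex -/
  vert : W → V
  /-- the image of the subdividing vertex of an edge -/
  mid : Sym2 W → V
  vert_injective : Function.Injective vert
  mid_injOn : Set.InjOn mid H.edgeSet
  mid_ne_vert : ∀ e ∈ H.edgeSet, ∀ x, mid e ≠ vert x
  adj : ∀ e ∈ H.edgeSet, ∀ x ∈ e, G.Adj (vert x) (mid e)

namespace OneSubdivision

variable (φ : OneSubdivision H G)

/-- The image of a walk in `H`: a walk of twice the length through the subdividing vertices. -/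
def walk : ∀ {x y : W}, H.Walk x y → G.Walk (φ.vert x) (φ.vert y)
  | _, _, .nil => .nil
  | x, _, .cons (v := y) h p =>
    .cons (φ.adj s(x, y) h x (Sym2.mem_mk_left x y))
      (.cons (φ.adj s(x, y) h y (Sym2.mem_mk_right x y)).symm (walk p))

lemma length_walk {x y : W} (p : H.Walk x y) : (φ.walk p).length = 2 * p.length := by
  induction p with
  | nil => rfl
  | cons h p ih =>
    simp only [walk, SimpleGraph.Walk.length_cons, ih]
    ring

lemma mem_support_walk {x y : W} {p : H.Walk x y} {v : V} :
    v ∈ (φ.walk p).support ↔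
      (∃ z ∈ p.support, φ.vert z = v) ∨ ∃ e ∈ p.edges, φ.mid e = v := by
  induction p with
  | nil => simp [walk, eq_comm]
  | cons h p ih =>
    simp only [walk, SimpleGraph.Walk.support_cons, SimpleGraph.Walk.edges_cons, List.mem_cons,
      exists_eq_or_imp, ih, eq_comm (a := v), or_assoc, or_left_comm]

lemma isPath_walk {x y : W} {p : H.Walk x y} (hp : p.IsPath) : (φ.walk p).IsPath := by
  induction p with
  | nil => exact SimpleGraph.Walk.IsPath.nil
  | @cons x y z h p ih =>
    rw [SimpleGraph.Walk.cons_isPath_iff] at hp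
    simp only [walk, SimpleGraph.Walk.cons_isPath_iff, SimpleGraph.Walk.support_cons,
      List.mem_cons, φ.mem_support_walk, not_or]
    refine ⟨⟨ih hp.1, ?_, ?_⟩, (φ.mid_ne_vert _ h x).symm, ?_, ?_⟩
    · rintro ⟨w, -, hw⟩
      exact φ.mid_ne_vert _ h w hw.symm
    · rintro ⟨e, he, hmid⟩
      obtain rfl := φ.mid_injOn (p.edges_subset_edgeSet he) h hmid
      exact hp.2 (p.fst_mem_support_of_mem_edges he)
    · rintro ⟨w, hw, hvert⟩
      exact hp.2 (φ.vert_injective hvert ▸ hw)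
    · rintro ⟨e, he, hmid⟩
      exact φ.mid_ne_vert e (p.edges_subset_edgeSet he) x hmid

theorem hasTK (φ : OneSubdivision H G) (h : HasTK H k l) : HasTK G k (2 * l + 1) := by
  obtain ⟨_, b, hb, P, hpath, hlen, hdisj, -⟩ := h
  refine ⟨_, φ.vert ∘ b, φ.vert_injective.comp hb, fun i j hij => φ.walk (P i j hij),
    fun i j hij => φ.isPath_walk (hpath i j hij), fun i j hij => ?_, ?_, rfl⟩
  · rw [φ.length_walk, hlen]
    ring
  intro i j hij i' j' hij' hne v hv hv'
  rcases φ.mem_support_walk.1 hv with ⟨x, hx, rfl⟩ | ⟨e, he, rfl⟩ <;>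
    rcases φ.mem_support_walk.1 hv' with ⟨x', hx', heq⟩ | ⟨e', he', heq⟩
  · obtain rfl := φ.vert_injective heq
    simpa [φ.vert_injective.eq_iff] using hdisj i j hij i' j' hij' hne x' hx hx'
  · exact (φ.mid_ne_vert e' ((P i' j' hij').edges_subset_edgeSet he') x heq).elim
  · exact (φ.mid_ne_vert e ((P i j hij).edges_subset_edgeSet he) x' heq.symm).elim
  · -- A common edge of two paths would join the same two branch vertices.
    obtain rfl := φ.mid_injOn ((P i' j' hij').edges_subset_edgeSet he')
      ((P i j hij).edges_subset_edgeSet he) heq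
    induction e' with | _ x y
    have hxy : x ≠ y := ((P i j hij).adj_of_mem_edges he).ne
    have hx := hdisj i j hij i' j' hij' hne x ((P i j hij).fst_mem_support_of_mem_edges he)
      ((P i' j' hij').fst_mem_support_of_mem_edges he')
    have hy := hdisj i j hij i' j' hij' hne y ((P i j hij).snd_mem_support_of_mem_edges he)
      ((P i' j' hij').snd_mem_support_of_mem_edges he')
    have hends : s(b i, b j) = s(b i', b j') := by grind
    rcases Sym2.eq_iff.1 hends with ⟨hi, hj⟩ | ⟨hi, hj⟩
    · exact (hne (Prod.ext (hb hi) (hb hj))).elim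
    · exact (hij.asymm (hb hi ▸ hb hj ▸ hij')).elim

end OneSubdivision

end BalancedSubdivisions

section Greedy

variable {V : Type*} {G : SimpleGraph V} {L U : Finset V}

/-- The map `m` assigns to the edges of `H`, a graph on `L`, distinct vertices of `U` that are
adjacent in `G` to both ends of the edge. -/
def IsSubdividing (G : SimpleGraph V) (U : Finset V) (H : SimpleGraph L) (m : Sym2 L → V) : Prop :=
  Set.InjOn m H.edgeSet ∧ ∀ e ∈ H.edgeSet, m e ∈ U ∧ ∀ x ∈ e, G.Adj x (m e)

lemma IsSubdividing.nonempty_oneSubdivision {H : SimpleGraph L} {m : Sym2 L → V}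
    (h : IsSubdividing G U H m) (hLU : Disjoint L U) : Nonempty (OneSubdivision H G) :=
  ⟨⟨Subtype.val, m, Subtype.val_injective, h.1,
    fun e he x hx => disjoint_left.1 hLU x.2 (hx ▸ (h.2 e he).1), fun e he => (h.2 e he).2⟩⟩

lemma IsSubdividing.sup_edge [DecidableEq V] {H : SimpleGraph L} {m : Sym2 L → V}
    (h : IsSubdividing G U H m) {x y : L} (hxy : x ≠ y) (hnot : s(x, y) ∉ H.edgeSet) {u : V}
    (hu : u ∈ U) (hunused : ∀ e ∈ H.edgeSet, m e ≠ u) (hux : G.Adj u x) (huy : G.Adj u y) :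
    IsSubdividing G U (H ⊔ SimpleGraph.edge x y) (Function.update m s(x, y) u) := by
  have hold : ∀ e ∈ H.edgeSet, Function.update m s(x, y) u e = m e := fun e he =>
    Function.update_of_ne (by rintro rfl; exact hnot he) ..
  rw [IsSubdividing, SimpleGraph.edgeSet_sup, SimpleGraph.edgeSet_edge_of_ne hxy,
    Set.union_singleton, Set.injOn_insert hnot, Set.forall_mem_insert, Function.update_self]
  refine ⟨⟨h.1.congr fun e he => (hold e he).symm, ?_⟩, ⟨hu, ?_⟩, fun e he => ?_⟩
  · rintro ⟨e, he, heq⟩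
    exact hunused e he (hold e he ▸ heq)
  · simpa using ⟨hux.symm, huy.symm⟩
  · rw [hold e he]
    exact h.2 e he

-- Take `H` with as many edges as possible. If a vertex of `U` is not used as a subdividing vertex,
-- no edge can be added to `H` between its neighbours, so these form a clique.
lemma exists_oneSubdivision_of_forall_le_card [DecidableRel G.Adj] (hLU : Disjoint L U) {k : ℕ}
    (hk : ∀ u ∈ U, k ≤ #{x ∈ L | G.Adj u x}) :
    ∃ H : SimpleGraph L, Nonempty (OneSubdivision H G) ∧
      (¬ H.CliqueFree k ∨ #U ≤ H.edgeSet.ncard) := by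
  classical
  have hbot : IsSubdividing G U (⊥ : SimpleGraph L) fun e => e.out.1 := by simp [IsSubdividing]
  obtain ⟨H, ⟨m, hm⟩, hmax⟩ :=
    (Set.toFinite {H : SimpleGraph L | ∃ m, IsSubdividing G U H m}).exists_maximal ⟨⊥, _, hbot⟩
  refine ⟨H, hm.nonempty_oneSubdivision hLU, or_iff_not_imp_right.2 fun hcard => ?_⟩
  obtain ⟨u, hu, hunused⟩ : ∃ u ∈ U, ∀ e ∈ H.edgeSet, m e ≠ u := by
    by_contra! hall
    refine hcard ?_
    rw [← Set.ncard_coe_finset U]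
    exact (Set.ncard_le_ncard (t := m '' H.edgeSet) fun u hu => hall u hu).trans
      Set.ncard_image_le
  obtain ⟨S, hS, hSk⟩ := exists_subset_card_eq (hk u hu)
  refine fun hfree => hfree (S.subtype (· ∈ L)) ⟨fun x hx y hy hxy => ?_, ?_⟩
  · by_contra hnot
    have hnew := hm.sup_edge hxy hnot hu hunused (mem_filter.1 (hS (mem_subtype.1 hx))).2
      (mem_filter.1 (hS (mem_subtype.1 hy))).2
    exact hnot (hmax ⟨_, hnew⟩ le_sup_left
      (Or.inr ((SimpleGraph.edge_adj ..).2 ⟨Or.inl ⟨rfl, rfl⟩, hxy⟩)))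
  · rw [card_subtype, filter_true_of_mem fun x hx => (mem_filter.1 (hS hx)).1, hSk]

end Greedy

attribute [local instance 10] Classical.propDecidable

section EdgeCount

variable {V : Type*} {G : SimpleGraph V} {A B C : Finset V} {v : V} {D : ℝ}

/-- The number of pairs `(a, b)` with `a ∈ A`, `b ∈ B` and `ab` an edge of `G`. An edge with both
ends in `A ∩ B` is counted twice. -/
noncomputable def edgeCount (G : SimpleGraph V) (A B : Finset V) : ℕ := #(G.interedges A B)

lemma edgeCount_eq_sum : edgeCount G A B = ∑ a ∈ A, #{b ∈ B | G.Adj a b} := by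
  rw [edgeCount, SimpleGraph.interedges_def, card_filter, sum_product]
  simp only [card_filter]

lemma edgeCount_comm : edgeCount G A B = edgeCount G B A :=
  have : Std.Symm G.Adj := ⟨fun _ _ h => h.symm⟩
  Rel.card_interedges_comm (r := G.Adj) A B

lemma edgeCount_mono {A' B' : Finset V} (hA : A ⊆ A') (hB : B ⊆ B') :
    edgeCount G A B ≤ edgeCount G A' B' :=
  card_le_card (SimpleGraph.interedges_mono _ hA hB)

lemma edgeCount_union_left (h : Disjoint A B) :
    edgeCount G (A ∪ B) C = edgeCount G A C + edgeCount G B C := by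
  simp only [edgeCount_eq_sum, sum_union h]

lemma edgeCount_union_right (h : Disjoint A B) :
    edgeCount G C (A ∪ B) = edgeCount G C A + edgeCount G C B := by
  simp only [edgeCount_comm (A := C), edgeCount_union_left h]

lemma edgeCount_union_right_le :
    edgeCount G C (A ∪ B) ≤ edgeCount G C A + edgeCount G C B := by
  rw [← union_sdiff_self_eq_union, edgeCount_union_right disjoint_sdiff]
  exact Nat.add_le_add_left (edgeCount_mono Subset.rfl sdiff_subset) _

lemma edgeCount_le_mul (h : ∀ a ∈ A, (#{b ∈ B | G.Adj a b} : ℝ) ≤ D) :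
    (edgeCount G A B : ℝ) ≤ #A * D := by
  rw [edgeCount_eq_sum, ← nsmul_eq_mul]
  exact_mod_cast sum_le_card_nsmul _ _ _ h

lemma mul_le_edgeCount (h : ∀ a ∈ A, D ≤ #{b ∈ B | G.Adj a b}) :
    #A * D ≤ edgeCount G A B := by
  rw [edgeCount_eq_sum, ← nsmul_eq_mul]
  exact_mod_cast card_nsmul_le_sum _ _ _ h

lemma edgeCount_induce (S : Set V) (A B : Finset S) :
    edgeCount (G.induce S) A B = edgeCount G (A.map (Function.Embedding.subtype _))
      (B.map (Function.Embedding.subtype _)) := by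
  simp only [edgeCount_eq_sum, sum_map, filter_map, card_map, Function.comp_def,
    SimpleGraph.comap_adj]

lemma map_subtype_univ_coe (A : Finset V) :
    univ.map (Function.Embedding.subtype (· ∈ (A : Set V))) = A := by
  ext; simp

lemma edgeCount_induce_univ (A : Finset V) :
    edgeCount (G.induce (A : Set V)) univ univ = edgeCount G A A := by
  rw [edgeCount_induce, map_subtype_univ_coe]

variable [Fintype V]

lemma edgeCount_univ_eq (A : Finset V) :
    edgeCount G univ univ = edgeCount G A A + 2 * edgeCount G A Aᶜ + edgeCount G Aᶜ Aᶜ := by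
  have h : Disjoint A Aᶜ := disjoint_compl_right
  rw [← union_compl A, edgeCount_union_left h, edgeCount_union_right h, edgeCount_union_right h,
    edgeCount_comm (A := Aᶜ) (B := A)]
  ring

lemma edgeCount_univ_le_union (A B : Finset V) :
    edgeCount G univ univ ≤
      edgeCount G (A ∪ B) (A ∪ B) + edgeCount G Aᶜ Aᶜ + 2 * edgeCount G A (A ∪ B)ᶜ := by
  have hunion : edgeCount G A A + 2 * edgeCount G A (B \ A) ≤ edgeCount G (A ∪ B) (A ∪ B) := by
    have h : Disjoint A (B \ A) := disjoint_sdiff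
    rw [← union_sdiff_self_eq_union, edgeCount_union_left h, edgeCount_union_right h,
      edgeCount_union_right h, edgeCount_comm (A := B \ A) (B := A)]
    omega
  have hcross : edgeCount G A Aᶜ ≤ edgeCount G A (B \ A) + edgeCount G A (A ∪ B)ᶜ := by
    refine (edgeCount_mono Subset.rfl fun x hx => ?_).trans edgeCount_union_right_le
    by_cases hxB : x ∈ B <;> simp_all
  have hsplit := edgeCount_univ_eq (G := G) A
  omega

lemma card_filter_adj_le_degree (B : Finset V) (v : V) : #{b ∈ B | G.Adj v b} ≤ G.degree v := by
  rw [← SimpleGraph.card_neighborFinset_eq_degree, SimpleGraph.neighborFinset_eq_filter]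
  exact card_le_card (filter_subset_filter _ (subset_univ B))

lemma edgeCount_univ_right : edgeCount G A univ = ∑ a ∈ A, G.degree a := by
  simp only [edgeCount_eq_sum, ← SimpleGraph.card_neighborFinset_eq_degree,
    SimpleGraph.neighborFinset_eq_filter]

lemma edgeCount_univ_univ : edgeCount G univ univ = 2 * G.edgeSet.ncard := by
  rw [edgeCount_univ_right, SimpleGraph.sum_degrees_eq_twice_card_edges,
    ← SimpleGraph.coe_edgeFinset, Set.ncard_coe_finset]

lemma degree_induce_le (S : Set V) [Fintype S] (v : S) : (G.induce S).degree v ≤ G.degree v := by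
  rw [← SimpleGraph.card_neighborFinset_eq_degree, ← SimpleGraph.card_neighborFinset_eq_degree,
    ← card_map (Function.Embedding.subtype _)]
  refine card_le_card fun x hx => ?_
  obtain ⟨y, hy, rfl⟩ := mem_map.1 hx
  simpa using hy

end EdgeCount

section MaxDegreeReduction

variable {V : Type*} [Fintype V] {G : SimpleGraph V} {d : ℝ}

lemma edgeCount_univ_le_of_forall_ne_univ [Nonempty V] (hd : 2 ≤ d)
    (hG : ∀ A : Finset V, A ≠ univ → (edgeCount G A A : ℝ) ≤ d * #A) :
    (edgeCount G univ univ : ℝ) ≤ 2 * d * Fintype.card V := by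
  obtain ⟨v⟩ := ‹Nonempty V›
  have hself : edgeCount G {v} {v} = 0 := by simp [edgeCount_eq_sum, filter_singleton]
  have hcross : edgeCount G {v} {v}ᶜ ≤ #({v}ᶜ : Finset V) := by
    simpa only [card_singleton, one_mul, edgeCount] using G.card_interedges_le_mul {v} {v}ᶜ
  have hrest := hG {v}ᶜ (by simp)
  have hcard : #({v}ᶜ : Finset V) ≤ Fintype.card V := card_le_univ _
  have hsplit := edgeCount_univ_eq (G := G) {v}
  rify at hself hcross hcard hsplit
  nlinarith

lemma card_mul_le_card_of_forall_le_degree [Nonempty V] (hd : 2 ≤ d)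
    (hG : ∀ A : Finset V, A ≠ univ → (edgeCount G A A : ℝ) ≤ d * #A) {L : Finset V}
    (hL : ∀ v ∈ L, 100 * d ^ 2 ≤ G.degree v) : #L * (50 * d) ≤ Fintype.card V := by
  have hlower : #L * (100 * d ^ 2) ≤ edgeCount G L univ := by
    rw [edgeCount_univ_right, ← nsmul_eq_mul]
    exact_mod_cast card_nsmul_le_sum _ _ _ hL
  have hmono : (edgeCount G L univ : ℝ) ≤ edgeCount G univ univ := by
    exact_mod_cast edgeCount_mono (subset_univ L) Subset.rfl
  have hupper := edgeCount_univ_le_of_forall_ne_univ hd hG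
  refine le_of_mul_le_mul_left (a := 2 * d) ?_ (by linarith)
  linarith

lemma half_mul_le_edgeCount_compl [Nonempty V] (hd : 2 ≤ d)
    (hG : ∀ A : Finset V, A ≠ univ → (edgeCount G A A : ℝ) ≤ d * #A)
    (hE : d * Fintype.card V ≤ edgeCount G univ univ) {L U : Finset V} (hLU : Disjoint L U)
    (hL : #L * (50 * d) ≤ Fintype.card V) (hU : #U ≤ d * #L / 2)
    (hrest : ∀ u ∈ (L ∪ U)ᶜ, (#{x ∈ L | G.Adj u x} : ℝ) ≤ d / 8) :
    d / 2 * Fintype.card V ≤ edgeCount G Lᶜ Lᶜ := by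
  have hpos : (0 : ℝ) < Fintype.card V := by exact_mod_cast Fintype.card_pos
  have hcard : (#(L ∪ U) : ℝ) ≤ Fintype.card V / 50 := by
    rw [card_union_of_disjoint hLU]
    push_cast
    nlinarith
  have hunion : (edgeCount G (L ∪ U) (L ∪ U) : ℝ) ≤ d * (Fintype.card V / 50) := by
    refine (hG _ fun h => ?_).trans (by gcongr)
    rw [h, card_univ] at hcard
    linarith
  have hsmall : (edgeCount G L (L ∪ U)ᶜ : ℝ) ≤ Fintype.card V * (d / 8) := by
    rw [edgeCount_comm]
    refine (edgeCount_le_mul hrest).trans ?_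
    gcongr
    exact card_le_univ _
  have hsplit := edgeCount_univ_le_union (G := G) L U
  rify at hsplit
  nlinarith

-- Vertices of degree above `100 * d ^ 2` form a small set `L`. If few vertices outside `L` have
-- `d / 8` neighbours in `L`, deleting `L` loses few edges. Otherwise these vertices serve to
-- subdivide the edges of a dense graph on `L`.
lemma exists_compl_dense_or_oneSubdivision [Nonempty V] (hd : 2 ≤ d) {k : ℕ} (hk : k ≤ d / 8)
    (hG : ∀ A : Finset V, A ≠ univ → (edgeCount G A A : ℝ) ≤ d * #A)
    (hE : d * Fintype.card V ≤ edgeCount G univ univ) :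
    ∃ L : Finset V, #L < Fintype.card V ∧ (∀ v ∉ L, (G.degree v : ℝ) ≤ 100 * d ^ 2) ∧
      (d / 2 * Fintype.card V ≤ edgeCount G Lᶜ Lᶜ ∨ L.Nonempty ∧ ∃ H : SimpleGraph L,
        Nonempty (OneSubdivision H G) ∧ (¬ H.CliqueFree k ∨ d * #L ≤ edgeCount H univ univ)) := by
  set L : Finset V := {v | 100 * d ^ 2 < G.degree v} with hL_def
  set U : Finset V := {u ∈ Lᶜ | d / 8 ≤ #{x ∈ L | G.Adj u x}} with hU_def
  have hLU : Disjoint L U := disjoint_compl_right.mono_right (filter_subset _ _)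
  have hLcard := card_mul_le_card_of_forall_le_degree (L := L) hd hG fun v hv =>
    (mem_filter.1 hv).2.le
  have hLn : (#L : ℝ) < Fintype.card V := by
    have : (0 : ℝ) < Fintype.card V := by exact_mod_cast Fintype.card_pos
    nlinarith
  refine ⟨L, by exact_mod_cast hLn, fun v hv => by simpa [hL_def] using hv, ?_⟩
  rcases le_or_gt (#U : ℝ) (d * #L / 2) with hU | hU
  · refine Or.inl (half_mul_le_edgeCount_compl hd hG hE hLU hLcard hU fun u hu => ?_)
    simp only [hU_def, mem_compl, mem_union, mem_filter, not_or, not_and, not_le] at hu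
    exact (hu.2 hu.1).le
  · have hLne : L.Nonempty := by
      by_contra! h
      have : ¬ d / 8 ≤ 0 := by linarith
      simp [hU_def, h, this] at hU
    obtain ⟨H, hφ, hH⟩ := exists_oneSubdivision_of_forall_le_card (G := G) (k := k) hLU
      fun u hu => by exact_mod_cast hk.trans (mem_filter.1 hu).2
    refine Or.inr ⟨hLne, H, hφ, hH.imp_right fun hH => ?_⟩
    rw [edgeCount_univ_univ]
    rify at hH
    push_cast
    linarith

end MaxDegreeReduction

theorem exists_hasTK_of_forall_degree_le.{u} {d : ℝ} (hd : 2 ≤ d) {k : ℕ} (hk : k ≤ d / 8)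
    (base : ∀ (W : Type u) [Fintype W] [Nonempty W] (H : SimpleGraph W),
      d / 2 * Fintype.card W ≤ edgeCount H univ univ → (∀ v, (H.degree v : ℝ) ≤ 100 * d ^ 2) →
      ∃ l, HasTK H k l)
    {V : Type u} [Fintype V] [Nonempty V] (G : SimpleGraph V)
    (hE : d * Fintype.card V ≤ edgeCount G univ univ) : ∃ l, HasTK G k l := by
  induction hn : Fintype.card V using Nat.strong_induction_on generalizing V with
  | _ n ih =>
  by_cases hG : ∀ A : Finset V, A ≠ univ → (edgeCount G A A : ℝ) ≤ d * #A
  swap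
  · push Not at hG
    obtain ⟨A, hA, hEA⟩ := hG
    have : Nonempty (A : Set V) := by
      by_contra h
      rw [not_nonempty_iff, Set.isEmpty_coe_sort, coe_eq_empty] at h
      simp [h, edgeCount_eq_sum] at hEA
    obtain ⟨l, hl⟩ := ih #A (hn ▸ card_lt_card (ssubset_univ_iff.2 hA)) (G.induce (A : Set V))
      (by rw [edgeCount_induce_univ]; simpa using hEA.le) (by simp)
    exact ⟨l, hl.map (SimpleGraph.Embedding.induce _).toHom Subtype.val_injective⟩
  obtain ⟨L, hLn, hdeg, hcompl | ⟨hLne, H, ⟨φ⟩, hH | hH⟩⟩ :=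
    exists_compl_dense_or_oneSubdivision hd hk hG hE
  · have : Nonempty ((Lᶜ : Finset V) : Set V) := by
      refine Nonempty.to_subtype (nonempty_iff_ne_empty.2 fun h => hLn.ne ?_)
      rw [(compl_eq_empty_iff _).1 h, card_univ]
    obtain ⟨l, hl⟩ := base ((Lᶜ : Finset V) : Set V) (G.induce ((Lᶜ : Finset V) : Set V))
      (by
        rw [edgeCount_induce_univ]
        refine le_trans ?_ hcompl
        gcongr
        exact set_fintype_card_le_univ _)
      fun v => (Nat.cast_le.2 (degree_induce_le _ v)).trans (hdeg v (mem_compl.1 v.2))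
    exact ⟨l, hl.map (SimpleGraph.Embedding.induce _).toHom Subtype.val_injective⟩
  · exact ⟨_, φ.hasTK (hasTK_zero_of_not_cliqueFree hH)⟩
  · have : Nonempty L := hLne.to_subtype
    obtain ⟨l, hl⟩ := ih #L (hn ▸ hLn) H (by rwa [Fintype.card_coe]) (by simp)
    exact ⟨_, φ.hasTK hl⟩

section MaxCut

variable {V : Type*} [Fintype V]

lemma two_mul_card_filter_ne {x y : V} (hxy : x ≠ y) :
    2 * #{c : V → Bool | c x ≠ c y} = Fintype.card (V → Bool) := by
  have hflip : #{c : V → Bool | c x ≠ c y} = #{c : V → Bool | ¬ c x ≠ c y} := by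
    refine card_nbij' (fun c => Function.update c x !c x) (fun c => Function.update c x !c x)
      ?_ ?_ ?_ ?_ <;> intro c hc <;> 
      simp_all [Function.update_of_ne hxy.symm, Bool.eq_not]
  rw [← card_univ, ← card_filter_add_card_filter_not (s := univ) fun c : V → Bool => c x ≠ c y,
    ← hflip, two_mul]

theorem exists_coloring_edgeCount_le (G : SimpleGraph V) :
    ∃ H ≤ G, Nonempty (H.Coloring Bool) ∧ edgeCount G univ univ ≤ 2 * edgeCount H univ univ := by
  let cut (c : V → Bool) : SimpleGraph V := G ⊓ (⊤ : SimpleGraph Bool).comap c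
  have hcount : ∀ c, edgeCount (cut c) univ univ =
      #{e ∈ G.interedges univ univ | c e.1 ≠ c e.2} := fun c => by
    simp only [edgeCount, SimpleGraph.interedges_def, filter_filter, cut, SimpleGraph.inf_adj,
      SimpleGraph.comap_adj, SimpleGraph.top_adj]
  have hsum : 2 * ∑ c : V → Bool, edgeCount (cut c) univ univ =
      ∑ _c : V → Bool, edgeCount G univ univ := by
    have hdouble := sum_card_bipartiteAbove_eq_sum_card_bipartiteBelow
      (s := (univ : Finset (V → Bool))) (t := G.interedges univ univ)
      fun c e => c e.1 ≠ c e.2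
    simp only [bipartiteAbove, bipartiteBelow] at hdouble
    simp only [hcount]
    rw [hdouble, mul_sum, sum_congr rfl fun e he => two_mul_card_filter_ne
      ((SimpleGraph.mem_interedges_iff _).1 he).2.2.ne]
    simp only [sum_const, card_univ, smul_eq_mul, edgeCount, mul_comm]
  obtain ⟨c, -, hc⟩ := exists_le_of_sum_le (s := (univ : Finset (V → Bool)))
    (f := fun _ => edgeCount G univ univ) (g := fun c => 2 * edgeCount (cut c) univ univ)
    ⟨fun _ => true, mem_univ _⟩ (by rw [← mul_sum, hsum])
  exact ⟨cut c, inf_le_left, ⟨⟨c, fun h => h.2⟩⟩, hc⟩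

end MaxCut

section Expander

variable {t x y a n : ℝ}

/-- The logarithmic factor `1 + log (1 + x / t)` governing the expansion of sets of size `x`. -/
noncomputable def logFactor (t x : ℝ) : ℝ := 1 + Real.log (1 + x / t)

/-- The expansion rate of sets of size `x` in a graph whose average degree is of order `t`. -/
noncomputable def expansionRate (t x : ℝ) : ℝ := 1 / (200 * logFactor t x ^ 2)

/-- The factor, decreasing from `2` to `1`, by which edge densities of sets of size `x` are
weighted in the choice of an extremal subgraph. -/
noncomputable def densityWeight (t x : ℝ) : ℝ := 1 + 1 / logFactor t x

lemma one_le_logFactor (ht : 0 < t) (hx : 0 ≤ x) : 1 ≤ logFactor t x :=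
  le_add_of_nonneg_right (Real.log_nonneg (le_add_of_nonneg_right (by positivity)))

lemma logFactor_mono (ht : 0 < t) (hx : 0 ≤ x) (hxy : x ≤ y) : logFactor t x ≤ logFactor t y := by
  unfold logFactor
  gcongr

lemma logFactor_mul_le (ht : 0 < t) (hx : 0 ≤ x) (ha : 1 ≤ a) :
    logFactor t (a * x) ≤ logFactor t x + Real.log a := by
  have : 0 ≤ x / t := by positivity
  have hlog : Real.log (1 + a * x / t) ≤ Real.log (a * (1 + x / t)) :=
    Real.log_le_log (by positivity) (by rw [mul_div_assoc]; linarith)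
  rw [Real.log_mul (by positivity) (by positivity)] at hlog
  unfold logFactor
  linarith

lemma expansionRate_pos (ht : 0 < t) (hx : 0 ≤ x) : 0 < expansionRate t x := by
  have := one_le_logFactor ht hx
  unfold expansionRate
  positivity

lemma expansionRate_le (ht : 0 < t) (hx : 0 ≤ x) : expansionRate t x ≤ 1 / 200 := by
  have := one_le_logFactor ht hx
  exact one_div_le_one_div_of_le (by norm_num) (by nlinarith)

lemma expansionRate_anti (ht : 0 < t) (hx : 0 ≤ x) (hxy : x ≤ y) :
    expansionRate t y ≤ expansionRate t x := by
  have := one_le_logFactor ht hx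
  have := logFactor_mono ht hx hxy
  unfold expansionRate
  gcongr

lemma one_le_densityWeight (ht : 0 < t) (hx : 0 ≤ x) : 1 ≤ densityWeight t x := by
  have := one_le_logFactor ht hx
  exact le_add_of_nonneg_right (by positivity)

lemma densityWeight_le_two (ht : 0 < t) (hx : 0 ≤ x) : densityWeight t x ≤ 2 := by
  have := div_le_one_of_le₀ (one_le_logFactor ht hx) (by linarith [one_le_logFactor ht hx])
  unfold densityWeight
  linarith

lemma densityWeight_anti (ht : 0 < t) (hx : 0 ≤ x) (hxy : x ≤ y) :
    densityWeight t y ≤ densityWeight t x := by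
  have := one_le_logFactor ht hx
  have := logFactor_mono ht hx hxy
  unfold densityWeight
  gcongr

lemma logFactor_add_le_of_le_two_thirds (ht : 0 < t) (ha : 0 ≤ a) (han : a ≤ 2 / 3 * n)
    (hn : t / 2 ≤ n) : logFactor t a + 1 / 10 ≤ logFactor t n := by
  have : 0 ≤ a / t := by positivity
  have hnt : 1 / 2 ≤ n / t := by rw [le_div_iff₀ ht]; linarith
  have hant : a / t ≤ 2 / 3 * (n / t) := by rw [← mul_div_assoc]; gcongr
  have hlog : Real.log (9 / 8 * (1 + a / t)) ≤ Real.log (1 + n / t) :=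
    Real.log_le_log (by positivity) (by linarith)
  rw [Real.log_mul (by norm_num) (by positivity)] at hlog
  have hconst : 1 - (9 / 8 : ℝ)⁻¹ ≤ Real.log (9 / 8) := Real.one_sub_inv_le_log_of_pos (by norm_num)
  unfold logFactor
  norm_num at hconst
  linarith

lemma expansionRate_le_densityWeight_sub (ht : 0 < t) (hx : 0 ≤ x) (hxa : x ≤ a)
    (ha : a ≤ 201 / 200 * x) (han : a ≤ 2 / 3 * n) (hn : t / 2 ≤ n) :
    17 * expansionRate t x ≤ densityWeight t a - densityWeight t n := by
  have hx1 := one_le_logFactor ht hx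
  have ha1 := one_le_logFactor ht (hx.trans hxa)
  have hax : logFactor t a / (201 / 200) ≤ logFactor t x := by
    have hlog : Real.log (201 / 200) ≤ 201 / 200 - 1 := Real.log_le_sub_one_of_pos (by norm_num)
    have := logFactor_mono ht (hx.trans hxa) ha
    have := logFactor_mul_le ht hx (show (1 : ℝ) ≤ 201 / 200 by norm_num)
    rw [div_le_iff₀ (by norm_num)]
    linarith
  have hnA := logFactor_add_le_of_le_two_thirds ht (hx.trans hxa) han hn
  unfold expansionRate densityWeight
  set A := logFactor t a
  calc 17 * (1 / (200 * logFactor t x ^ 2))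
      ≤ 17 * (1 / (200 * (A / (201 / 200)) ^ 2)) := by gcongr
    _ ≤ 1 / A - 1 / (A + 1 / 10) := by
        rw [div_sub_div _ _ (by linarith) (by linarith), ← mul_div_assoc,
          div_le_div_iff₀ (by positivity) (by positivity)]
        field_simp
        nlinarith
    _ ≤ 1 / A - 1 / logFactor t n := by gcongr
    _ = 1 + 1 / A - (1 + 1 / logFactor t n) := by ring

variable {V : Type*} {G : SimpleGraph V}

/-- The quantity maximised by the subgraph induced on `A` in the construction of a robust
expander. -/
noncomputable def weightedDensity (G : SimpleGraph V) (t : ℝ) (A : Finset V) : ℝ :=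
  edgeCount G A A / #A * densityWeight t #A

lemma edgeCount_mul_densityWeight_le {D : ℝ} {A : Finset V}
    (hA : weightedDensity G t A ≤ D) : edgeCount G A A * densityWeight t #A ≤ D * #A := by
  rcases A.eq_empty_or_nonempty with rfl | hne
  · simp [edgeCount]
  · rwa [weightedDensity, div_mul_eq_mul_div, div_le_iff₀ (by exact_mod_cast hne.card_pos)] at hA

lemma weightedDensity_induce (A : Finset V) (X : Finset (A : Set V)) :
    weightedDensity (G.induce (A : Set V)) t X =
      weightedDensity G t (X.map (Function.Embedding.subtype _)) := by
  simp only [weightedDensity, edgeCount_induce, card_map]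

variable [Fintype V]

/-- A sublinear expander that is robust under the deletion of a small set `S` of vertices: every
set `X` of at most `3 / 5` of the vertices sends many edges to the complement of `X ∪ S`. -/
structure IsRobustExpander (G : SimpleGraph V) (t : ℝ) : Prop where
  degree_le (v : V) : (G.degree v : ℝ) ≤ 1600 * t ^ 2
  le_edgeCount {X S : Finset V} (hX : (#X : ℝ) ≤ 3 / 5 * Fintype.card V)
    (hS : (#S : ℝ) ≤ expansionRate t #X * #X) :
    expansionRate t #X * t * #X ≤ edgeCount G X (X ∪ S)ᶜ
  half_le_card : t / 2 ≤ Fintype.card V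

-- `e` is the expansion rate of `X`, `x = #X`, `a = #(X ∪ S)` and `q` is the number of edges inside
-- `X ∪ S`; `p` and `p₀` are the density weights of `X ∪ S` and of the whole graph.
lemma mul_lt_add_of_extremal {e x D a p p₀ q : ℝ} (he₀ : 0 < e) (he : e ≤ 1 / 200) (hx : 0 < x)
    (hD : 0 < D) (ht : t / 2 ≤ D) (hax : a ≤ x + e * x) (hp : p ≤ 2) (hp₀ : 1 ≤ p₀)
    (hdrop : 17 * e ≤ p - p₀) (hq : q * p ≤ D * p₀ * a) : q + 2 * (e * t * x) < D * x := by
  by_contra! hcon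
  have hp₁ : 1 ≤ p := by linarith
  have hmul : D * x * p ≤ D * p₀ * a + 2 * (e * t * x) * p := by nlinarith
  have hunion : D * p₀ * a ≤ D * (p - 17 * e) * (x + e * x) := by
    calc D * p₀ * a ≤ D * p₀ * (x + e * x) := by gcongr
      _ ≤ D * (p - 17 * e) * (x + e * x) := by gcongr; linarith
  have hcross : 2 * (e * t * x) * p ≤ 8 * (e * D * x) := by
    calc 2 * (e * t * x) * p ≤ 2 * (e * (2 * D) * x) * 2 := by gcongr; linarith
      _ = 8 * (e * D * x) := by ring
  have hle : D * x * p ≤ D * x * ((p - 17 * e) * (1 + e) + 8 * e) := by linarith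
  have := le_of_mul_le_mul_left hle (by positivity)
  nlinarith

lemma edgeCount_compl_le_of_extremal [Nonempty V] (ht : 0 < t)
    (hext : ∀ A, weightedDensity G t A ≤ weightedDensity G t univ) (X : Finset V) :
    (edgeCount G Xᶜ Xᶜ : ℝ) ≤ edgeCount G univ univ / Fintype.card V * #Xᶜ := by
  have hweight := one_le_densityWeight (t := t) (x := Fintype.card V) ht (by positivity)
  refine le_of_mul_le_mul_right ?_ (show 0 < densityWeight t (Fintype.card V) by linarith)
  calc edgeCount G Xᶜ Xᶜ * densityWeight t (Fintype.card V)
      ≤ edgeCount G Xᶜ Xᶜ * densityWeight t #Xᶜ := by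
        gcongr
        exact densityWeight_anti ht (by positivity) (by exact_mod_cast card_le_univ _)
    _ ≤ edgeCount G univ univ / Fintype.card V * densityWeight t (Fintype.card V) * #Xᶜ :=
        edgeCount_mul_densityWeight_le (hext _)
    _ = edgeCount G univ univ / Fintype.card V * #Xᶜ * densityWeight t (Fintype.card V) := by ring

lemma le_edgeCount_of_extremal [Nonempty V] (ht : 0 < t)
    (hD : t / 2 * Fintype.card V ≤ edgeCount G univ univ) (hV : t / 2 ≤ Fintype.card V)
    (hext : ∀ A, weightedDensity G t A ≤ weightedDensity G t univ) {X S : Finset V}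
    (hXV : (#X : ℝ) ≤ 3 / 5 * Fintype.card V) (hS : (#S : ℝ) ≤ expansionRate t #X * #X) :
    expansionRate t #X * t * #X ≤ edgeCount G X (X ∪ S)ᶜ := by
  rcases X.eq_empty_or_nonempty with rfl | hX
  · simp
  have hn : (0 : ℝ) < Fintype.card V := by exact_mod_cast Fintype.card_pos
  have hx : (0 : ℝ) < #X := by exact_mod_cast hX.card_pos
  set D : ℝ := edgeCount G univ univ / Fintype.card V with hD_def
  have htD : t / 2 ≤ D := (le_div_iff₀ hn).2 hD
  have he := expansionRate_le ht hx.le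
  have hxa : (#X : ℝ) ≤ #(X ∪ S) := by exact_mod_cast card_le_card subset_union_left
  have hax : (#(X ∪ S) : ℝ) ≤ #X + expansionRate t #X * #X := by
    have : (#(X ∪ S) : ℝ) ≤ #X + #S := by exact_mod_cast card_union_le X S
    linarith
  have hlt := mul_lt_add_of_extremal (expansionRate_pos ht hx.le) he hx (by linarith) htD hax
    (densityWeight_le_two ht (by positivity)) (one_le_densityWeight ht hn.le)
    (expansionRate_le_densityWeight_sub ht hx.le hxa (by nlinarith) (by nlinarith) hV)
    (by simpa only [weightedDensity, card_univ, hD_def] using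
      edgeCount_mul_densityWeight_le (hext (X ∪ S)))
  have hcompl := edgeCount_compl_le_of_extremal ht hext X
  have hcard : (#Xᶜ : ℝ) = Fintype.card V - #X := by
    rw [card_compl, Nat.cast_sub (card_le_univ _)]
  have hsplit := edgeCount_univ_le_union (G := G) X S
  have hDn : (edgeCount G univ univ : ℝ) = D * Fintype.card V := by rw [hD_def]; field_simp
  rify at hsplit
  rw [hcard] at hcompl
  linarith

lemma le_weightedDensity_univ [Nonempty V] (ht : 0 < t)
    (hE : t * Fintype.card V ≤ edgeCount G univ univ) : t ≤ weightedDensity G t univ := by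
  have hn : (0 : ℝ) < Fintype.card V := by exact_mod_cast Fintype.card_pos
  rw [weightedDensity, card_univ]
  exact ((le_div_iff₀ hn).2 hE).trans
    (le_mul_of_one_le_right (by positivity) (one_le_densityWeight ht hn.le))

theorem exists_isRobustExpander_induce [Nonempty V] (ht : 0 < t)
    (hdeg : ∀ v, (G.degree v : ℝ) ≤ 1600 * t ^ 2)
    (hE : t * Fintype.card V ≤ edgeCount G univ univ) :
    ∃ A : Finset V, A.Nonempty ∧ IsRobustExpander (G.induce (A : Set V)) t := by
  obtain ⟨A, hmax⟩ := Finite.exists_max (weightedDensity G t)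
  have hlower := (le_weightedDensity_univ ht hE).trans (hmax univ)
  have hA : A.Nonempty := by
    rw [nonempty_iff_ne_empty]
    rintro rfl
    rw [weightedDensity, card_empty, Nat.cast_zero, div_zero, zero_mul] at hlower
    exact hlower.not_gt ht
  have hA₀ : (0 : ℝ) < #A := by exact_mod_cast hA.card_pos
  have hdense : t / 2 * #A ≤ edgeCount G A A := by
    have hdouble : weightedDensity G t A ≤ edgeCount G A A / #A * 2 := by
      unfold weightedDensity
      gcongr
      exact densityWeight_le_two ht hA₀.le
    exact (le_div_iff₀ hA₀).1 (by linarith)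
  have hcard : t / 2 ≤ #A := by
    have hsq : (edgeCount G A A : ℝ) ≤ #A * #A := by
      exact_mod_cast G.card_interedges_le_mul A A
    exact le_of_mul_le_mul_right (hdense.trans hsq) hA₀
  have : Nonempty (A : Set V) := hA.to_subtype
  refine ⟨A, hA, fun v => (Nat.cast_le.2 (degree_induce_le _ v)).trans (hdeg v),
    le_edgeCount_of_extremal ht ?_ ?_ fun X => ?_, ?_⟩
  · rw [edgeCount_induce_univ]
    simpa using hdense
  · simpa using hcard
  · rw [weightedDensity_induce, weightedDensity_induce]
    have : univ.map (Function.Embedding.subtype (· ∈ (A : Set V))) = A := map_subtype_univ_coe A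
    simpa only [this] using hmax _
  · simpa using hcard

end Expander

section PathSet

variable {V : Type*} {G : SimpleGraph V} {x y z : V} {n n' : ℕ} {S S' : Finset V}

/-- `S` is the vertex set of a path of length `n` from `x` to `y` in `G`. -/
def IsPathSet (G : SimpleGraph V) (x y : V) (n : ℕ) (S : Finset V) : Prop :=
  ∃ p : G.Walk x y, p.IsPath ∧ p.length = n ∧ p.support.toFinset = S

namespace IsPathSet

lemma nil (x : V) : IsPathSet G x x 0 {x} := ⟨.nil, by simp⟩

lemma cons (hadj : G.Adj x y) (h : IsPathSet G y z n S) (hx : x ∉ S) :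
    IsPathSet G x z (n + 1) (insert x S) := by
  obtain ⟨p, hp, rfl, rfl⟩ := h
  exact ⟨.cons hadj p, hp.cons (by simpa using hx), by simp⟩

lemma start_mem (h : IsPathSet G x y n S) : x ∈ S := by
  obtain ⟨p, -, -, rfl⟩ := h
  simp

lemma reverse (h : IsPathSet G x y n S) : IsPathSet G y x n S := by
  obtain ⟨p, hp, rfl, rfl⟩ := h
  exact ⟨p.reverse, hp.reverse, by simp⟩

lemma end_mem (h : IsPathSet G x y n S) : y ∈ S := h.reverse.start_mem

lemma card_eq (h : IsPathSet G x y n S) : #S = n + 1 := by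
  obtain ⟨p, hp, rfl, rfl⟩ := h
  rw [List.toFinset_card_of_nodup hp.support_nodup, SimpleGraph.Walk.length_support]

lemma append (h : IsPathSet G x y n S) (h' : IsPathSet G y z n' S')
    (hd : ∀ v ∈ S, v ∈ S' → v = y) : IsPathSet G x z (n + n') (S ∪ S') := by
  obtain ⟨p, hp, rfl, rfl⟩ := h
  obtain ⟨q, hq, rfl, rfl⟩ := h'
  refine ⟨p.append q, ?_, p.length_append q, by ext; simp⟩
  rw [SimpleGraph.Walk.isPath_def, SimpleGraph.Walk.support_append]
  refine hp.support_nodup.append hq.support_nodup.tail fun v hvp hvq => ?_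
  obtain rfl := hd v (by simpa using hvp) (by simpa using List.mem_of_mem_tail hvq)
  have := hq.support_nodup
  rw [← SimpleGraph.Walk.cons_tail_support, List.nodup_cons] at this
  exact this.1 hvq

lemma exists_subset_union (h : IsPathSet G x y n S) (h' : IsPathSet G y z n' S') :
    ∃ m ≤ n + n', ∃ T ⊆ S ∪ S', IsPathSet G x z m T := by
  obtain ⟨p, -, rfl, rfl⟩ := h
  obtain ⟨q, -, rfl, rfl⟩ := h'
  refine ⟨_, ?_, _, fun v hv => ?_, (p.append q).bypass, SimpleGraph.Walk.bypass_isPath _, rfl, rfl⟩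
  · rw [← p.length_append q]
    exact SimpleGraph.Walk.length_bypass_le_length _
  · simpa using SimpleGraph.Walk.support_bypass_subset_support _ (List.mem_toFinset.1 hv)

lemma even_length_iff (c : G.Coloring Bool) (h : IsPathSet G x y n S) : Even n ↔ c x = c y := by
  obtain ⟨p, -, rfl, -⟩ := h
  rw [c.even_length_iff_congr p, ← Bool.eq_iff_iff]

end IsPathSet

end PathSet

section Layer

variable {V : Type*} {G : SimpleGraph V} {A : ℕ → Finset V} {y u v : V} {i j : ℕ}

/-- Breadth-first search from `y` in which the `i`-th round may only add vertices of `A i`: the set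
of vertices found after `i` rounds. -/
noncomputable def layer (G : SimpleGraph V) (A : ℕ → Finset V) (y : V) : ℕ → Finset V
  | 0 => {y}
  | i + 1 => layer G A y i ∪ {v ∈ A i | ∃ u ∈ layer G A y i, G.Adj u v}

lemma mem_layer_zero : v ∈ layer G A y 0 ↔ v = y := mem_singleton

lemma mem_layer_succ :
    v ∈ layer G A y (i + 1) ↔ v ∈ layer G A y i ∨ v ∈ A i ∧ ∃ u ∈ layer G A y i, G.Adj u v := by
  rw [layer, mem_union, mem_filter]

lemma layer_mono (h : i ≤ j) : layer G A y i ⊆ layer G A y j :=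
  monotone_nat_of_le_succ (f := layer G A y) (fun _ => subset_union_left) h

/-- The round in which `v` is found by the search from `y`; it is `0` also when `v` is never
found. -/
noncomputable def level (G : SimpleGraph V) (A : ℕ → Finset V) (y v : V) : ℕ :=
  sInf {i | v ∈ layer G A y i}

lemma level_le (h : v ∈ layer G A y i) : level G A y v ≤ i := Nat.sInf_le h

lemma mem_layer_level (h : v ∈ layer G A y i) : v ∈ layer G A y (level G A y v) :=
  Nat.sInf_mem (s := {i | v ∈ layer G A y i}) ⟨i, h⟩

lemma eq_or_exists_level_eq_succ (h : v ∈ layer G A y i) :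
    v = y ∨ ∃ j, level G A y v = j + 1 ∧ v ∈ A j ∧ ∃ u ∈ layer G A y j, G.Adj u v := by
  have hv := mem_layer_level h
  rcases hr : level G A y v with _ | j <;> rw [hr] at hv
  · exact Or.inl (mem_layer_zero.1 hv)
  · refine Or.inr ⟨j, rfl, (mem_layer_succ.1 hv).resolve_left fun hj => ?_⟩
    exact absurd (level_le hj) (by omega)

lemma level_le_succ_of_adj (hu : u ∈ layer G A y i) (hadj : G.Adj u v)
    (hv : v ∈ A (level G A y u)) : level G A y v ≤ level G A y u + 1 :=
  level_le (mem_layer_succ.2 (Or.inr ⟨hv, u, mem_layer_level hu, hadj⟩))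

lemma level_eq_of_adj (hA : Antitone A) (hv : level G A y v = j + 1) (hvA : v ∈ A j)
    (hu : u ∈ layer G A y j) (hadj : G.Adj u v) : level G A y u = j := by
  have := level_le hu
  have := level_le_succ_of_adj hu hadj (hA this hvA)
  omega

/-- `S` is the vertex set of a path from `v` back to `y` that a breadth-first search found: it
descends by one level at each step. -/
structure IsSearchPath (G : SimpleGraph V) (A : ℕ → Finset V) (y v : V) (S : Finset V) : Prop where
  isPathSet : IsPathSet G v y (level G A y v) S
  mem_layer : ∀ u ∈ S, u ∈ layer G A y (level G A y v)
  injOn : Set.InjOn (level G A y) S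

lemma exists_isSearchPath (hA : Antitone A) (hv : v ∈ layer G A y i) :
    ∃ S, IsSearchPath G A y v S := by
  induction hr : level G A y v generalizing v i with
  | zero =>
    obtain rfl : v = y := by simpa [hr, mem_layer_zero] using mem_layer_level hv
    exact ⟨{v}, hr ▸ .nil v, by simpa [hr] using mem_layer_level hv, by simp⟩
  | succ r ih =>
    obtain rfl | ⟨j, hj, hvA, u, hu, hadj⟩ := eq_or_exists_level_eq_succ hv
    · have := level_le (G := G) (A := A) (mem_layer_zero.2 (rfl : v = v))
      omega
    obtain rfl : j = r := by omega
    have hur := level_eq_of_adj hA hj hvA hu hadj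
    obtain ⟨S, hS⟩ := ih hu hur
    have hlt : ∀ z ∈ S, level G A y z < level G A y v := fun z hz => by
      have := level_le (hS.mem_layer z hz)
      omega
    refine ⟨insert v S, hr ▸ hur ▸ hS.isPathSet.cons hadj.symm fun h => (hlt v h).false, ?_, ?_⟩
    · refine (forall_mem_insert _ _ _).2 ⟨mem_layer_level hv, fun z hz => ?_⟩
      exact layer_mono (by omega) (hS.mem_layer z hz)
    · rw [coe_insert, Set.injOn_insert fun h => (hlt v h).false]
      refine ⟨hS.injOn, ?_⟩
      rintro ⟨z, hz, hzv⟩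
      exact (hlt z hz).ne hzv

namespace IsSearchPath

variable {S : Finset V}

lemma eq_of_level_eq (hS : IsSearchPath G A y v S) (hu : u ∈ S)
    (h : level G A y u = level G A y v) : u = v :=
  hS.injOn hu hS.isPathSet.start_mem h

lemma eq_or_exists_mem (hS : IsSearchPath G A y v S) (hu : u ∈ S) : u = y ∨ ∃ i, u ∈ A i :=
  (eq_or_exists_level_eq_succ (hS.mem_layer u hu)).imp_right fun ⟨j, _, hj, _⟩ => ⟨j, hj⟩

lemma card_filter_level_le (hS : IsSearchPath G A y v S) (i : ℕ) :
    #{u ∈ S | level G A y v ≤ level G A y u + i} ≤ i + 1 := by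
  calc #{u ∈ S | level G A y v ≤ level G A y u + i}
      ≤ #(Icc (level G A y v - i) (level G A y v)) := by
        refine card_le_card_of_injOn (level G A y) (fun u hu => ?_)
          (hS.injOn.mono (coe_subset.2 (filter_subset _ _)))
        obtain ⟨hu, hi⟩ := mem_filter.1 hu
        exact mem_coe.2 (mem_Icc.2 ⟨by omega, level_le (hS.mem_layer u hu)⟩)
    _ ≤ i + 1 := by
        rw [Nat.card_Icc]
        omega

lemma sum_erase_le (hS : IsSearchPath G A y v S) {f : V → ℝ} {g : ℕ → ℝ}
    (hfg : ∀ i, ∀ u ∈ A i, f u ≤ g i) (hg : ∀ i, 0 ≤ g i) (hv : v ∈ layer G A y i) :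
    ∑ u ∈ S.erase y, f u ≤ ∑ j ∈ range i, g j := by
  have hlevel : ∀ u ∈ S.erase y, level G A y u - 1 + 1 = level G A y u ∧
      u ∈ A (level G A y u - 1) := fun u hu => by
    obtain ⟨huy, huS⟩ := mem_erase.1 hu
    obtain ⟨j, hj, huA, -⟩ := (eq_or_exists_level_eq_succ (hS.mem_layer u huS)).resolve_left huy
    rw [hj]
    exact ⟨rfl, huA⟩
  have hinj : Set.InjOn (level G A y · - 1) (S.erase y) := fun u hu u' hu' h => by
    refine hS.injOn (erase_subset _ _ hu) (erase_subset _ _ hu') ?_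
    rw [← (hlevel u hu).1, ← (hlevel u' hu').1]
    exact congrArg (· + 1) h
  calc ∑ u ∈ S.erase y, f u ≤ ∑ u ∈ S.erase y, g (level G A y u - 1) :=
        sum_le_sum fun u hu => hfg _ u (hlevel u hu).2
    _ = ∑ j ∈ (S.erase y).image fun u => level G A y u - 1, g j := (sum_image hinj).symm
    _ ≤ ∑ j ∈ range i, g j := by
        refine sum_le_sum_of_subset_of_nonneg (image_subset_iff.2 fun u hu => ?_) fun j _ _ => hg j
        have := level_le (hS.mem_layer u (mem_of_mem_erase hu))
        have := level_le hv
        have := (hlevel u hu).1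
        exact mem_range.2 (by omega)

end IsSearchPath

lemma mem_layer_of_mem_layer_const {C : Finset V} (hC : ∀ i, C ⊆ A i) {h x : V} (hh : h ∈ C)
    (hx : x ∈ layer G (fun _ => C) h i) (hxj : x ∈ layer G A y j) : h ∈ layer G A y (j + i) := by
  induction i generalizing x j with
  | zero => exact mem_layer_zero.1 hx ▸ hxj
  | succ i ih =>
    rcases mem_layer_succ.1 hx with hx | ⟨-, u, hu, hux⟩
    · exact layer_mono (by omega) (ih hx hxj)
    · have huC : u ∈ C := by
        obtain rfl | ⟨_, _, huC, -⟩ := eq_or_exists_level_eq_succ hu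
        · exact hh
        · exact huC
      have := ih hu (mem_layer_succ.2 (Or.inr ⟨hC j huC, x, hxj, hux.symm⟩))
      rwa [add_right_comm, add_assoc] at this

end Layer

section ResilientCore

variable {V : Type*} [Fintype V] {G : SimpleGraph V} {m : ℕ} {U : Finset V} {h : V}

/-- The search from `y` restricted by `A` finds more than half of all vertices within `m` rounds. -/
def ReachesHalf (G : SimpleGraph V) (A : ℕ → Finset V) (y : V) (m : ℕ) : Prop :=
  Fintype.card V < 2 * #(layer G A y m)

/-- From `h` one can reach more than half of all vertices outside `U`, even after the deletion of
any small set that meets each ball around `h` in only a few vertices. -/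
def IsResilient (G : SimpleGraph V) (m : ℕ) (U : Finset V) (h : V) : Prop :=
  ∀ T : Finset V, #T ≤ 4 * m + 8 → (∀ i, #(T ∩ layer G (fun _ => Uᶜ) h i) ≤ 2 * i + 3) →
    ReachesHalf G (fun _ => (U ∪ T.erase h)ᶜ) h m

/-- Outside `U` there is a subgraph of average degree more than two all of whose vertices are
resilient. -/
def HasResilientCore (G : SimpleGraph V) (m : ℕ) (U : Finset V) : Prop :=
  ∃ K ⊆ Uᶜ, 2 * #K < edgeCount G K K ∧ ∀ h ∈ K, IsResilient G m U h

lemma ReachesHalf.exists_mem {A A' : ℕ → Finset V} {y y' : V} (hA : ReachesHalf G A y m)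
    (hA' : ReachesHalf G A' y' m) : ∃ v ∈ layer G A y m, v ∈ layer G A' y' m := by
  by_contra! hne
  have hdisj : Disjoint (layer G A y m) (layer G A' y' m) := disjoint_left.2 hne
  have := card_union_of_disjoint hdisj
  have := card_le_univ (layer G A y m ∪ layer G A' y' m)
  unfold ReachesHalf at hA hA'
  omega

lemma IsResilient.reachesHalf (hh : IsResilient G m U h) : ReachesHalf G (fun _ => Uᶜ) h m := by
  simpa using hh ∅ (by simp) (by simp)

end ResilientCore

section Fork

variable {V : Type*} {G : SimpleGraph V} {A : ℕ → Finset V} {y u h h' : V} {i : ℕ}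
  {S S' C K : Finset V}

/-- `u` has two different neighbours `h` and `h'` that are one level closer to `y`. -/
structure IsFork (G : SimpleGraph V) (A : ℕ → Finset V) (y u h h' : V) : Prop where
  ne : h ≠ h'
  adj : G.Adj u h
  adj' : G.Adj u h'
  level_eq : level G A y u = level G A y h + 1
  level_eq' : level G A y u = level G A y h' + 1

lemma exists_isFork (hK : 2 * #K < edgeCount G K K)
    (hlevel : ∀ u ∈ K, ∀ v ∈ K, G.Adj u v →
      level G A y u = level G A y v + 1 ∨ level G A y v = level G A y u + 1) :
    ∃ u ∈ K, ∃ h ∈ K, ∃ h' ∈ K, IsFork G A y u h h' := by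
  let down (u : V) : Finset V := {v ∈ K | G.Adj u v ∧ level G A y u = level G A y v + 1}
  let up (u : V) : Finset V := {v ∈ K | G.Adj u v ∧ level G A y v = level G A y u + 1}
  have hup : ∑ u ∈ K, #(up u) = ∑ u ∈ K, #(down u) := by
    simp only [up, down, card_filter]
    rw [sum_comm]
    simp only [G.adj_comm]
  have hedges : edgeCount G K K ≤ ∑ u ∈ K, #(down u) + ∑ u ∈ K, #(down u) := by
    nth_rw 2 [← hup]
    rw [edgeCount_eq_sum, ← sum_add_distrib]
    refine sum_le_sum fun u hu => (card_le_card fun v hv => ?_).trans (card_union_le _ _)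
    obtain ⟨hv, huv⟩ := mem_filter.1 hv
    exact mem_union.2 <| (hlevel u hu v hv huv).imp (fun hl => mem_filter.2 ⟨hv, huv, hl⟩)
      fun hl => mem_filter.2 ⟨hv, huv, hl⟩
  obtain ⟨u, hu, hlt⟩ : ∃ u ∈ K, 1 < #(down u) := exists_lt_of_sum_lt (by
    rw [sum_const, smul_eq_mul]
    omega)
  obtain ⟨h, hh, h', hh', hne⟩ := one_lt_card.1 hlt
  obtain ⟨hhK, hadj, hl⟩ := mem_filter.1 hh
  obtain ⟨hhK', hadj', hl'⟩ := mem_filter.1 hh'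
  exact ⟨u, hu, h, hhK, h', hhK', hne, hadj, hadj', hl, hl'⟩

lemma even_level_iff (c : G.Coloring Bool) (hA : Antitone A) (hu : u ∈ layer G A y i) :
    Even (level G A y u) ↔ c u = c y := by
  obtain ⟨S, hS⟩ := exists_isSearchPath hA hu
  exact hS.isPathSet.even_length_iff c

lemma level_eq_succ_or_of_adj (c : G.Coloring Bool) (hA : Antitone A) {i j : ℕ} {v : V}
    (hu : u ∈ layer G A y i) (hv : v ∈ layer G A y j) (huA : ∀ i, u ∈ A i) (hvA : ∀ i, v ∈ A i)
    (hadj : G.Adj u v) :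
    level G A y u = level G A y v + 1 ∨ level G A y v = level G A y u + 1 := by
  have hle := level_le_succ_of_adj hu hadj (hvA _)
  have hle' := level_le_succ_of_adj hv hadj.symm (huA _)
  have hne : level G A y u ≠ level G A y v := fun heq => by
    have hu := even_level_iff c hA hu
    rw [heq, even_level_iff c hA hv] at hu
    have := c.valid hadj
    generalize c u = p, c v = q, c y = o at *
    revert p q o
    decide
  omega

namespace IsFork

lemma level_eq_level (hf : IsFork G A y u h h') : level G A y h' = level G A y h :=
  Nat.succ_injective (hf.level_eq'.symm.trans hf.level_eq)

lemma ne_root (hf : IsFork G A y u h h') : u ≠ y := by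
  rintro rfl
  have := level_le (G := G) (A := A) (mem_layer_zero.2 (rfl : u = u))
  have := hf.level_eq
  omega

lemma apex_notMem (hf : IsFork G A y u h h') (hS' : IsSearchPath G A y h' S') : u ∉ S' := by
  intro hu
  have := level_le (hS'.mem_layer u hu)
  have := hf.level_eq'
  omega

lemma notMem_insert_apex (hf : IsFork G A y u h h') (hS' : IsSearchPath G A y h' S') :
    h ∉ insert u S' := by
  rw [mem_insert, not_or]
  exact ⟨hf.adj.ne', fun hh => hf.ne (hS'.eq_of_level_eq hh hf.level_eq_level.symm)⟩

lemma isPathSet (hf : IsFork G A y u h h') (hS' : IsSearchPath G A y h' S') :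
    IsPathSet G h y (level G A y h + 2) (insert h (insert u S')) :=
  hf.level_eq_level ▸ .cons hf.adj.symm (.cons hf.adj' hS'.isPathSet (hf.apex_notMem hS'))
    (hf.notMem_insert_apex hS')

lemma card_inter_layer_le (hf : IsFork G A y u h h') (hS : IsSearchPath G A y h S)
    (hS' : IsSearchPath G A y h' S') (hC : ∀ i, C ⊆ A i) (hh : h ∈ C) (i : ℕ) :
    #((S ∪ insert h (insert u S')) ∩ layer G (fun _ => C) h i) ≤ 2 * i + 3 := by
  have hclose : ∀ v ∈ layer G (fun _ => C) h i, ∀ j, v ∈ layer G A y j →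
      level G A y h ≤ level G A y v + i := fun v hv j hvj =>
    level_le (mem_layer_of_mem_layer_const hC hh hv (mem_layer_level hvj))
  have hsub : (S ∪ insert h (insert u S')) ∩ layer G (fun _ => C) h i ⊆
      {v ∈ S | level G A y h ≤ level G A y v + i} ∪
        insert u {v ∈ S' | level G A y h' ≤ level G A y v + i} := fun v hv => by
    obtain ⟨hv, hvi⟩ := mem_inter.1 hv
    simp only [mem_union, mem_insert, mem_filter, hf.level_eq_level] at hv ⊢
    rcases hv with hvS | rfl | rfl | hvS
    · exact Or.inl ⟨hvS, hclose v hvi _ (hS.mem_layer v hvS)⟩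
    · exact Or.inl ⟨hS.isPathSet.start_mem, le_self_add⟩
    · exact Or.inr (Or.inl rfl)
    · exact Or.inr (Or.inr ⟨hvS, hclose v hvi _ (hS'.mem_layer v hvS)⟩)
  have := card_le_card hsub
  have := card_union_le {v ∈ S | level G A y h ≤ level G A y v + i}
    (insert u {v ∈ S' | level G A y h' ≤ level G A y v + i})
  have := card_insert_le u {v ∈ S' | level G A y h' ≤ level G A y v + i}
  have := hS.card_filter_level_le i
  have := hS'.card_filter_level_le i
  omega

lemma sum_erase_eq (hf : IsFork G A y u h h') (hS' : IsSearchPath G A y h' S') (hhy : h ≠ y)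
    {f : V → ℝ} (hfu : f u = 0) (hfh : f h = 0) :
    ∑ v ∈ (insert h (insert u S')).erase y, f v = ∑ v ∈ S'.erase y, f v := by
  have hu := hf.apex_notMem hS'
  have hh := hf.notMem_insert_apex hS'
  rw [erase_insert_of_ne hhy, erase_insert_of_ne hf.ne_root, sum_insert, sum_insert, hfu, hfh,
    zero_add, zero_add]
  · exact fun h => hu (mem_of_mem_erase h)
  · rw [← erase_insert_of_ne hf.ne_root]
    exact fun h => hh (mem_of_mem_erase h)

end IsFork

end Fork

section Switch

variable {V : Type*} [Fintype V] {G : SimpleGraph V} {A : ℕ → Finset V} {y : V} {m : ℕ}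
  {U : Finset V}

lemma HasResilientCore.exists_isFork (c : G.Coloring Bool) (hA : Antitone A)
    (hhalf : ReachesHalf G A y m) (hUA : ∀ i, Uᶜ ⊆ A i) (hcore : HasResilientCore G m U) :
    ∃ u ∈ Uᶜ, ∃ h ∈ Uᶜ, ∃ h', IsFork G A y u h h' ∧ IsResilient G m U h ∧
      ∀ v ∈ ({u, h, h'} : Finset V), v ∈ layer G A y (2 * m) := by
  obtain ⟨K, hKU, hK, hres⟩ := hcore
  have hreach : ∀ h ∈ K, h ∈ layer G A y (2 * m) := fun h hh => by
    obtain ⟨x, hx, hxh⟩ := hhalf.exists_mem (hres h hh).reachesHalf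
    exact two_mul m ▸ mem_layer_of_mem_layer_const hUA (hKU hh) hxh hx
  obtain ⟨u, hu, h, hh, h', hh', hf⟩ := BalancedSubdivision.exists_isFork hK
    fun u hu v hv => level_eq_succ_or_of_adj c hA (hreach u hu) (hreach v hv)
      (fun i => hUA i (hKU hu)) (fun i => hUA i (hKU hv))
  refine ⟨u, hKU hu, h, hKU hh, h', hf, hres h hh, ?_⟩
  simpa using ⟨hreach u hu, hreach h hh, hreach h' hh'⟩

lemma exists_switch (c : G.Coloring Bool) (hA : Antitone A) (hhalf : ReachesHalf G A y m)
    (hyU : y ∈ U) (hUA : ∀ i, Uᶜ ⊆ A i) (hcore : HasResilientCore G m U) {f : V → ℝ} {g : ℕ → ℝ}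
    (hfg : ∀ i, ∀ v ∈ A i, f v ≤ g i) (hg : ∀ i, 0 ≤ g i) (hfU : ∀ v ∉ U, f v = 0) :
    ∃ h ∉ U, ∃ r, 1 ≤ r ∧ r ≤ 2 * m ∧ ∃ T : Finset V, #T ≤ 4 * m + 4 ∧
      ReachesHalf G (fun _ => (U ∪ T.erase h)ᶜ) h m ∧ (∀ v ∈ T, v = y ∨ ∃ i, v ∈ A i) ∧
      ∀ n, n = r ∨ n = r + 2 → ∃ S ⊆ T, IsPathSet G h y n S ∧
        ∑ v ∈ S.erase y, f v ≤ ∑ i ∈ range (2 * m), g i := by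
  obtain ⟨u, hu, h, hh, h', hf, hres, hreach⟩ := hcore.exists_isFork c hA hhalf hUA
  have hreachu := hreach u (by simp)
  have hreachh := hreach h (by simp)
  have hreachh' := hreach h' (by simp)
  obtain ⟨S, hS⟩ := exists_isSearchPath hA hreachh
  obtain ⟨S', hS'⟩ := exists_isSearchPath hA hreachh'
  have hhU : h ∉ U := mem_compl.1 hh
  have hhy : h ≠ y := ne_of_mem_of_not_mem hyU hhU |>.symm
  obtain ⟨r, hr, -⟩ := (eq_or_exists_level_eq_succ hreachh).resolve_left hhy
  have := level_le hreachu
  have := hf.level_eq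
  have hcard : #(S ∪ insert h (insert u S')) ≤ 4 * m + 4 := by
    have := card_union_le S (insert h (insert u S'))
    have := hS.isPathSet.card_eq
    have := (hf.isPathSet hS').card_eq
    omega
  refine ⟨h, hhU, level G A y h, by omega, by omega, S ∪ insert h (insert u S'), hcard,
    hres _ (by omega) (hf.card_inter_layer_le hS hS' hUA hh), fun v hv => ?_, ?_⟩
  · simp only [mem_union, mem_insert] at hv
    rcases hv with hv | rfl | rfl | hv
    · exact hS.eq_or_exists_mem hv
    · exact Or.inr ⟨0, hUA 0 hh⟩
    · exact Or.inr ⟨0, hUA 0 hu⟩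
    · exact hS'.eq_or_exists_mem hv
  · rintro n (rfl | rfl)
    · exact ⟨S, subset_union_left, hS.isPathSet, hS.sum_erase_le hfg hg hreachh⟩
    · refine ⟨_, subset_union_right, hf.isPathSet hS', ?_⟩
      rw [hf.sum_erase_eq hS' hhy (hfU u (mem_compl.1 hu)) (hfU h hhU)]
      exact hS'.sum_erase_le hfg hg hreachh'

end Switch

section Adjuster

variable {V : Type*} {G : SimpleGraph V} {f : V → ℝ} {m L s : ℕ} {b y h : V}
  {Z D U : Finset V} {C C' : ℝ} {A : ℕ → Finset V} {g : ℕ → ℝ}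

/-- A path from `y` to `b` through `D` whose length can be adjusted to any of
`L, L + 2, …, L + 2 * s`, always at a cost of at most `C` with respect to the vertex weights `f`.
It is built from `s` switches, and it avoids the forbidden set `Z` except possibly at `b`. -/
structure IsAdjuster (G : SimpleGraph V) (f : V → ℝ) (m : ℕ) (Z : Finset V) (y b : V)
    (D : Finset V) (L s : ℕ) (C : ℝ) : Prop where
  notMem : y ∉ D
  eq_of_mem : ∀ v ∈ insert y D, v ∈ Z → v = b
  card_le : #D ≤ (4 * m + 4) * s
  le_length : s ≤ L
  length_le : L ≤ 2 * m * s
  exists_path : ∀ j ≤ s, ∃ S ⊆ insert y D, IsPathSet G y b (L + 2 * j) S ∧ ∑ v ∈ S.erase b, f v ≤ C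

lemma isAdjuster_refl (b : V) : IsAdjuster G f m Z b b ∅ 0 0 0 where
  notMem := by simp
  eq_of_mem := by simp
  card_le := by simp
  le_length := le_rfl
  length_le := by simp
  exists_path j hj := by
    obtain rfl : j = 0 := by omega
    exact ⟨{b}, by simp, .nil b, by simp⟩

lemma sum_union_erase_le (hf : ∀ v, 0 ≤ f v) {S S' : Finset V} (hy : y ∈ S') :
    ∑ v ∈ (S ∪ S').erase b, f v ≤ ∑ v ∈ S.erase y, f v + ∑ v ∈ S'.erase b, f v := by
  have hsub : (S ∪ S').erase b ⊆ S.erase y ∪ S'.erase b := fun v hv => by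
    by_cases hvy : v = y
    · subst hvy
      exact mem_union_right _ (mem_erase.2 ⟨ne_of_mem_erase hv, hy⟩)
    · simp only [mem_erase, mem_union] at hv ⊢
      tauto
  refine (sum_le_sum_of_subset_of_nonneg hsub fun v _ _ => hf v).trans ?_
  rw [← sum_union_inter]
  exact le_add_of_nonneg_right (sum_nonneg fun v _ => hf v)

lemma IsAdjuster.extend (hadj : IsAdjuster G f m Z y b D L s C) (hf : ∀ v, 0 ≤ f v)
    (hh : h ∉ insert y D) (hhZ : h ∉ Z) {T : Finset V} (hT : #T ≤ 4 * m + 4)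
    (hTD : ∀ v ∈ T, v = y ∨ v ∉ D ∪ Z) {r : ℕ} (hr : 1 ≤ r) (hrm : r ≤ 2 * m)
    (hswitch : ∀ n, n = r ∨ n = r + 2 → ∃ S ⊆ T, IsPathSet G h y n S ∧
      ∑ v ∈ S.erase y, f v ≤ C') :
    IsAdjuster G f m Z h b (D ∪ T.erase h) (L + r) (s + 1) (C' + C) := by
  have hjoin : ∀ j ≤ s, ∀ n, n = r ∨ n = r + 2 → ∃ S ⊆ insert h (D ∪ T.erase h),
      IsPathSet G h b (n + (L + 2 * j)) S ∧ ∑ v ∈ S.erase b, f v ≤ C' + C := fun j hj n hn => by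
    obtain ⟨S, hST, hS, hSC⟩ := hswitch n hn
    obtain ⟨S', hSD, hS', hSC'⟩ := hadj.exists_path j hj
    refine ⟨S ∪ S', fun v hv => ?_, hS.append hS' fun v hv hv' => ?_,
      (sum_union_erase_le hf hS'.start_mem).trans (by linarith)⟩
    · have hyT := hST hS.end_mem
      have hvSD := @hSD v
      have hvST := @hST v
      have : v = y → v ∈ T := by rintro rfl; exact hyT
      simp only [mem_insert, mem_union, mem_erase] at hv hvSD ⊢
      tauto
    · refine (hTD v (hST hv)).elim id fun hvD => ?_
      exact (mem_insert.1 (hSD hv')).resolve_right fun h => hvD (mem_union_left _ h)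
  refine ⟨?_, fun v hv hvZ => ?_, ?_, ?_, ?_, fun j hj => ?_⟩
  · simpa using fun hhD => hh (mem_insert_of_mem hhD)
  · simp only [mem_insert, mem_union, mem_erase] at hv
    rcases hv with rfl | hv | ⟨-, hv⟩
    · exact absurd hvZ hhZ
    · exact hadj.eq_of_mem v (mem_insert_of_mem hv) hvZ
    · obtain rfl := (hTD v hv).resolve_right fun h => h (mem_union_right _ hvZ)
      exact hadj.eq_of_mem v (mem_insert_self _ _) hvZ
  · have := card_union_le D (T.erase h)
    have := card_erase_le (s := T) (a := h)
    have := hadj.card_le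
    rw [mul_add]
    omega
  · exact add_le_add hadj.le_length hr
  · have := hadj.length_le
    rw [mul_add]
    omega
  · obtain hjs | rfl : j ≤ s ∨ j = s + 1 := by omega
    · rw [show L + r + 2 * j = r + (L + 2 * j) by ring]
      exact hjoin j hjs _ (Or.inl rfl)
    · rw [show L + r + 2 * (s + 1) = r + 2 + (L + 2 * s) by ring]
      exact hjoin s le_rfl _ (Or.inr rfl)

variable [Fintype V]

/-- A search from `y` that reaches half of the graph, avoids the vertices of `D ∪ Z`, may use
everything outside `U ∪ D`, and pays at most `g i` for a vertex found in round `i + 1`. -/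
structure IsExploration (G : SimpleGraph V) (f : V → ℝ) (m : ℕ) (U Z : Finset V) (y : V)
    (D : Finset V) (A : ℕ → Finset V) (g : ℕ → ℝ) : Prop where
  antitone : Antitone A
  reachesHalf : ReachesHalf G A y m
  disjoint : ∀ i, Disjoint (A i) (D ∪ Z)
  compl_subset : ∀ i, (insert y (U ∪ D))ᶜ ⊆ A i
  nonneg : ∀ i, 0 ≤ g i
  le : ∀ i, ∀ v ∈ A i, f v ≤ g i

lemma IsAdjuster.exists_extension (hadj : IsAdjuster G f m Z y b D L s C)
    (hexp : IsExploration G f m U Z y D A g) (c : G.Coloring Bool) (hf : ∀ v, 0 ≤ f v)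
    (hZU : Z ⊆ U) (hfU : ∀ v ∉ U, f v = 0) (hcore : HasResilientCore G m (U ∪ insert y D)) :
    ∃ h D' r, 1 ≤ r ∧ r ≤ 2 * m ∧
      IsAdjuster G f m Z h b D' (L + r) (s + 1) (∑ i ∈ range (2 * m), g i + C) ∧
      IsExploration G f m U Z h D' (fun _ => (U ∪ D')ᶜ) 0 := by
  rw [union_insert] at hcore
  obtain ⟨h, hhU, r, hr, hrm, T, hT, hhalf, hTA, hswitch⟩ :=
    exists_switch c hexp.antitone hexp.reachesHalf (mem_insert_self _ _) hexp.compl_subset hcore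
      hexp.le hexp.nonneg fun v hv =>
        hfU v fun hvU => hv (mem_insert_of_mem (mem_union_left _ hvU))
  obtain ⟨hhy, hhU, hhD⟩ : h ≠ y ∧ h ∉ U ∧ h ∉ D := by simpa using hhU
  have hyT : y ∈ T.erase h := by
    obtain ⟨S, hST, hS, -⟩ := hswitch r (Or.inl rfl)
    exact mem_erase.2 ⟨hhy.symm, hST hS.end_mem⟩
  have hD' : insert y (U ∪ D) ∪ T.erase h = U ∪ (D ∪ T.erase h) := by
    rw [insert_union, insert_eq_of_mem (mem_union_right _ hyT), union_assoc]
  refine ⟨h, D ∪ T.erase h, r, hr, hrm, hadj.extend hf (by simp [hhy, hhD])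
    (fun hhZ => hhU (hZU hhZ)) hT (fun v hv => ?_) hr hrm hswitch, antitone_const, hD' ▸ hhalf,
    fun _ => ?_, fun _ => compl_subset_compl.2 (subset_insert _ _), fun _ => le_rfl,
    fun _ v hv => (hfU v fun hvU => mem_compl.1 hv (mem_union_left _ hvU)).le⟩
  · exact (hTA v hv).imp_right fun ⟨i, hi⟩ => disjoint_left.1 (hexp.disjoint i) hi
  · exact disjoint_compl_left.mono_right
      (union_subset subset_union_right (hZU.trans subset_union_left))

lemma exists_isAdjuster_of_length (c : G.Coloring Bool) (hf : ∀ v, 0 ≤ f v) (hZU : Z ⊆ U)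
    (hfU : ∀ v ∉ U, f v = 0) {l : ℕ} (hlU : ∀ D : Finset V, #D ≤ (4 * m + 4) * l + 1 →
      HasResilientCore G m (U ∪ D)) (hexp : IsExploration G f m U Z b ∅ A g) {N : ℕ}
    (hN : N + 2 * m ≤ l + 1) :
    ∃ y D L s C A' g', N ≤ L ∧ L ≤ N + (2 * m - 1) ∧ IsAdjuster G f m Z y b D L s C ∧
      IsExploration G f m U Z y D A' g' ∧
      C + ∑ i ∈ range (2 * m), g' i ≤ ∑ i ∈ range (2 * m), g i := by
  induction N with
  | zero => exact ⟨b, ∅, 0, 0, 0, A, g, le_rfl, by simp, isAdjuster_refl b, hexp, by simp⟩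
  | succ N ih =>
    obtain ⟨y, D, L, s, C, A', g', hNL, hLN, hadj, hexp', hC⟩ := ih (by omega)
    obtain hlt | rfl := hNL.lt_or_eq
    · exact ⟨y, D, L, s, C, A', g', hlt, by omega, hadj, hexp', hC⟩
    have hcard : #(insert y D) ≤ (4 * m + 4) * l + 1 := by
      refine (card_insert_le _ _).trans (Nat.succ_le_succ (hadj.card_le.trans ?_))
      exact Nat.mul_le_mul_left _ (hadj.le_length.trans (by omega))
    obtain ⟨h, D', r, hr, hrm, hadj', hexp''⟩ :=
      hadj.exists_extension hexp' c hf hZU hfU (hlU _ hcard)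
    refine ⟨h, D', _, _, _, _, _, by omega, by omega, hadj', hexp'', ?_⟩
    simp only [Pi.zero_apply, sum_const_zero]
    linarith

end Adjuster

section Connection

variable {V : Type*} {G : SimpleGraph V}

lemma sum_range_inv_sq_le (N : ℕ) : ∑ i ∈ range N, (((i : ℝ) + 1) ^ 2)⁻¹ ≤ 2 := by
  calc ∑ i ∈ range N, (((i : ℝ) + 1) ^ 2)⁻¹ = ∑ i ∈ Ioo 0 (N + 1), ((i : ℝ) ^ 2)⁻¹ := by
        rw [show Ioo 0 (N + 1) = Ico (0 + 1) (N + 1) from rfl, ← sum_Ico_add', ← range_eq_Ico]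
        simp only [Nat.cast_add, Nat.cast_one]
    _ ≤ 2 / ((0 : ℕ) + 1) := sum_Ioo_inv_sq_le 0 (N + 1)
    _ = 2 := by norm_num

/-- The part of the weights `w` exceeding `1 / l`. Replacing `w` by it changes the weight of a path
of length `l` by at most `1 + 1 / l`. -/
noncomputable def heavyPart (w : V → ℝ) (l : ℕ) (v : V) : ℝ := if (l : ℝ)⁻¹ < w v then w v else 0

lemma heavyPart_nonneg {w : V → ℝ} (hw : ∀ v, 0 ≤ w v) (l : ℕ) (v : V) : 0 ≤ heavyPart w l v := by
  unfold heavyPart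
  split_ifs
  exacts [hw v, le_rfl]

lemma heavyPart_eq_zero {w : V → ℝ} {l : ℕ} {v : V} (hv : w v ≤ (l : ℝ)⁻¹) :
    heavyPart w l v = 0 :=
  if_neg hv.not_gt

lemma le_heavyPart_add (w : V → ℝ) (l : ℕ) (v : V) : w v ≤ heavyPart w l v + (l : ℝ)⁻¹ := by
  unfold heavyPart
  split_ifs with hv
  · exact le_add_of_nonneg_right (by positivity)
  · rw [zero_add]
    exact not_lt.1 hv

lemma sum_le_sum_heavyPart_add_two {w : V → ℝ} {l : ℕ} (hl : 0 < l) {S : Finset V}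
    (hS : #S ≤ l + 1) : ∑ v ∈ S, w v ≤ ∑ v ∈ S, heavyPart w l v + 2 := by
  have hl' : (1 : ℝ) ≤ l := by exact_mod_cast hl
  have hS' : (#S : ℝ) ≤ l + 1 := by exact_mod_cast hS
  calc ∑ v ∈ S, w v ≤ ∑ v ∈ S, (heavyPart w l v + (l : ℝ)⁻¹) :=
        sum_le_sum fun v _ => le_heavyPart_add w l v
    _ = ∑ v ∈ S, heavyPart w l v + #S / l := by
        rw [sum_add_distrib, sum_const, nsmul_eq_mul, div_eq_mul_inv]
    _ ≤ ∑ v ∈ S, heavyPart w l v + 2 := by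
        gcongr
        rw [div_le_iff₀ (by positivity)]
        linarith

lemma IsAdjuster.exists_index {f : V → ℝ} {m L s : ℕ} {Z D : Finset V} {a b y : V} {C : ℝ}
    (hadj : IsAdjuster G f m Z y b D L s C) (c : G.Coloring Bool) (hab : c a = c b) {p l : ℕ}
    {S : Finset V} (hS : IsPathSet G a y p S) (hp : p ≤ 2 * m) (hl : l = 4 * (m + 1) ^ 2)
    (hL : L + 2 * m ≤ l) (hlL : l < L + 4 * m) : ∃ j ≤ s, p + (L + 2 * j) = l := by
  have hs : 2 * m ≤ s := by
    by_contra! hs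
    have hLs := hadj.length_le
    have hms : 2 * m * s ≤ 2 * m * (2 * m) := Nat.mul_le_mul_left _ hs.le
    nlinarith
  obtain ⟨S', -, hS', -⟩ := hadj.exists_path 0 (Nat.zero_le s)
  have hparity : Even p ↔ Even (L + 2 * 0) := by
    rw [hS.even_length_iff c, hS'.even_length_iff c, hab, eq_comm]
  rw [mul_zero, add_zero, Nat.even_iff, Nat.even_iff] at hparity
  refine ⟨(l - p - L) / 2, ?_, ?_⟩ <;> omega

variable [Fintype V]

/-- The vertices outside `Z` that a search may visit in round `i + 1`: those of weight at most
`1 / (i + 1) ^ 2`, a summable bound, and those of weight at most `1 / l`, which are harmless on a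
path of length `l`. -/
noncomputable def lightSet (w : V → ℝ) (l : ℕ) (Z : Finset V) (i : ℕ) : Finset V :=
  {v | w v ≤ max (((i : ℝ) + 1) ^ 2)⁻¹ (l : ℝ)⁻¹ ∧ v ∉ Z}

lemma mem_lightSet {w : V → ℝ} {l : ℕ} {Z : Finset V} {i : ℕ} {v : V} :
    v ∈ lightSet w l Z i ↔ w v ≤ max (((i : ℝ) + 1) ^ 2)⁻¹ (l : ℝ)⁻¹ ∧ v ∉ Z := by
  simp [lightSet]

lemma lightSet_antitone (w : V → ℝ) (l : ℕ) (Z : Finset V) : Antitone (lightSet w l Z) :=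
  fun i j hij v hv => by
    rw [mem_lightSet] at hv ⊢
    refine ⟨hv.1.trans (max_le_max_right _ ?_), hv.2⟩
    gcongr

lemma heavyPart_le_of_mem_lightSet {w : V → ℝ} {l : ℕ} {Z : Finset V} {i : ℕ} {v : V}
    (hv : v ∈ lightSet w l Z i) : heavyPart w l v ≤ (((i : ℝ) + 1) ^ 2)⁻¹ := by
  unfold heavyPart
  split_ifs with hlv
  · exact (le_max_iff.1 (mem_lightSet.1 hv).1).resolve_right hlv.not_ge
  · positivity

lemma ReachesHalf.exists_isPathSet {A A' : ℕ → Finset V} {a y : V} {m : ℕ} (hA : Antitone A)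
    (hA' : Antitone A') (hhalf : ReachesHalf G A a m) (hhalf' : ReachesHalf G A' y m) {f : V → ℝ}
    (hf : ∀ v, 0 ≤ f v) {g g' : ℕ → ℝ} (hg : ∀ i, 0 ≤ g i) (hg' : ∀ i, 0 ≤ g' i)
    (hfg : ∀ i, ∀ v ∈ A i, f v ≤ g i) (hfg' : ∀ i, ∀ v ∈ A' i, f v ≤ g' i) :
    ∃ p ≤ 2 * m, ∃ S, IsPathSet G a y p S ∧
      (∀ v ∈ S, (v = a ∨ ∃ i, v ∈ A i) ∨ v = y ∨ ∃ i, v ∈ A' i) ∧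
      ∑ v ∈ (S.erase a).erase y, f v ≤ ∑ i ∈ range m, g i + ∑ i ∈ range m, g' i := by
  obtain ⟨x, hx, hx'⟩ := hhalf.exists_mem hhalf'
  obtain ⟨S, hS⟩ := exists_isSearchPath hA hx
  obtain ⟨S', hS'⟩ := exists_isSearchPath hA' hx'
  obtain ⟨p, hp, T, hT, hpath⟩ := hS.isPathSet.reverse.exists_subset_union hS'.isPathSet
  refine ⟨p, ?_, T, hpath, fun v hv => (mem_union.1 (hT hv)).imp hS.eq_or_exists_mem
    hS'.eq_or_exists_mem, ?_⟩
  · have := level_le hx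
    have := level_le hx'
    omega
  calc ∑ v ∈ (T.erase a).erase y, f v ≤ ∑ v ∈ S.erase a ∪ S'.erase y, f v := by
        refine sum_le_sum_of_subset_of_nonneg (fun v hv => ?_) fun v _ _ => hf v
        have := @hT v
        simp only [mem_erase, mem_union] at hv this ⊢
        tauto
    _ ≤ ∑ v ∈ S.erase a, f v + ∑ v ∈ S'.erase y, f v := by
        rw [← sum_union_inter]
        exact le_add_of_nonneg_right (sum_nonneg fun v _ => hf v)
    _ ≤ _ := add_le_add (hS.sum_erase_le hfg hg hx) (hS'.sum_erase_le hfg' hg' hx')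

lemma isExploration_lightSet {w : V → ℝ} {l m : ℕ} {U Z : Finset V} {b : V} (hZU : Z ⊆ U)
    (hwU : ∀ v ∉ U, w v ≤ (l : ℝ)⁻¹) (hb : ReachesHalf G (lightSet w l Z) b m) :
    IsExploration G (heavyPart w l) m U Z b ∅ (lightSet w l Z)
      fun i => (((i : ℝ) + 1) ^ 2)⁻¹ where
  antitone := lightSet_antitone w l Z
  reachesHalf := hb
  disjoint i := disjoint_left.2 fun v hv => by simpa using (mem_lightSet.1 hv).2
  compl_subset i v hv := by
    rw [union_empty, mem_compl, mem_insert, not_or] at hv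
    exact mem_lightSet.2 ⟨(hwU v hv.2).trans (le_max_right _ _), fun hvZ => hv.2 (hZU hvZ)⟩
  nonneg i := by positivity
  le i _ := heavyPart_le_of_mem_lightSet

/-- The requirements for connecting `a` to `b` by a path of length `l` of small weight that avoids
the set `B` of branch vertices in its interior: the search from `b` also avoids `Z`, and the search
from `a` is robust against deleting few vertices outside `Z`. All vertices of weight more than
`1 / l` lie in `U`. -/
structure IsConnectable (G : SimpleGraph V) (w : V → ℝ) (m l : ℕ) (B Z U : Finset V) (a b : V) :
    Prop where
  length_eq : l = 4 * (m + 1) ^ 2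
  left_mem : a ∈ B
  ne : a ≠ b
  right_notMem : b ∉ Z
  subset : Z ∪ B ⊆ U
  le : ∀ v ∉ U, w v ≤ (l : ℝ)⁻¹
  reachesHalf_right : ReachesHalf G (lightSet w l (Z ∪ B)) b m
  reachesHalf_left : ∀ D, #D ≤ (4 * m + 4) * l + 1 → Disjoint D Z →
    ReachesHalf G (lightSet w l (D ∪ B)) a m
  hasResilientCore : ∀ D, #D ≤ (4 * m + 4) * l + 1 → HasResilientCore G m (U ∪ D)

/-- `a` and `b` are joined by a path of length `l` whose interior has weight at most `8` and avoids
the set `B` of branch vertices. -/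
def HasLightPath (G : SimpleGraph V) (w : V → ℝ) (l : ℕ) (B : Finset V) (a b : V) : Prop :=
  ∃ S, IsPathSet G a b l S ∧ (∀ v ∈ S, v ∈ B → v = a ∨ v = b) ∧ ∑ v ∈ (S.erase a).erase b, w v ≤ 8

theorem IsConnectable.hasLightPath {w : V → ℝ} {m l : ℕ} {B Z U : Finset V} {a b : V}
    (hab : IsConnectable G w m l B Z U a b) (c : G.Coloring Bool) (hc : c a = c b)
    (hw : ∀ v, 0 ≤ w v) (hm : 1 ≤ m) :
    HasLightPath G w l B a b := by
  have hl := hab.length_eq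
  have hml : 4 * m ≤ l := by nlinarith
  have hf := heavyPart_nonneg hw l
  obtain ⟨y, D, L, s, C, A, g, hlL, hLl, hadj, hexp, hC⟩ := exists_isAdjuster_of_length c hf
    hab.subset (fun v hv => heavyPart_eq_zero (hab.le v hv)) hab.hasResilientCore
    (isExploration_lightSet hab.subset hab.le hab.reachesHalf_right)
    (N := l + 1 - 4 * m) (by omega)
  have hD : ∀ v ∈ insert y D, v ∈ B → v = b := fun v hv hvB =>
    hadj.eq_of_mem v hv (mem_union_right _ hvB)
  have hDZ : Disjoint D Z := disjoint_left.2 fun v hv hvZ => hab.right_notMem <|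
    hadj.eq_of_mem v (mem_insert_of_mem hv) (mem_union_left _ hvZ) ▸ hvZ
  have hDcard : #D ≤ (4 * m + 4) * l + 1 := Nat.le_succ_of_le <|
    hadj.card_le.trans (Nat.mul_le_mul_left _ (hadj.le_length.trans (by omega)))
  obtain ⟨p, hp, S, hS, hSmem, hSsum⟩ := ReachesHalf.exists_isPathSet (lightSet_antitone _ _ _)
    hexp.antitone (hab.reachesHalf_left D hDcard hDZ) hexp.reachesHalf hf
    (fun _ => by positivity) hexp.nonneg (fun _ _ => heavyPart_le_of_mem_lightSet) hexp.le
  have hSavoid : ∀ v ∈ S, v ∉ D ∧ (v ∈ B → v = a ∨ v = b) := fun v hv => by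
    rcases hSmem v hv with (rfl | ⟨i, hi⟩) | rfl | ⟨i, hi⟩
    · exact ⟨fun hvD => hab.ne (hD v (mem_insert_of_mem hvD) hab.left_mem), fun _ => Or.inl rfl⟩
    · have := (mem_lightSet.1 hi).2
      rw [mem_union, not_or] at this
      exact ⟨this.1, fun hvB => absurd hvB this.2⟩
    · exact ⟨hadj.notMem, fun hvB => Or.inr (hD v (mem_insert_self _ _) hvB)⟩
    · have := disjoint_left.1 (hexp.disjoint i) hi
      simp only [mem_union, not_or] at this
      exact ⟨this.1, fun hvB => absurd hvB this.2.2⟩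
  obtain ⟨j, hj, rfl⟩ := hadj.exists_index c hc hS hp hl (by omega) (by omega)
  obtain ⟨S', hS'D, hS', hS'sum⟩ := hadj.exists_path j hj
  have hpath := hS.append hS' fun v hv hv' =>
    (mem_insert.1 (hS'D hv')).resolve_right (hSavoid v hv).1
  refine ⟨S ∪ S', hpath, fun v hv hvB => (mem_union.1 hv).elim (fun h => (hSavoid v h).2 hvB)
    fun h => Or.inr (hD v (hS'D h) hvB), ?_⟩
  refine (sum_le_sum_heavyPart_add_two (by omega) (((card_erase_le).trans card_erase_le).trans
    hpath.card_eq.le)).trans ?_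
  have hsub : ((S ∪ S').erase a).erase b ⊆ (S.erase a ∪ S').erase b :=
    erase_subset_erase _ (by grind)
  have hsum := (sum_le_sum_of_subset_of_nonneg hsub fun v _ _ => hf v).trans
    (sum_union_erase_le hf hS'.start_mem)
  have hg : ∑ i ∈ range m, g i ≤ ∑ i ∈ range (2 * m), g i :=
    sum_le_sum_of_subset_of_nonneg (range_mono (by omega)) fun i _ _ => hexp.nonneg i
  linarith [sum_range_inv_sq_le m, sum_range_inv_sq_le (2 * m)]

end Connection

section LogFactor

variable {t x y : ℝ}

lemma exp_logFactor (ht : 0 < t) (hx : 0 ≤ x) :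
    Real.exp (logFactor t x) = Real.exp 1 * (1 + x / t) := by
  rw [logFactor, Real.exp_add, Real.exp_log (by positivity)]

lemma logFactor_pow_le (ht : 0 < t) (hx : t / 1600 ≤ x) (p : ℕ) :
    logFactor t x ^ p ≤ p.factorial * 4803 * (x / t) := by
  have hx0 : 0 ≤ x := le_trans (by positivity) hx
  have hxt : 1 ≤ 1600 * (x / t) := by
    rw [← mul_div_assoc, le_div_iff₀ ht]
    linarith
  have hpow := Real.pow_div_factorial_le_exp (logFactor t x)
    (zero_le_one.trans (one_le_logFactor ht hx0)) p
  rw [div_le_iff₀ (by positivity), exp_logFactor ht hx0] at hpow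
  calc logFactor t x ^ p ≤ Real.exp 1 * (1 + x / t) * p.factorial := hpow
    _ ≤ 3 * (1600 * (x / t) + x / t) * p.factorial := by
        gcongr
        exact Real.exp_one_lt_three.le
    _ = p.factorial * 4803 * (x / t) := by ring

lemma half_le_log_one_add {e : ℝ} (he : 0 ≤ e) (he1 : e ≤ 1) : e / 2 ≤ Real.log (1 + e) := by
  refine le_trans ?_ (Real.one_sub_inv_le_log_of_pos (by positivity))
  rw [le_sub_iff_add_le, ← le_sub_iff_add_le', inv_le_iff_one_le_mul₀ (by positivity)]
  nlinarith

lemma expansionRate_mul_logFactor_sq (ht : 0 < t) (hx : 0 ≤ x) :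
    expansionRate t x * logFactor t x ^ 2 = 1 / 200 := by
  have := (zero_lt_one.trans_le (one_le_logFactor ht hx)).ne'
  unfold expansionRate
  field_simp

lemma logFactor_add_le (ht : 0 < t) (hx : t / 1600 ≤ x)
    (hxy : x * (1 + expansionRate t x / 2) ≤ y) :
    logFactor t x + expansionRate t x / 6404 ≤ logFactor t y := by
  have hx0 : 0 < x := lt_of_lt_of_le (by positivity) hx
  have he := expansionRate_pos ht hx0.le
  have he' := expansionRate_le ht hx0.le
  have hxt : 1 / 1600 ≤ x / t := by
    rw [le_div_iff₀ ht]
    linarith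
  have hxyt : x / t * (1 + expansionRate t x / 2) ≤ y / t := by
    rw [div_mul_eq_mul_div]
    gcongr
  have hlog := half_le_log_one_add (e := expansionRate t x / 3202) (by positivity) (by linarith)
  have hmul : Real.log ((1 + x / t) * (1 + expansionRate t x / 3202)) ≤ Real.log (1 + y / t) :=
    Real.log_le_log (by positivity) (by nlinarith)
  rw [Real.log_mul (by positivity) (by positivity)] at hmul
  unfold logFactor at *
  linarith

/-- The number of rounds within which a search in a robust expander reaches `x` vertices. -/
noncomputable def roundBound (t x : ℝ) : ℝ := 1 + 10 ^ 6 * logFactor t x ^ 3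

lemma roundBound_mono (ht : 0 < t) (hx : 0 ≤ x) (hxy : x ≤ y) :
    roundBound t x ≤ roundBound t y := by
  have := one_le_logFactor ht hx
  unfold roundBound
  gcongr
  exact logFactor_mono ht hx hxy

lemma one_le_roundBound (ht : 0 < t) (hx : 0 ≤ x) : 1 ≤ roundBound t x := by
  have := one_le_logFactor ht hx
  exact le_add_of_nonneg_right (by positivity)

lemma roundBound_add_one_le (ht : 0 < t) (hx : t / 1600 ≤ x)
    (hxy : x * (1 + expansionRate t x / 2) ≤ y) : roundBound t x + 1 ≤ roundBound t y := by
  have hx0 : 0 ≤ x := le_trans (by positivity) hx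
  have hL := one_le_logFactor ht hx0
  have he := expansionRate_pos ht hx0
  have heL := expansionRate_mul_logFactor_sq ht hx0
  have hcube : logFactor t x ^ 3 + 3 * (expansionRate t x * logFactor t x ^ 2) / 6404 ≤
      logFactor t y ^ 3 := by
    calc logFactor t x ^ 3 + 3 * (expansionRate t x * logFactor t x ^ 2) / 6404
        ≤ logFactor t x ^ 3 + 3 * (expansionRate t x * logFactor t x ^ 2) / 6404 +
          (3 * logFactor t x * (expansionRate t x / 6404) ^ 2 + (expansionRate t x / 6404) ^ 3) :=
          le_add_of_nonneg_right (by positivity)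
      _ = (logFactor t x + expansionRate t x / 6404) ^ 3 := by ring
      _ ≤ logFactor t y ^ 3 := by
          gcongr
          exact logFactor_add_le ht hx hxy
  unfold roundBound
  linarith

end LogFactor

section Growth

variable {V : Type*} [Fintype V] {G : SimpleGraph V} {t : ℝ} {A : ℕ → Finset V} {y : V} {i : ℕ}

/-- The vertices outside `X` with a neighbour in `X`. -/
noncomputable def outerBoundary (G : SimpleGraph V) (X : Finset V) : Finset V :=
  {v | v ∉ X ∧ ∃ u ∈ X, G.Adj u v}

lemma mem_outerBoundary {X : Finset V} {v : V} :
    v ∈ outerBoundary G X ↔ v ∉ X ∧ ∃ u ∈ X, G.Adj u v := by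
  simp [outerBoundary]

lemma edgeCount_compl_eq_zero {X S : Finset V} (hS : outerBoundary G X ⊆ S) :
    edgeCount G X (X ∪ S)ᶜ = 0 := by
  rw [edgeCount_eq_sum]
  refine sum_eq_zero fun a ha => card_eq_zero.2 (filter_eq_empty_iff.2 fun v hv hadj => ?_)
  rw [mem_compl, mem_union, not_or] at hv
  exact hv.2 (hS (mem_outerBoundary.2 ⟨hv.1, a, ha, hadj⟩))

lemma edgeCount_singleton_compl_le (S : Finset V) :
    edgeCount G {y} ({y} ∪ S)ᶜ ≤ #(outerBoundary G {y} \ S) := by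
  rw [edgeCount_eq_sum, sum_singleton]
  refine card_le_card fun v hv => ?_
  simp only [mem_filter, mem_compl, mem_union, mem_singleton, not_or] at hv
  simpa [mem_outerBoundary] using ⟨⟨hv.1.1, hv.2⟩, hv.1.2⟩

lemma card_layer_add_card_le {S : Finset V} (hS : S ⊆ outerBoundary G (layer G A y i)) :
    #(layer G A y i) + #S ≤ #(layer G A y (i + 1)) + #(S \ A i) := by
  have hdisj : Disjoint (layer G A y i) S :=
    disjoint_right.2 fun v hv => (mem_outerBoundary.1 (hS hv)).1
  rw [← card_union_of_disjoint hdisj]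
  refine (card_le_card fun v hv => ?_).trans (card_union_le _ _)
  rw [mem_union, mem_layer_succ, mem_sdiff]
  rcases mem_union.1 hv with hv | hv
  · exact Or.inl (Or.inl hv)
  · by_cases hvA : v ∈ A i
    · exact Or.inl (Or.inr ⟨hvA, (mem_outerBoundary.1 (hS hv)).2⟩)
    · exact Or.inr ⟨hv, hvA⟩

namespace IsRobustExpander

lemma card_pos (h : IsRobustExpander G t) (ht : 0 < t) : (0 : ℝ) < Fintype.card V :=
  (half_pos ht).trans_le h.half_le_card

lemma lt_card_outerBoundary (h : IsRobustExpander G t) (ht : 0 < t) {X : Finset V}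
    (hX : X.Nonempty) (hX' : (#X : ℝ) ≤ 3 / 5 * Fintype.card V) :
    expansionRate t #X * #X < #(outerBoundary G X) := by
  by_contra! hle
  have hedges := h.le_edgeCount hX' hle
  rw [edgeCount_compl_eq_zero subset_rfl, Nat.cast_zero] at hedges
  have := expansionRate_pos ht (Nat.cast_nonneg #X)
  have : (0 : ℝ) < #X := by exact_mod_cast hX.card_pos
  have : 0 < expansionRate t #X * t * #X := by positivity
  linarith

lemma le_card_outerBoundary_singleton (h : IsRobustExpander G t) (ht : 4 ≤ t) (y : V) :
    t / 800 ≤ #(outerBoundary G {y}) := by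
  have ht0 : 0 < t := by linarith
  have he := expansionRate_pos ht0 zero_le_one
  have hL : logFactor t 1 ≤ 2 := by
    have hlog := Real.log_le_sub_one_of_pos (x := 1 + 1 / t) (by positivity)
    have : 1 / t ≤ 1 := (div_le_one ht0).2 (by linarith)
    unfold logFactor
    linarith
  have hrate : 1 / 800 ≤ expansionRate t 1 := by
    have := one_le_logFactor ht0 zero_le_one
    exact one_div_le_one_div_of_le (by positivity) (by nlinarith)
  have hedges := h.le_edgeCount (X := {y}) (S := ∅)
    (by rw [card_singleton]; linarith [h.half_le_card]) (by simpa using he.le)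
  have hle : (edgeCount G {y} ({y} ∪ ∅)ᶜ : ℝ) ≤ #(outerBoundary G {y} \ ∅) := by
    exact_mod_cast edgeCount_singleton_compl_le ∅
  rw [sdiff_empty] at hle
  simp only [card_singleton, Nat.cast_one, mul_one] at hedges
  nlinarith

end IsRobustExpander

/-- Round `i` of the search from `y` is on schedule: it has found a number of vertices which is
neither too small nor too large and for which `i` rounds are allowed. -/
structure IsOnSchedule (G : SimpleGraph V) (t : ℝ) (A : ℕ → Finset V) (y : V) (i : ℕ) : Prop where
  le_card : t / 1600 ≤ #(layer G A y i)
  card_le : (#(layer G A y i) : ℝ) ≤ 3 / 5 * Fintype.card V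
  le_roundBound : (i : ℝ) ≤ roundBound t #(layer G A y i)

lemma IsRobustExpander.le_card_layer_one (h : IsRobustExpander G t) (ht : 4 ≤ t)
    (hzero : (#(outerBoundary G {y} \ A 0) : ℝ) ≤ t / 1600) : t / 1600 ≤ #(layer G A y 1) := by
  have hcard : (#(layer G A y 0) : ℝ) + #(outerBoundary G {y}) ≤
      #(layer G A y (0 + 1)) + #(outerBoundary G {y} \ A 0) := by
    exact_mod_cast card_layer_add_card_le (A := A) (y := y) (i := 0) subset_rfl
  have := h.le_card_outerBoundary_singleton ht y
  have : (0 : ℝ) ≤ #(layer G A y 0) := Nat.cast_nonneg _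
  rw [zero_add] at hcard
  linarith

lemma IsOnSchedule.roundBound_succ (hi : IsOnSchedule G t A y i) (h : IsRobustExpander G t)
    (ht : 0 < t) (hloss : (#(outerBoundary G (layer G A y i) \ A i) : ℝ) ≤
      expansionRate t #(layer G A y i) / 2 * #(layer G A y i)) :
    ((i + 1 : ℕ) : ℝ) ≤ roundBound t #(layer G A y (i + 1)) := by
  have hcard : (#(layer G A y i) : ℝ) + #(outerBoundary G (layer G A y i)) ≤
      #(layer G A y (i + 1)) + #(outerBoundary G (layer G A y i) \ A i) := by
    exact_mod_cast card_layer_add_card_le (G := G) (A := A) (y := y) (i := i) subset_rfl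
  have := h.lt_card_outerBoundary ht ⟨y, layer_mono (zero_le) (mem_layer_zero.2 rfl)⟩ hi.card_le
  have hstep := roundBound_add_one_le (y := #(layer G A y (i + 1))) ht hi.le_card (by linarith)
  have := hi.le_roundBound
  push_cast
  linarith

theorem IsRobustExpander.reachesHalf (h : IsRobustExpander G t) (ht : 4 ≤ t)
    (hzero : (#(outerBoundary G {y} \ A 0) : ℝ) ≤ t / 1600)
    (hloss : ∀ i, IsOnSchedule G t A y i → (#(outerBoundary G (layer G A y i) \ A i) : ℝ) ≤
      expansionRate t #(layer G A y i) / 2 * #(layer G A y i))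
    {m : ℕ} (hm : roundBound t (Fintype.card V) < m) : ReachesHalf G A y m := by
  have ht0 : 0 < t := by linarith
  have hmono {i j : ℕ} (hij : i ≤ j) : (#(layer G A y i) : ℝ) ≤ #(layer G A y j) := by
    exact_mod_cast card_le_card (layer_mono (G := G) (A := A) (y := y) hij)
  have hgrow : ∀ i, 1 ≤ i → 3 / 5 * Fintype.card V < (#(layer G A y i) : ℝ) ∨
      i ≤ roundBound t #(layer G A y i) := fun i hi => by
    induction i, hi using Nat.le_induction with
    | base => exact Or.inr (by exact_mod_cast one_le_roundBound ht0 (Nat.cast_nonneg _))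
    | succ i hi ih =>
      obtain hlarge | hsmall := lt_or_ge (3 / 5 * Fintype.card V : ℝ) #(layer G A y i)
      · exact Or.inl (hlarge.trans_le (hmono i.le_succ))
      have hsched : IsOnSchedule G t A y i := ⟨(h.le_card_layer_one ht hzero).trans (hmono hi),
        hsmall, ih.resolve_left hsmall.not_gt⟩
      exact Or.inr (hsched.roundBound_succ h ht0 (hloss i hsched))
  have hm1 : 1 ≤ m := by
    exact_mod_cast (one_le_roundBound ht0 (Nat.cast_nonneg _)).trans hm.le
  have hcard : 3 / 5 * Fintype.card V < (#(layer G A y m) : ℝ) :=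
    (hgrow m hm1).resolve_right fun hle => hm.not_ge <| hle.trans <|
      roundBound_mono ht0 (Nat.cast_nonneg _) (by exact_mod_cast card_le_univ _)
  have := h.card_pos ht0
  have : (Fintype.card V : ℝ) < 2 * #(layer G A y m) := by linarith
  exact_mod_cast this

end Growth

section LightGrowth

variable {V : Type*} [Fintype V] {G : SimpleGraph V} {t : ℝ}

lemma card_filter_lt_le {w : V → ℝ} {B r : ℝ} (hr : 0 < r) (hB : ∑ v, w v ^ 2 ≤ B) :
    (#{v | r⁻¹ < w v} : ℝ) ≤ B * r ^ 2 := by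
  have hsum : ∑ v with r⁻¹ < w v, r⁻¹ ^ 2 ≤ B :=
    calc ∑ v with r⁻¹ < w v, r⁻¹ ^ 2 ≤ ∑ v with r⁻¹ < w v, w v ^ 2 := by
          refine sum_le_sum fun v hv => ?_
          have := (mem_filter.1 hv).2
          gcongr
      _ ≤ ∑ v, w v ^ 2 :=
          sum_le_sum_of_subset_of_nonneg (filter_subset _ _) fun v _ _ => sq_nonneg _
      _ ≤ B := hB
  rwa [sum_const, nsmul_eq_mul, inv_pow, ← div_eq_mul_inv, div_le_iff₀ (by positivity)] at hsum

lemma mul_pow_four_le_expansionRate_mul {x i : ℝ} (ht : 0 < t) (hi : 0 ≤ i) (hx : t / 1600 ≤ x)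
    (hix : i ≤ roundBound t x) :
    t / 10 ^ 50 * (i + 1) ^ 4 ≤ expansionRate t x / 4 * x := by
  have hx0 : 0 < x := lt_of_lt_of_le (by positivity) hx
  have hL := one_le_logFactor ht hx0.le
  have hpow := logFactor_pow_le ht hx 14
  unfold expansionRate
  unfold roundBound at hix
  set L := logFactor t x
  have hi' : i + 1 ≤ 1000002 * L ^ 3 := by linarith [one_le_pow₀ hL (n := 3)]
  rw [show 1 / (200 * L ^ 2) / 4 * x = x / (800 * L ^ 2) by field_simp; norm_num,
    le_div_iff₀ (by positivity)]
  calc t / 10 ^ 50 * (i + 1) ^ 4 * (800 * L ^ 2)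
      ≤ t / 10 ^ 50 * (1000002 * L ^ 3) ^ 4 * (800 * L ^ 2) := by gcongr
    _ = t / 10 ^ 50 * 1000002 ^ 4 * 800 * L ^ 14 := by ring
    _ ≤ t / 10 ^ 50 * 1000002 ^ 4 * 800 * (Nat.factorial 14 * 4803 * (x / t)) := by gcongr
    _ = 1000002 ^ 4 * 800 * Nat.factorial 14 * 4803 / 10 ^ 50 * x := by field_simp
    _ ≤ 1 * x := by
        gcongr
        norm_num [Nat.factorial]
    _ = x := one_mul x

lemma card_sdiff_lightSet_le {w : V → ℝ} (hw : ∑ v, w v ^ 2 ≤ t / 10 ^ 50) (l : ℕ)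
    (X Z : Finset V) (i : ℕ) :
    (#(X \ lightSet w l Z i) : ℝ) ≤ t / 10 ^ 50 * ((i : ℝ) + 1) ^ 4 + #(X ∩ Z) := by
  have hsub : X \ lightSet w l Z i ⊆ ({v | (((i : ℝ) + 1) ^ 2)⁻¹ < w v} : Finset V) ∪ X ∩ Z :=
      fun v hv => by
    simp only [mem_sdiff, mem_lightSet, le_max_iff, mem_union, mem_inter, mem_filter_univ] at hv ⊢
    grind
  have hcard : (#(X \ lightSet w l Z i) : ℝ) ≤
      #{v | (((i : ℝ) + 1) ^ 2)⁻¹ < w v} + #(X ∩ Z) := by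
    exact_mod_cast (card_le_card hsub).trans (card_union_le _ _)
  have hheavy := card_filter_lt_le (r := ((i : ℝ) + 1) ^ 2) (by positivity) hw
  rw [← pow_mul] at hheavy
  linarith

theorem IsRobustExpander.reachesHalf_lightSet (h : IsRobustExpander G t) (ht : 4 ≤ t) {w : V → ℝ}
    {l : ℕ} (hw : ∑ v, w v ^ 2 ≤ t / 10 ^ 50) {Z : Finset V} {y : V}
    (hzero : (#(outerBoundary G {y} ∩ Z) : ℝ) ≤ t / 3200)
    (hloss : ∀ i, IsOnSchedule G t (lightSet w l Z) y i →
      (#(outerBoundary G (layer G (lightSet w l Z) y i) ∩ Z) : ℝ) ≤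
        expansionRate t #(layer G (lightSet w l Z) y i) / 4 * #(layer G (lightSet w l Z) y i))
    {m : ℕ} (hm : roundBound t (Fintype.card V) < m) :
    ReachesHalf G (lightSet w l Z) y m := by
  refine h.reachesHalf ht ?_ (fun i hi => ?_) hm
  · have hlost := card_sdiff_lightSet_le hw l (outerBoundary G {y}) Z 0
    norm_num at hlost
    linarith
  · have := card_sdiff_lightSet_le hw l (outerBoundary G (layer G (lightSet w l Z) y i)) Z i
    have := mul_pow_four_le_expansionRate_mul (by linarith) (Nat.cast_nonneg i) hi.le_card
      hi.le_roundBound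
    linarith [hloss i hi]

end LightGrowth

section Parameters

variable {t n : ℝ}

/-- The number of search rounds used in an expander with `n` vertices and parameter `t`; it exceeds
`roundBound t n`. -/
noncomputable def roundCount (t n : ℝ) : ℕ := ⌊10 ^ 6 * logFactor t n ^ 3⌋₊ + 2

/-- The common length of the paths found in an expander with `n` vertices and parameter `t`, in the
form required by `IsConnectable`. -/
noncomputable def pathLength (t n : ℝ) : ℕ := 4 * (roundCount t n + 1) ^ 2

/-- The number of vertices that the connection argument may have to avoid. -/
noncomputable def avoidCount (t n : ℝ) : ℕ := (4 * roundCount t n + 4) * pathLength t n + 1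

lemma roundBound_lt_roundCount : roundBound t n < roundCount t n := by
  have := Nat.lt_floor_add_one (10 ^ 6 * logFactor t n ^ 3)
  unfold roundBound roundCount
  push_cast
  linarith

lemma roundCount_le (ht : 0 < t) (hn : 0 ≤ n) :
    (roundCount t n : ℝ) ≤ 1000002 * logFactor t n ^ 3 := by
  have hL := one_le_logFactor ht hn
  have hfloor := Nat.floor_le (a := 10 ^ 6 * logFactor t n ^ 3) (by positivity)
  unfold roundCount
  push_cast
  linarith [one_le_pow₀ hL (n := 3)]

lemma pathLength_le (ht : 0 < t) (hn : 0 ≤ n) :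
    (pathLength t n : ℝ) ≤ 5 * 10 ^ 12 * logFactor t n ^ 6 := by
  have hL := one_le_logFactor ht hn
  have hm : (roundCount t n : ℝ) + 1 ≤ 1000003 * logFactor t n ^ 3 := by
    linarith [roundCount_le ht hn, one_le_pow₀ hL (n := 3)]
  calc (pathLength t n : ℝ) = 4 * ((roundCount t n : ℝ) + 1) ^ 2 := by
        unfold pathLength
        push_cast
        rfl
    _ ≤ 4 * (1000003 * logFactor t n ^ 3) ^ 2 := by gcongr
    _ = 4 * 1000003 ^ 2 * logFactor t n ^ 6 := by ring
    _ ≤ 5 * 10 ^ 12 * logFactor t n ^ 6 := mul_le_mul_of_nonneg_right (by norm_num) (by positivity)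

lemma avoidCount_add_le (ht : 0 < t) (hn : 0 ≤ n) :
    (avoidCount t n : ℝ) + 4 * roundCount t n + 9 ≤ 3 * 10 ^ 19 * logFactor t n ^ 9 := by
  have hL := one_le_logFactor ht hn
  have hm : 4 * (roundCount t n : ℝ) + 4 ≤ 4000012 * logFactor t n ^ 3 := by
    linarith [roundCount_le ht hn, one_le_pow₀ hL (n := 3)]
  have hprod : (4 * (roundCount t n : ℝ) + 4) * pathLength t n ≤
      4000012 * (5 * 10 ^ 12) * logFactor t n ^ 9 :=
    calc (4 * (roundCount t n : ℝ) + 4) * pathLength t n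
        ≤ 4000012 * logFactor t n ^ 3 * (5 * 10 ^ 12 * logFactor t n ^ 6) := by
          gcongr
          exact pathLength_le ht hn
      _ = 4000012 * (5 * 10 ^ 12) * logFactor t n ^ 9 := by ring
  have := pow_le_pow_right₀ hL (show 3 ≤ 9 by norm_num)
  have := one_le_pow₀ hL (n := 9)
  unfold avoidCount
  push_cast
  linarith

end Parameters

section Nonexpanding

variable {V : Type*} [Fintype V] {G : SimpleGraph V} {t r : ℝ} {W X Y Z Q : Finset V} {y : V}

/-- A set disjoint from `Z` violates robust expansion at rate `r` in `G - Z`: few edges leave it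
once some set of at most `r * #X` vertices has been deleted as well. -/
structure IsNonexpanding (G : SimpleGraph V) (t r : ℝ) (Z X : Finset V) : Prop where
  disjoint : Disjoint X Z
  exists_edgeCount_le :
    ∃ S : Finset V, (#S : ℝ) ≤ r * #X ∧ (edgeCount G X (X ∪ (Z ∪ S))ᶜ : ℝ) ≤ r * t * #X

/-- Robust expansion of `G - Z` at the constant rate `r`, for sets of at most half the vertices. -/
def ExpandsOutside (G : SimpleGraph V) (t r : ℝ) (Z : Finset V) : Prop :=
  ∀ X : Finset V, X.Nonempty → (#X : ℝ) ≤ Fintype.card V / 2 → ¬ IsNonexpanding G t r Z X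

lemma IsNonexpanding.union (hY : IsNonexpanding G t r W Y) (hX : IsNonexpanding G t r (W ∪ Y) X) :
    IsNonexpanding G t r W (Y ∪ X) := by
  obtain ⟨hYW, S, hS, hSe⟩ := hY
  obtain ⟨hXWY, S', hS', hSe'⟩ := hX
  rw [disjoint_union_right] at hXWY
  have hcard : (#(Y ∪ X) : ℝ) = #Y + #X := by
    exact_mod_cast card_union_of_disjoint hXWY.2.symm
  refine ⟨disjoint_union_left.2 ⟨hYW, hXWY.1⟩, S ∪ S', ?_, ?_⟩
  · have : (#(S ∪ S') : ℝ) ≤ #S + #S' := by exact_mod_cast card_union_le S S'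
    rw [hcard]
    linarith
  · have hsub : (Y ∪ X ∪ (W ∪ (S ∪ S')))ᶜ ⊆ (Y ∪ (W ∪ S))ᶜ :=
      compl_subset_compl.2 fun v => by simp only [mem_union]; tauto
    have hsub' : (Y ∪ X ∪ (W ∪ (S ∪ S')))ᶜ ⊆ (X ∪ (W ∪ Y ∪ S'))ᶜ :=
      compl_subset_compl.2 fun v => by simp only [mem_union]; tauto
    have : (edgeCount G (Y ∪ X) (Y ∪ X ∪ (W ∪ (S ∪ S')))ᶜ : ℝ) ≤
        edgeCount G Y (Y ∪ (W ∪ S))ᶜ + edgeCount G X (X ∪ (W ∪ Y ∪ S'))ᶜ := by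
      rw [edgeCount_union_left hXWY.2.symm]
      exact_mod_cast Nat.add_le_add (edgeCount_mono subset_rfl hsub)
        (edgeCount_mono subset_rfl hsub')
    rw [hcard]
    linarith

lemma IsRobustExpander.card_le_of_isNonexpanding (h : IsRobustExpander G t) (ht : 0 < t)
    (hW : 20 * (#W : ℝ) ≤ expansionRate t (Fintype.card V) * Fintype.card V)
    (hY : IsNonexpanding G t (expansionRate t (Fintype.card V) / 2) W Y)
    (hYcard : (#Y : ℝ) ≤ 3 / 5 * Fintype.card V) : (#Y : ℝ) ≤ Fintype.card V / 10 := by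
  obtain ⟨-, S, hS, hSe⟩ := hY
  have hrate := expansionRate_pos ht (Nat.cast_nonneg (Fintype.card V))
  have hle : expansionRate t (Fintype.card V) ≤ expansionRate t #Y :=
    expansionRate_anti ht (Nat.cast_nonneg _) (by exact_mod_cast card_le_univ Y)
  set r := expansionRate t (Fintype.card V)
  obtain rfl | hYne := Y.eq_empty_or_nonempty
  · simp only [card_empty, Nat.cast_zero]
    positivity
  have : (0 : ℝ) < #Y := by exact_mod_cast hYne.card_pos
  have hlt : expansionRate t #Y * #Y < #(W ∪ S) := by
    by_contra! hsmall
    have := h.le_edgeCount hYcard hsmall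
    have : r * t * #Y ≤ expansionRate t #Y * t * #Y := by gcongr
    have : 0 < r * t * #Y := by positivity
    linarith
  have : (#(W ∪ S) : ℝ) ≤ #W + #S := by exact_mod_cast card_union_le W S
  have : r * #Y ≤ expansionRate t #Y * #Y := by gcongr
  refine le_of_mul_le_mul_left (a := r) ?_ hrate
  linarith

-- `Y` is a largest nonexpanding set: by `IsNonexpanding.union` no further one exists outside it.
theorem IsRobustExpander.exists_expandsOutside (h : IsRobustExpander G t) (ht : 0 < t)
    (hW : 20 * (#W : ℝ) ≤ expansionRate t (Fintype.card V) * Fintype.card V) :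
    ∃ Y : Finset V, (#Y : ℝ) ≤ Fintype.card V / 10 ∧
      ExpandsOutside G t (expansionRate t (Fintype.card V) / 2) (W ∪ Y) := by
  set r := expansionRate t (Fintype.card V) / 2
  have hne : ({Y | IsNonexpanding G t r W Y ∧ (#Y : ℝ) ≤ 3 / 5 * Fintype.card V} :
      Finset (Finset V)).Nonempty :=
    ⟨∅, mem_filter_univ _ |>.2 ⟨⟨disjoint_empty_left _, ∅, by simp, by simp [edgeCount]⟩, by
      rw [card_empty, Nat.cast_zero]
      positivity⟩⟩
  obtain ⟨Y, hY, hmax⟩ := exists_max_image _ card hne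
  obtain ⟨hYnon, hYcard⟩ := (mem_filter_univ _).1 hY
  have hYsmall := h.card_le_of_isNonexpanding ht hW hYnon hYcard
  refine ⟨Y, hYsmall, fun X hXne hXcard hX => ?_⟩
  have hcard := card_union_of_disjoint (disjoint_union_right.1 hX.disjoint).2.symm
  have hle := hmax (Y ∪ X) ((mem_filter_univ _).2 ⟨hYnon.union hX, by
    rw [hcard]
    push_cast
    linarith⟩)
  have := hXne.card_pos
  omega

end Nonexpanding

section DenseGrowth

variable {V : Type*} [Fintype V] {G : SimpleGraph V} {t r : ℝ} {Z Q : Finset V} {y : V}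

lemma edgeCount_union_sdiff_eq_zero (X Z : Finset V) :
    edgeCount G X (X ∪ (Z ∪ outerBoundary G X \ Z))ᶜ = 0 :=
  edgeCount_compl_eq_zero (by rw [union_sdiff_self_eq_union]; exact subset_union_right)

lemma ExpandsOutside.lt_card_sdiff (hZ : ExpandsOutside G t r Z) (hr : 0 ≤ r) (ht : 0 ≤ t)
    {X : Finset V} (hX : X.Nonempty) (hXZ : Disjoint X Z)
    (hXcard : (#X : ℝ) ≤ Fintype.card V / 2) : r * #X < #(outerBoundary G X \ Z) := by
  by_contra! hle
  refine hZ X hX hXcard ⟨hXZ, _, hle, ?_⟩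
  rw [edgeCount_union_sdiff_eq_zero, Nat.cast_zero]
  positivity

lemma ExpandsOutside.lt_card_sdiff_singleton (hZ : ExpandsOutside G t r Z) (hr : 0 ≤ r)
    (hy : y ∉ Z) (hcard : 2 ≤ Fintype.card V) : r * t < #(outerBoundary G {y} \ Z) := by
  by_contra! hle
  have hcard' : (2 : ℝ) ≤ Fintype.card V := by exact_mod_cast hcard
  refine hZ {y} (singleton_nonempty y) (by rw [card_singleton]; push_cast; linarith)
    ⟨disjoint_singleton_left.2 hy, ∅, by simpa using hr, ?_⟩
  have : (edgeCount G {y} ({y} ∪ Z)ᶜ : ℝ) ≤ #(outerBoundary G {y} \ Z) := by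
    exact_mod_cast edgeCount_singleton_compl_le Z
  rw [union_empty, card_singleton, Nat.cast_one, mul_one]
  linarith

lemma disjoint_layer_compl (hy : y ∉ Z) (i : ℕ) :
    Disjoint (layer G (fun _ => (Z ∪ Q)ᶜ) y i) Z := by
  induction i with
  | zero => exact disjoint_singleton_left.2 hy
  | succ i ih =>
    refine disjoint_left.2 fun v hv => ?_
    obtain hv | ⟨hv, -⟩ := mem_layer_succ.1 hv
    · exact disjoint_left.1 ih hv
    · exact fun hvZ => mem_compl.1 hv (mem_union_left Q hvZ)

lemma card_layer_compl_add_card_le (i : ℕ) :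
    #(layer G (fun _ => (Z ∪ Q)ᶜ) y i) +
      #(outerBoundary G (layer G (fun _ => (Z ∪ Q)ᶜ) y i) \ Z) ≤
        #(layer G (fun _ => (Z ∪ Q)ᶜ) y (i + 1)) + #Q := by
  refine (card_layer_add_card_le sdiff_subset).trans (Nat.add_le_add_left (card_le_card ?_) _)
  intro v hv
  simp only [mem_sdiff, mem_compl, mem_union] at hv
  tauto

theorem ExpandsOutside.reachesHalf (hZ : ExpandsOutside G t r Z) (ht : 0 < t) (hr : 0 < r)
    (hr1 : r ≤ 1) (hcard : 2 ≤ Fintype.card V) (hQ : (#Q : ℝ) ≤ r ^ 2 * t / 4) (hy : y ∉ Z) {N : ℕ}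
    (hN : Fintype.card V < r * t / 2 * (1 + r / 2) ^ N) :
    ReachesHalf G (fun _ => (Z ∪ Q)ᶜ) y (N + 1) := by
  by_contra hsmall
  rw [ReachesHalf, not_lt] at hsmall
  set L := layer G (fun _ => (Z ∪ Q)ᶜ) y
  have hmono {i j : ℕ} (hij : i ≤ j) : (#(L i) : ℝ) ≤ #(L j) := by
    exact_mod_cast card_le_card (layer_mono (G := G) (y := y) hij)
  have hgrow (i : ℕ) : (#(L i) : ℝ) + #(outerBoundary G (L i) \ Z) ≤ #(L (i + 1)) + #Q := by
    exact_mod_cast card_layer_compl_add_card_le (G := G) (Z := Z) (Q := Q) (y := y) i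
  have hfirst : r * t / 2 ≤ #(L 1) := by
    have hstart : r * t < #(outerBoundary G (L 0) \ Z) := hZ.lt_card_sdiff_singleton hr.le hy hcard
    have : r * (r * t) ≤ 1 * (r * t) := by gcongr
    linarith [hgrow 0, (Nat.cast_nonneg #(L 0) : (0 : ℝ) ≤ _)]
  have hgeom : ∀ i ≤ N, r * t / 2 * (1 + r / 2) ^ i ≤ #(L (i + 1)) := fun i hi => by
    induction i with
    | zero => simpa using hfirst
    | succ i ih =>
      have hhalf : (#(L (i + 1)) : ℝ) ≤ Fintype.card V / 2 := by
        have : (2 * #(L (N + 1)) : ℝ) ≤ Fintype.card V := by exact_mod_cast hsmall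
        linarith [hmono (show i + 1 ≤ N + 1 by omega)]
      have hne : (L (i + 1)).Nonempty := ⟨y, layer_mono (zero_le) (mem_layer_zero.2 rfl)⟩
      have hexp := hZ.lt_card_sdiff hr.le ht.le hne (disjoint_layer_compl hy _) hhalf
      have hlost : (#Q : ℝ) ≤ r / 2 * #(L (i + 1)) :=
        calc (#Q : ℝ) ≤ r / 2 * (r * t / 2) := by linarith
          _ ≤ r / 2 * #(L (i + 1)) := by
            gcongr
            exact hfirst.trans (hmono (by omega))
      calc r * t / 2 * (1 + r / 2) ^ (i + 1)
          = r * t / 2 * (1 + r / 2) ^ i * (1 + r / 2) := by ring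
        _ ≤ #(L (i + 1)) * (1 + r / 2) := by
          gcongr
          exact ih (by omega)
        _ ≤ #(L (i + 1 + 1)) := by linarith [hgrow (i + 1)]
  have : (#(L (N + 1)) : ℝ) ≤ Fintype.card V := by exact_mod_cast card_le_univ _
  linarith [hgeom N le_rfl]

lemma exp_le_one_add_expansionRate_pow {n : ℝ} (ht : 0 < t) (hn : 0 ≤ n) {N : ℕ}
    (hN : 10 ^ 6 * logFactor t n ^ 3 ≤ N) :
    Real.exp (625 * logFactor t n) ≤ (1 + expansionRate t n / 4) ^ N := by
  have he := expansionRate_pos ht hn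
  have hlog := half_le_log_one_add (e := expansionRate t n / 4) (by positivity)
    (by linarith [expansionRate_le ht hn])
  calc Real.exp (625 * logFactor t n)
      = Real.exp (10 ^ 6 * logFactor t n ^ 3 * (expansionRate t n / 4 / 2)) := by
        congr 1
        linear_combination (-125000) * logFactor t n * expansionRate_mul_logFactor_sq ht hn
    _ ≤ Real.exp (N * Real.log (1 + expansionRate t n / 4)) := by gcongr
    _ = (1 + expansionRate t n / 4) ^ N := by
        rw [← Real.log_pow, Real.exp_log (by positivity)]

lemma lt_expansionRate_mul_pow {n : ℝ} (ht : 0 < t) (hn : 0 ≤ n) {N : ℕ}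
    (hN : 10 ^ 6 * logFactor t n ^ 3 ≤ N) :
    n < expansionRate t n * t / 4 * (1 + expansionRate t n / 4) ^ N := by
  have hL := one_le_logFactor ht hn
  have he := expansionRate_pos ht hn
  have hsq : 800 * logFactor t n ^ 2 ≤ Real.exp (624 * logFactor t n) := by
    have := Real.pow_div_factorial_le_exp (624 * logFactor t n) (by linarith) 2
    norm_num at this
    nlinarith
  have hlt : n / t < Real.exp (logFactor t n) := by
    rw [exp_logFactor ht hn]
    nlinarith [Real.add_one_le_exp (1 : ℝ), div_nonneg hn ht.le]
  calc n = expansionRate t n * t / 4 * (800 * logFactor t n ^ 2 * (n / t)) := by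
        field_simp
        linear_combination (-800 * n) * expansionRate_mul_logFactor_sq ht hn
    _ < expansionRate t n * t / 4 * (800 * logFactor t n ^ 2 * Real.exp (logFactor t n)) := by
        gcongr
    _ ≤ expansionRate t n * t / 4 *
          (Real.exp (624 * logFactor t n) * Real.exp (logFactor t n)) := by gcongr
    _ = expansionRate t n * t / 4 * Real.exp (625 * logFactor t n) := by
        rw [← Real.exp_add]
        ring_nf
    _ ≤ expansionRate t n * t / 4 * (1 + expansionRate t n / 4) ^ N := by
        gcongr
        exact exp_le_one_add_expansionRate_pow ht hn hN

end DenseGrowth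

section DenseConnection

variable {V : Type*} [Fintype V] {G : SimpleGraph V} {t n : ℝ}

lemma div_le_expansionRate_mul {x : ℝ} (ht : 0 < t) (hx : t / 1600 ≤ x) :
    t / 10 ^ 7 ≤ expansionRate t x / 4 * x := by
  have hx0 : 0 < x := lt_of_lt_of_le (by positivity) hx
  have hL := one_le_logFactor ht hx0.le
  have hpow := logFactor_pow_le ht hx 2
  have hrate : expansionRate t x / 4 * x = x / (800 * logFactor t x ^ 2) := by
    unfold expansionRate
    field_simp
    norm_num
  rw [hrate, le_div_iff₀ (by positivity)]
  calc t / 10 ^ 7 * (800 * logFactor t x ^ 2)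
      ≤ t / 10 ^ 7 * (800 * (Nat.factorial 2 * 4803 * (x / t))) := by gcongr
    _ = 800 * (Nat.factorial 2 * 4803) / 10 ^ 7 * x := by field_simp
    _ ≤ 1 * x := by
        gcongr
        norm_num [Nat.factorial]
    _ = x := one_mul x

lemma mul_add_le_expansionRate_mul {p q l : ℝ} (ht : 0 < t) (hn : t / 2 ≤ n) (hl0 : 0 ≤ l)
    (hl : l ≤ 5 * 10 ^ 12 * logFactor t n ^ 6) (hp : p ≤ t / 10 ^ 50 * l ^ 2)
    (hq : q ≤ t / 10 ^ 9) : 20 * (p + q) ≤ expansionRate t n * n := by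
  have hn0 : 0 < n := lt_of_lt_of_le (by positivity) hn
  have hL := one_le_logFactor ht hn0.le
  have hpow2 := logFactor_pow_le ht (show t / 1600 ≤ n by linarith) 2
  have hpow14 := logFactor_pow_le ht (show t / 1600 ≤ n by linarith) 14
  have hp' : p * logFactor t n ^ 2 ≤ n / 10000 :=
    calc p * logFactor t n ^ 2
        ≤ t / 10 ^ 50 * (5 * 10 ^ 12 * logFactor t n ^ 6) ^ 2 * logFactor t n ^ 2 := by
          gcongr
          exact hp.trans (by gcongr)
      _ = 25 * 10 ^ 24 / 10 ^ 50 * t * logFactor t n ^ 14 := by ring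
      _ ≤ 25 * 10 ^ 24 / 10 ^ 50 * t * (Nat.factorial 14 * 4803 * (n / t)) := by gcongr
      _ = 25 * 10 ^ 24 / 10 ^ 50 * (Nat.factorial 14 * 4803) * n := by field_simp
      _ ≤ 1 / 10000 * n :=
          mul_le_mul_of_nonneg_right (by norm_num [Nat.factorial]) hn0.le
      _ = n / 10000 := by ring
  have hq' : q * logFactor t n ^ 2 ≤ n / 10000 :=
    calc q * logFactor t n ^ 2 ≤ t / 10 ^ 9 * (Nat.factorial 2 * 4803 * (n / t)) := by gcongr
      _ = Nat.factorial 2 * 4803 / 10 ^ 9 * n := by field_simp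
      _ ≤ 1 / 10000 * n :=
          mul_le_mul_of_nonneg_right (by norm_num [Nat.factorial]) hn0.le
      _ = n / 10000 := by ring
  have hrate : expansionRate t n * n = n / (200 * logFactor t n ^ 2) := by
    unfold expansionRate
    field_simp
  rw [hrate, le_div_iff₀ (by positivity)]
  linarith

lemma le_expansionRate_sq_mul (ht : 0 < t) (hn : 0 ≤ n) (hd : 10 ^ 27 * logFactor t n ^ 13 ≤ t) :
    3 * 10 ^ 19 * logFactor t n ^ 9 ≤ (expansionRate t n / 2) ^ 2 * t / 4 := by
  have hL := one_le_logFactor ht hn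
  have hrate : (expansionRate t n / 2) ^ 2 * t / 4 = t / (640000 * logFactor t n ^ 4) := by
    unfold expansionRate
    field_simp
    norm_num
  rw [hrate, le_div_iff₀ (by positivity)]
  have := one_le_pow₀ hL (n := 13)
  calc 3 * 10 ^ 19 * logFactor t n ^ 9 * (640000 * logFactor t n ^ 4)
      = 3 * 10 ^ 19 * 640000 * logFactor t n ^ 13 := by ring
    _ ≤ t := by linarith

lemma le_div_of_dense (ht : 0 < t) (hn : 0 ≤ n) (hd : 10 ^ 27 * logFactor t n ^ 13 ≤ t) :
    3 * 10 ^ 19 * logFactor t n ^ 9 ≤ t / 10 ^ 7 - t / 10 ^ 9 := by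
  have hL := one_le_logFactor ht hn
  linarith [pow_le_pow_right₀ hL (show 9 ≤ 13 by norm_num), one_le_pow₀ hL (n := 9)]

lemma IsRobustExpander.reachesHalf_lightSet_of_card_le (h : IsRobustExpander G t) (ht : 4 ≤ t)
    {w : V → ℝ} (hw : ∑ v, w v ^ 2 ≤ t / 10 ^ 50) (l : ℕ) {Z : Finset V}
    (hZ : (#Z : ℝ) ≤ t / 10 ^ 7) (y : V) :
    ReachesHalf G (lightSet w l Z) y (roundCount t (Fintype.card V)) := by
  have hle (X : Finset V) : (#(X ∩ Z) : ℝ) ≤ t / 10 ^ 7 :=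
    hZ.trans' (by exact_mod_cast card_le_card inter_subset_right)
  exact h.reachesHalf_lightSet ht hw ((hle _).trans (by linarith))
    (fun i hi => (hle _).trans (div_le_expansionRate_mul (by linarith) hi.le_card))
    roundBound_lt_roundCount

theorem ExpandsOutside.hasResilientCore {r : ℝ} {Z D : Finset V} {N : ℕ}
    (hZ : ExpandsOutside G t r Z) (ht : 0 < t) (hr : 0 < r) (hr1 : r ≤ 1)
    (hD : #D + (4 * (N + 1 : ℝ) + 8) ≤ r ^ 2 * t / 4) (hcard : #(Z ∪ D) < Fintype.card V)
    (hcard' : 2 ≤ Fintype.card V) (hN : Fintype.card V < r * t / 2 * (1 + r / 2) ^ N) :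
    HasResilientCore G (N + 1) (Z ∪ D) := by
  refine ⟨(Z ∪ D)ᶜ, subset_rfl, ?_, fun y hy T hT _ => ?_⟩
  · have hdeg : ∀ v ∈ (Z ∪ D)ᶜ, (3 : ℝ) ≤ #{x ∈ (Z ∪ D)ᶜ | G.Adj v x} := fun v hv => by
      rw [mem_compl, mem_union, not_or] at hv
      have hexp := hZ.lt_card_sdiff_singleton hr.le hv.1 hcard'
      have hsub : outerBoundary G {v} \ Z ⊆ {x ∈ (Z ∪ D)ᶜ | G.Adj v x} ∪ D := fun x hx => by
        simp only [mem_sdiff, mem_outerBoundary, mem_singleton, exists_eq_left] at hx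
        simp only [mem_union, mem_filter, mem_compl]
        tauto
      have : (#(outerBoundary G {v} \ Z) : ℝ) ≤ #{x ∈ (Z ∪ D)ᶜ | G.Adj v x} + #D := by
        exact_mod_cast (card_le_card hsub).trans (card_union_le _ _)
      have : r * (r * t) ≤ 1 * (r * t) := by gcongr
      linarith [(Nat.cast_nonneg #D : (0 : ℝ) ≤ _), (Nat.cast_nonneg N : (0 : ℝ) ≤ _)]
    have hpos : (0 : ℝ) < #(Z ∪ D)ᶜ := by
      rw [card_compl]
      exact_mod_cast Nat.sub_pos_of_lt hcard
    have := mul_le_edgeCount hdeg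
    exact_mod_cast (by linarith : (2 * #(Z ∪ D)ᶜ : ℝ) < edgeCount G (Z ∪ D)ᶜ (Z ∪ D)ᶜ)
  · rw [mem_compl, mem_union, not_or] at hy
    have : (#(D ∪ T.erase y) : ℝ) ≤ #D + (4 * (N + 1) + 8) := by
      exact_mod_cast (card_union_le _ _).trans (Nat.add_le_add_left (card_erase_le.trans hT) _)
    rw [union_assoc]
    exact hZ.reachesHalf ht hr hr1 hcard' (by linarith) hy.1 hN

lemma IsRobustExpander.hasResilientCore (h : IsRobustExpander G t) (ht : 4 ≤ t)
    (hd : 10 ^ 27 * logFactor t (Fintype.card V) ^ 13 ≤ t) {W Y D : Finset V}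
    (hW : 20 * (#W : ℝ) ≤ expansionRate t (Fintype.card V) * Fintype.card V)
    (hY : (#Y : ℝ) ≤ Fintype.card V / 10)
    (hWY : ExpandsOutside G t (expansionRate t (Fintype.card V) / 2) (W ∪ Y))
    (hD : #D ≤ avoidCount t (Fintype.card V)) :
    HasResilientCore G (roundCount t (Fintype.card V)) (W ∪ Y ∪ D) := by
  have hn := h.card_pos (by linarith)
  have hrate := expansionRate_pos (by linarith : 0 < t) hn.le
  have hrate' := expansionRate_le (by linarith : 0 < t) hn.le
  have hD' : (#D : ℝ) ≤ avoidCount t (Fintype.card V) := by exact_mod_cast hD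
  have havoid := avoidCount_add_le (by linarith : 0 < t) hn.le
  have hsq := le_expansionRate_sq_mul (by linarith : 0 < t) hn.le hd
  have hhalf := h.half_le_card
  have hcount : (roundCount t (Fintype.card V) : ℝ) =
      ((⌊10 ^ 6 * logFactor t (Fintype.card V) ^ 3⌋₊ + 1 : ℕ) : ℝ) + 1 := by
    unfold roundCount
    push_cast
    ring
  refine hWY.hasResilientCore (N := ⌊10 ^ 6 * logFactor t (Fintype.card V) ^ 3⌋₊ + 1)
    (by linarith) (by positivity) (by linarith) ?_ ?_ ?_ ?_
  · rw [← hcount]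
    linarith
  · have : (#(W ∪ Y ∪ D) : ℝ) ≤ #W + #Y + #D := by
      exact_mod_cast (card_union_le _ _).trans (Nat.add_le_add_right (card_union_le _ _) _)
    have : expansionRate t (Fintype.card V) * Fintype.card V ≤ 1 / 200 * Fintype.card V := by
      gcongr
    have := le_div_of_dense (by linarith : 0 < t) hn.le hd
    exact_mod_cast (by linarith : (#(W ∪ Y ∪ D) : ℝ) < Fintype.card V)
  · exact_mod_cast (by linarith : (2 : ℝ) ≤ Fintype.card V)
  · have := lt_expansionRate_mul_pow (by linarith : 0 < t) hn.le
      (N := ⌊10 ^ 6 * logFactor t (Fintype.card V) ^ 3⌋₊ + 1)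
      (by push_cast; exact (Nat.lt_floor_add_one _).le)
    convert this using 2 <;> ring

lemma one_le_roundCount : 1 ≤ roundCount t n := by
  unfold roundCount
  omega

theorem IsRobustExpander.hasLightPath_of_dense (h : IsRobustExpander G t) (ht : 4 ≤ t)
    (c : G.Coloring Bool) (hd : 10 ^ 27 * logFactor t (Fintype.card V) ^ 13 ≤ t) {w : V → ℝ}
    (hw0 : ∀ v, 0 ≤ w v) (hw : ∑ v, w v ^ 2 ≤ t / 10 ^ 50) {B : Finset V}
    (hB : (#B : ℝ) ≤ t / 10 ^ 9) {a b : V} (ha : a ∈ B) (hab : a ≠ b) (hc : c a = c b) :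
    HasLightPath G w (pathLength t (Fintype.card V)) B a b := by
  have hn := h.card_pos (by linarith)
  set l := pathLength t (Fintype.card V)
  have hl : 0 < l := by unfold l pathLength; positivity
  set W : Finset V := {v | (l : ℝ)⁻¹ < w v} with hW
  have hWB : 20 * (#(W ∪ B) : ℝ) ≤ expansionRate t (Fintype.card V) * Fintype.card V :=
    (mul_le_mul_of_nonneg_left (by exact_mod_cast card_union_le W B) (by norm_num)).trans
      (mul_add_le_expansionRate_mul (by linarith) h.half_le_card (Nat.cast_nonneg l)
        (pathLength_le (by linarith) hn.le)
        (card_filter_lt_le (by exact_mod_cast hl) hw) hB)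
  obtain ⟨Y, hY, hWBY⟩ := h.exists_expandsOutside (by linarith) hWB
  have havoid := avoidCount_add_le (by linarith : 0 < t) hn.le
  have hle := le_div_of_dense (by linarith : 0 < t) hn.le hd
  have hconn : IsConnectable G w (roundCount t (Fintype.card V)) l B ∅ (W ∪ B ∪ Y) a b :=
    { length_eq := rfl
      left_mem := ha
      ne := hab
      right_notMem := notMem_empty b
      subset := by rw [empty_union]; exact subset_union_right.trans subset_union_left
      le := fun v hv => not_lt.1 fun hlt => hv (by simp [hW, hlt])
      reachesHalf_right := h.reachesHalf_lightSet_of_card_le ht hw l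
        (by rw [empty_union]; linarith) b
      reachesHalf_left := fun D hD _ => by
        have hD' : (#D : ℝ) ≤ avoidCount t (Fintype.card V) := by exact_mod_cast hD
        have : (#(D ∪ B) : ℝ) ≤ #D + #B := by exact_mod_cast card_union_le D B
        exact h.reachesHalf_lightSet_of_card_le ht hw l (by linarith) a
      hasResilientCore := fun D hD => h.hasResilientCore ht hd hWB hY hWBY hD }
  exact hconn.hasLightPath c hc hw0 one_le_roundCount

end DenseConnection

section Thickening

variable {V : Type*} {G : SimpleGraph V} {r : ℕ}

lemma edist_le_natCast_iff {u v : V} : G.edist u v ≤ r ↔ ∃ p : G.Walk u v, p.length ≤ r := by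
  refine ⟨fun h => ?_, fun ⟨p, hp⟩ => (SimpleGraph.edist_le p).trans (by exact_mod_cast hp)⟩
  obtain ⟨p, hp⟩ := SimpleGraph.exists_walk_of_edist_ne_top (ne_top_of_le_ne_top (by simp) h)
  exact ⟨p, by exact_mod_cast hp.trans_le h⟩

lemma edist_le_of_mem_layer {A : ℕ → Finset V} {y v : V} {i : ℕ} (hv : v ∈ layer G A y i) :
    G.edist y v ≤ i := by
  induction i generalizing v with
  | zero => simp [mem_layer_zero.1 hv]
  | succ i ih =>
    rcases mem_layer_succ.1 hv with hv | ⟨-, u, hu, huv⟩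
    · exact (ih hv).trans (by exact_mod_cast i.le_succ)
    · push_cast
      exact SimpleGraph.edist_triangle.trans
        (add_le_add (ih hu) (SimpleGraph.edist_eq_one_iff_adj.2 huv).le)

lemma layer_subset_layer {A A' : ℕ → Finset V} (h : ∀ i, A i ⊆ A' i) (y : V) (i : ℕ) :
    layer G A y i ⊆ layer G A' y i := by
  induction i with
  | zero => exact subset_rfl
  | succ i ih =>
    intro v hv
    rw [mem_layer_succ] at hv ⊢
    exact hv.imp (@ih v) fun ⟨hvA, u, hu, huv⟩ => ⟨h i hvA, u, ih hu, huv⟩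

lemma ne_and_edist_le_of_mem_outerBoundary_layer [Fintype V] {A : ℕ → Finset V} {y v : V}
    {i : ℕ} (hv : v ∈ outerBoundary G (layer G A y i)) : v ≠ y ∧ G.edist y v ≤ (i + 1 : ℕ) := by
  obtain ⟨hvi, u, hu, huv⟩ := mem_outerBoundary.1 hv
  refine ⟨fun h => hvi (layer_mono i.zero_le (mem_layer_zero.2 h)), ?_⟩
  push_cast
  exact SimpleGraph.edist_triangle.trans
    (add_le_add (edist_le_of_mem_layer hu) (SimpleGraph.edist_eq_one_iff_adj.2 huv).le)

variable [Fintype V] {X : Finset V}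

/-- The set of vertices at distance at most `r` from the set `X`. -/
noncomputable def thickening (G : SimpleGraph V) (r : ℕ) (X : Finset V) : Finset V :=
  {v | ∃ x ∈ X, G.edist x v ≤ r}

lemma mem_thickening {v : V} : v ∈ thickening G r X ↔ ∃ x ∈ X, G.edist x v ≤ r := by
  simp [thickening]

lemma subset_thickening : X ⊆ thickening G r X := fun x hx =>
  mem_thickening.2 ⟨x, hx, by simp⟩

lemma thickening_succ_subset :
    thickening G (r + 1) X ⊆ thickening G r X ∪
      (thickening G r X).biUnion fun v => {u | G.Adj v u} := by
  intro v hv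
  obtain ⟨x, hx, hxv⟩ := mem_thickening.1 hv
  obtain ⟨p, hp⟩ := edist_le_natCast_iff.1 (SimpleGraph.edist_comm ▸ hxv)
  rw [mem_union, mem_biUnion]
  cases p with
  | nil => exact Or.inl (mem_thickening.2 ⟨v, hx, by simp⟩)
  | @cons _ u _ hvu p =>
    rw [SimpleGraph.Walk.length_cons] at hp
    have hxu : G.edist x u ≤ r := by
      rw [SimpleGraph.edist_comm]
      exact edist_le_natCast_iff.2 ⟨p, by omega⟩
    exact Or.inr ⟨u, mem_thickening.2 ⟨x, hx, hxu⟩, by simpa using hvu.symm⟩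

lemma card_thickening_le {D : ℝ} (hD0 : 0 ≤ D) (hD : ∀ v, (G.degree v : ℝ) ≤ D) :
    (#(thickening G r X) : ℝ) ≤ #X * (1 + D) ^ r := by
  induction r with
  | zero =>
    have hsub : thickening G 0 X ⊆ X := fun v hv => by
      obtain ⟨x, hx, hxv⟩ := mem_thickening.1 hv
      rw [Nat.cast_zero, nonpos_iff_eq_zero, SimpleGraph.edist_eq_zero_iff] at hxv
      exact hxv ▸ hx
    simpa using card_le_card hsub
  | succ r ih =>
    calc (#(thickening G (r + 1) X) : ℝ)
        ≤ #(thickening G r X) + ∑ v ∈ thickening G r X, (G.degree v : ℝ) := by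
          have hcard := (card_le_card (thickening_succ_subset (G := G) (r := r) (X := X))).trans
            ((card_union_le _ _).trans (Nat.add_le_add_left card_biUnion_le _))
          simp only [← SimpleGraph.neighborFinset_eq_filter,
            SimpleGraph.card_neighborFinset_eq_degree] at hcard
          exact_mod_cast hcard
      _ ≤ #(thickening G r X) + #(thickening G r X) * D := by
          gcongr
          simpa using sum_le_card_nsmul _ _ D fun v (_ : v ∈ thickening G r X) => hD v
      _ = #(thickening G r X) * (1 + D) := by ring
      _ ≤ #X * (1 + D) ^ r * (1 + D) := by gcongr
      _ = #X * (1 + D) ^ (r + 1) := by ring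

end Thickening

section ExponentialGrowth

variable {t x : ℝ}

lemma eq_mul_exp_logFactor_sub (ht : 0 < t) (hx : 0 ≤ x) :
    x = t * (Real.exp (logFactor t x - 1) - 1) := by
  rw [Real.exp_sub, exp_logFactor ht hx]
  field_simp
  ring

lemma mul_sq_add_one_le_exp {L : ℝ} (hL : 100 ≤ L) :
    800 * L ^ 2 + 1 ≤ Real.exp (L / 2 - 1) := by
  have hexp := Real.pow_div_factorial_le_exp (L / 2 - 1) (by linarith) 6
  have hpow : (0.49 * L) ^ 6 ≤ (L / 2 - 1) ^ 6 := by
    gcongr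
    linarith
  have hpow4 : (100 : ℝ) ^ 4 * L ^ 2 ≤ L ^ 4 * L ^ 2 := by gcongr
  have : (1 : ℝ) ≤ L ^ 2 := by nlinarith
  norm_num [Nat.factorial] at hexp
  ring_nf at hpow hpow4 hexp ⊢
  linarith

lemma exp_half_logFactor_le (ht : 1 ≤ t) (hx : 0 ≤ x) (hL : 100 ≤ logFactor t x) :
    Real.exp (logFactor t x / 2) ≤ expansionRate t x / 4 * x := by
  have hxeq := eq_mul_exp_logFactor_sub (by linarith : 0 < t) hx
  have hrate : expansionRate t x / 4 * x = x / (800 * logFactor t x ^ 2) := by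
    unfold expansionRate
    field_simp
    norm_num
    ring
  rw [hrate, le_div_iff₀ (by positivity)]
  set L := logFactor t x
  have hone : 1 ≤ Real.exp (L / 2) := Real.one_le_exp (by linarith)
  calc Real.exp (L / 2) * (800 * L ^ 2)
      ≤ Real.exp (L / 2) * (Real.exp (L / 2 - 1) - 1) := by
        gcongr
        linarith [mul_sq_add_one_le_exp hL]
    _ = Real.exp (L - 1) - Real.exp (L / 2) := by
        rw [mul_sub, ← Real.exp_add, mul_one]
        ring_nf
    _ ≤ Real.exp (L - 1) - 1 := by linarith
    _ ≤ t * (Real.exp (L - 1) - 1) :=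
        le_mul_of_one_le_left (by linarith [Real.one_le_exp (x := L - 1) (by linarith)]) ht
    _ = x := hxeq.symm

lemma exp_div_le_of_cube_le {q i : ℕ} (ht : 1 ≤ t) (hx : 0 ≤ x) (hq : 12700 ≤ q)
    (hqi : q ^ 3 ≤ i) (hi : i ≤ roundBound t x) :
    Real.exp (q / 254) ≤ expansionRate t x / 4 * x := by
  have hqi' : (q : ℝ) ^ 3 ≤ i := by exact_mod_cast hqi
  have hq' : (12700 : ℝ) ≤ q := by exact_mod_cast hq
  unfold roundBound at hi
  have hL : (q : ℝ) / 127 ≤ logFactor t x := by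
    by_contra! hlt
    have : logFactor t x ^ 3 < ((q : ℝ) / 127) ^ 3 :=
      pow_lt_pow_left₀ hlt (by linarith [one_le_logFactor (by linarith : 0 < t) hx]) (by norm_num)
    have : (12700 : ℝ) ^ 3 ≤ (q : ℝ) ^ 3 := by gcongr
    linarith
  refine le_trans (Real.exp_le_exp.2 ?_) (exp_half_logFactor_le ht hx (by linarith))
  linarith

lemma two_mul_add_five_le {i : ℝ} (ht : 10 ^ 15 ≤ t) (hx : t / 1600 ≤ x)
    (hi : i ≤ roundBound t x) : 2 * i + 5 ≤ expansionRate t x / 2 * x := by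
  have ht0 : 0 < t := by linarith
  have hx0 : 0 < x := lt_of_lt_of_le (by positivity) hx
  have hL := one_le_logFactor ht0 hx0.le
  have hpow := logFactor_pow_le ht0 hx 5
  have hrate : expansionRate t x / 2 * x = x / (400 * logFactor t x ^ 2) := by
    unfold expansionRate
    field_simp
    norm_num
  rw [hrate, le_div_iff₀ (by positivity)]
  unfold roundBound at hi
  calc (2 * i + 5) * (400 * logFactor t x ^ 2)
      ≤ 2000007 * logFactor t x ^ 3 * (400 * logFactor t x ^ 2) := by
        gcongr
        linarith [one_le_pow₀ hL (n := 3)]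
    _ = 2000007 * 400 * logFactor t x ^ 5 := by ring
    _ ≤ 2000007 * 400 * (Nat.factorial 5 * 4803 * (x / t)) := by gcongr
    _ = 2000007 * 400 * Nat.factorial 5 * 4803 / t * x := by ring
    _ ≤ 1 * x := by
        refine mul_le_mul_of_nonneg_right ((div_le_one ht0).2 (le_trans ?_ ht)) hx0.le
        norm_num [Nat.factorial]
    _ = x := one_mul x

end ExponentialGrowth

section SparseScale

variable {t n : ℝ} {z : ℕ}

/-- The numerical data of the sparse regime, in which `t` is polylogarithmic in the number `n` of
vertices: every local quantity is at most `exp z`, while `n` is at least about `exp (z ^ 40)`. Here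
`z` is the fortieth root of `logFactor t n`. -/
structure IsSparseScale (t n : ℝ) (z : ℕ) : Prop where
  le_degreeParam : 10 ^ 15 ≤ t
  le_scale : 12700 ≤ z
  sq_le : 1 + 1600 * t ^ 2 ≤ Real.exp z
  avoidCount_le : (avoidCount t n : ℝ) + 4 * roundCount t n + 9 ≤ Real.exp z
  heavy_le : t / 10 ^ 50 * (pathLength t n : ℝ) ^ 2 ≤ Real.exp z
  exp_le : Real.exp ((z : ℝ) ^ 40 - 2) ≤ n

lemma exists_pow_le_lt_succ_pow {x : ℝ} (hx : 0 ≤ x) {p : ℕ} (hp : p ≠ 0) :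
    ∃ z : ℕ, (z : ℝ) ^ p ≤ x ∧ x < (z + 1 : ℝ) ^ p := by
  have hroot : (x ^ (p⁻¹ : ℝ)) ^ p = x := Real.rpow_inv_natCast_pow hx hp
  refine ⟨⌊x ^ (p⁻¹ : ℝ)⌋₊, ?_, ?_⟩
  · conv_rhs => rw [← hroot]
    exact pow_le_pow_left₀ (Nat.cast_nonneg _) (Nat.floor_le (by positivity)) p
  · conv_lhs => rw [← hroot]
    exact pow_lt_pow_left₀ (Nat.lt_floor_add_one _) (by positivity) hp

lemma exists_forall_mul_succ_pow_le_exp {C : ℝ} (hC : 0 < C) (p : ℕ) :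
    ∃ z₀ : ℕ, ∀ z : ℕ, z₀ ≤ z → C * (z + 1 : ℝ) ^ p ≤ Real.exp z := by
  have hbound := (Real.isLittleO_pow_exp_atTop (n := p)).def
    (c := 1 / (C * Real.exp 1)) (by positivity)
  obtain ⟨z₀, hz₀⟩ := Filter.eventually_atTop.1
    ((tendsto_natCast_atTop_atTop (R := ℝ)).eventually hbound)
  refine ⟨z₀, fun z hz => ?_⟩
  have hz' := hz₀ (z + 1) (by omega)
  rw [Real.norm_of_nonneg (by positivity), Real.norm_of_nonneg (Real.exp_pos _).le, Nat.cast_succ,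
    Real.exp_add] at hz'
  calc C * (z + 1 : ℝ) ^ p ≤ C * (1 / (C * Real.exp 1) * (Real.exp z * Real.exp 1)) := by gcongr
    _ = Real.exp z := by field_simp

lemma exp_logFactor_sub_two_le (ht : 1 ≤ t) (hn : 0 ≤ n) (hL : 2 ≤ logFactor t n) :
    Real.exp (logFactor t n - 2) ≤ n := by
  have hone := Real.one_le_exp (x := logFactor t n - 2) (by linarith)
  have htwo := Real.add_one_le_exp (1 : ℝ)
  calc Real.exp (logFactor t n - 2)
      ≤ Real.exp (logFactor t n - 2) * Real.exp 1 - 1 := by nlinarith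
    _ = Real.exp (logFactor t n - 1) - 1 := by
        rw [← Real.exp_add]
        ring_nf
    _ ≤ t * (Real.exp (logFactor t n - 1) - 1) :=
        le_mul_of_one_le_left
          (by linarith [Real.one_le_exp (x := logFactor t n - 1) (by linarith)]) ht
    _ = n := (eq_mul_exp_logFactor_sub (by linarith) hn).symm

lemma isSparseScale_of_pow_le (ht : 10 ^ 15 ≤ t) (hn : 0 ≤ n)
    (hsparse : t < 10 ^ 27 * logFactor t n ^ 13) (hz : 12700 ≤ z)
    (hzL : (z : ℝ) ^ 40 ≤ logFactor t n) (hLz : 10 ^ 58 * logFactor t n ^ 26 ≤ Real.exp z) :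
    IsSparseScale t n z := by
  have ht0 : 0 < t := by linarith
  have hL := one_le_logFactor ht0 hn
  have hL26 := one_le_pow₀ hL (n := 26)
  have havoid := avoidCount_add_le ht0 hn
  have hpath := pathLength_le ht0 hn
  set L := logFactor t n
  have hpow {p : ℕ} (hp : p ≤ 26) : L ^ p ≤ L ^ 26 := pow_le_pow_right₀ hL hp
  refine ⟨ht, hz, ?_, ?_, ?_, ?_⟩
  · calc 1 + 1600 * t ^ 2 ≤ 1 + 1600 * (10 ^ 27 * L ^ 13) ^ 2 := by gcongr
      _ = 1 + 1600 * 10 ^ 54 * L ^ 26 := by ring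
      _ ≤ Real.exp z := by linarith
  · linarith [hpow (p := 9) (by norm_num)]
  · calc t / 10 ^ 50 * (pathLength t n : ℝ) ^ 2
        ≤ 10 ^ 27 * L ^ 13 / 10 ^ 50 * (5 * 10 ^ 12 * L ^ 6) ^ 2 := by gcongr
      _ = 250 * L ^ 25 := by ring
      _ ≤ Real.exp z := by linarith [hpow (p := 25) (by norm_num)]
  · have : (2 : ℝ) ≤ z := by exact_mod_cast (by omega : 2 ≤ z)
    have : (z : ℝ) ≤ z ^ 40 := le_self_pow₀ (by linarith) (by norm_num)
    exact (Real.exp_le_exp.2 (by linarith)).trans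
      (exp_logFactor_sub_two_le (by linarith) hn (by linarith : 2 ≤ L))

theorem exists_isSparseScale :
    ∃ t₀ : ℝ, 10 ^ 15 ≤ t₀ ∧ ∀ t n : ℝ, t₀ ≤ t → 0 ≤ n → t < 10 ^ 27 * logFactor t n ^ 13 →
      ∃ z, IsSparseScale t n z := by
  obtain ⟨z₀, hz₀⟩ := exists_forall_mul_succ_pow_le_exp (C := 10 ^ 58) (by positivity) (40 * 26)
  set z₁ := max z₀ 12700
  refine ⟨max (10 ^ 15) (10 ^ 27 * ((z₁ : ℝ) ^ 40) ^ 13), le_max_left _ _, ?_⟩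
  intro t n ht hn hsparse
  obtain ⟨ht15, htz⟩ := max_le_iff.1 ht
  have hL := one_le_logFactor (by linarith : 0 < t) hn
  obtain ⟨z, hzL, hLz⟩ := exists_pow_le_lt_succ_pow (by linarith : 0 ≤ logFactor t n)
    (show 40 ≠ 0 by norm_num)
  have hz : z₁ ≤ z := by
    by_contra! hlt
    have : (z + 1 : ℝ) ^ 40 ≤ (z₁ : ℝ) ^ 40 := by
      gcongr
      exact_mod_cast hlt
    have : logFactor t n ^ 13 ≤ ((z₁ : ℝ) ^ 40) ^ 13 := by
      gcongr
      linarith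
    linarith
  obtain ⟨hz0, hz12700⟩ := max_le_iff.1 hz
  refine ⟨z, isSparseScale_of_pow_le ht15 hn hsparse hz12700 hzL ?_⟩
  calc 10 ^ 58 * logFactor t n ^ 26 ≤ 10 ^ 58 * ((z + 1 : ℝ) ^ 40) ^ 26 := by gcongr
    _ = 10 ^ 58 * (z + 1 : ℝ) ^ (40 * 26) := by rw [pow_mul]
    _ ≤ Real.exp z := hz₀ z hz0

namespace IsSparseScale

lemma le_exp (h : IsSparseScale t n z) : 12700 ≤ Real.exp z := by
  have : (12700 : ℝ) ≤ z := by exact_mod_cast h.le_scale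
  linarith [Real.add_one_le_exp (z : ℝ)]

lemma degreeParam_le (h : IsSparseScale t n z) : t ≤ Real.exp z := by
  nlinarith [h.sq_le, h.le_degreeParam]

lemma exp_pow_lt (h : IsSparseScale t n z) : Real.exp z ^ (2 * z ^ 30 + 4) < n := by
  refine lt_of_lt_of_le ?_ h.exp_le
  rw [← Real.exp_nat_mul, Real.exp_lt_exp, lt_sub_iff_add_lt]
  have hz := h.le_scale
  have hz31 : z ≤ z ^ 31 := Nat.le_self_pow (by norm_num) z
  have hz40 : 12700 * z ^ 31 ≤ z ^ 40 := by
    rw [show z ^ 40 = z ^ 9 * z ^ 31 by ring]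
    exact Nat.mul_le_mul_right _ (hz.trans (Nat.le_self_pow (by norm_num) z))
  exact_mod_cast (by ring_nf; omega : (2 * z ^ 30 + 4) * z + 2 < z ^ 40)

lemma two_mul_exp_le (h : IsSparseScale t n z) :
    2 * Real.exp z ≤ Real.exp ((z ^ 2 : ℕ) / 254) := by
  have hz : (12700 : ℝ) ≤ z := by exact_mod_cast h.le_scale
  calc 2 * Real.exp z ≤ Real.exp z * Real.exp z := by
        gcongr
        linarith [h.le_exp]
    _ = Real.exp (z + z) := (Real.exp_add _ _).symm
    _ ≤ Real.exp ((z ^ 2 : ℕ) / 254) := by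
        gcongr
        push_cast
        nlinarith

lemma four_mul_exp_add_le (h : IsSparseScale t n z) :
    4 * Real.exp z + Real.exp z ^ z ^ 6 ≤ Real.exp z ^ (z ^ 6 + 1) := by
  have := h.le_exp
  have : Real.exp z ≤ Real.exp z ^ z ^ 6 :=
    le_self_pow₀ (by linarith) (pow_ne_zero 6 (by linarith [h.le_scale]))
  rw [pow_succ _ (z ^ 6)]
  nlinarith

lemma exp_pow_le (h : IsSparseScale t n z) :
    Real.exp z ^ (z ^ 6 + 1) ≤ Real.exp ((z ^ 10 : ℕ) / 254) := by
  rw [← Real.exp_nat_mul, Real.exp_le_exp, le_div_iff₀ (by norm_num)]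
  have hz := h.le_scale
  have hz7 : z ≤ z ^ 7 := Nat.le_self_pow (by norm_num) z
  have hz10 : 12700 * z ^ 7 ≤ z ^ 10 := by
    rw [show z ^ 10 = z ^ 3 * z ^ 7 by ring]
    exact Nat.mul_le_mul_right _ (hz.trans (Nat.le_self_pow (by norm_num) z))
  exact_mod_cast (by ring_nf; omega : (z ^ 6 + 1) * z * 254 ≤ z ^ 10)

end IsSparseScale

end SparseScale

section SparseConnection

variable {V : Type*} [Fintype V] {G : SimpleGraph V} {t : ℝ} {q m : ℕ}

lemma IsOnSchedule.exp_div_le {A : ℕ → Finset V} {y : V} {i : ℕ} (hi : IsOnSchedule G t A y i)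
    (ht : 1 ≤ t) (hq : 12700 ≤ q) (hqi : q ^ 3 ≤ i) :
    Real.exp (q / 254) ≤ expansionRate t #(layer G A y i) / 4 * #(layer G A y i) :=
  exp_div_le_of_cube_le ht (Nat.cast_nonneg _) hq hqi hi.le_roundBound

lemma outerBoundary_layer_inter_eq_empty {A : ℕ → Finset V} {Z : Finset V} {y : V} {i r : ℕ}
    (hZ : ∀ v ∈ Z, v ≠ y → r < G.edist y v) (hi : i < r) :
    outerBoundary G (layer G A y i) ∩ Z = ∅ := by
  refine eq_empty_of_forall_notMem fun v hv => ?_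
  obtain ⟨hv, hvZ⟩ := mem_inter.1 hv
  obtain ⟨hne, hle⟩ := ne_and_edist_le_of_mem_outerBoundary_layer hv
  exact (hZ v hvZ hne).not_ge (hle.trans (by exact_mod_cast hi))

lemma IsRobustExpander.reachesHalf_lightSet_of_far (h : IsRobustExpander G t) (ht : 4 ≤ t)
    {w : V → ℝ} (hw : ∑ v, w v ^ 2 ≤ t / 10 ^ 50) (l : ℕ) {Z : Finset V} {y : V}
    (hq : 12700 ≤ q) (hfar : ∀ v ∈ Z, v ≠ y → (q ^ 3 : ℕ) < G.edist y v)
    (hZ : (#Z : ℝ) ≤ Real.exp (q / 254)) (hm : roundBound t (Fintype.card V) < m) :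
    ReachesHalf G (lightSet w l Z) y m := by
  refine h.reachesHalf_lightSet ht hw ?_ (fun i hi => ?_) hm
  · have hempty : outerBoundary G {y} ∩ Z = ∅ :=
      outerBoundary_layer_inter_eq_empty (A := fun _ => ∅) (i := 0) hfar
        (pow_pos (by omega) 3)
    rw [hempty, card_empty, Nat.cast_zero]
    positivity
  · rcases lt_or_ge i (q ^ 3) with hiq | hiq
    · rw [outerBoundary_layer_inter_eq_empty hfar hiq, card_empty, Nat.cast_zero]
      exact le_trans (by positivity) (div_le_expansionRate_mul (by linarith) hi.le_card)
    · exact ((Nat.cast_le.2 (card_le_card inter_subset_right)).trans hZ).trans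
        (hi.exp_div_le (by linarith) hq hiq)

lemma outerBoundary_layer_sdiff_subset {U T : Finset V} {y : V} {i r : ℕ}
    (hU : ∀ v ∈ U, r < G.edist y v) (hi : i < r) :
    outerBoundary G (layer G (fun _ => (U ∪ T.erase y)ᶜ) y i) \ (U ∪ T.erase y)ᶜ ⊆
      T ∩ layer G (fun _ => Uᶜ) y (i + 1) := by
  intro v hv
  obtain ⟨hv, hvA⟩ := mem_sdiff.1 hv
  obtain ⟨-, hle⟩ := ne_and_edist_le_of_mem_outerBoundary_layer hv
  have hvU : v ∉ U := fun hvU => (hU v hvU).not_ge (hle.trans (by exact_mod_cast hi))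
  simp only [mem_compl, mem_union, not_not] at hvA
  obtain ⟨-, u, hu, huv⟩ := mem_outerBoundary.1 hv
  have hsub : layer G (fun _ => (U ∪ T.erase y)ᶜ) y i ⊆ layer G (fun _ => Uᶜ) y i :=
    layer_subset_layer (fun _ => compl_subset_compl.2 subset_union_left) y i
  exact mem_inter.2 ⟨mem_of_mem_erase (hvA.resolve_left hvU),
    mem_layer_succ.2 (Or.inr ⟨mem_compl.2 hvU, u, hsub hu, huv⟩)⟩

lemma IsRobustExpander.isResilient_of_far (h : IsRobustExpander G t) (ht : 10 ^ 15 ≤ t)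
    {U : Finset V} {y : V} (hq : 12700 ≤ q) (hfar : ∀ v ∈ U, (q ^ 3 : ℕ) < G.edist y v)
    (hU : (#U : ℝ) + (4 * m + 8) ≤ Real.exp (q / 254))
    (hm : roundBound t (Fintype.card V) < m) : IsResilient G m U y := by
  intro T hT hTlayer
  have hloss {i : ℕ} (hi : i < q ^ 3) :
      (#(outerBoundary G (layer G (fun _ => (U ∪ T.erase y)ᶜ) y i) \ (U ∪ T.erase y)ᶜ) : ℝ) ≤
        2 * i + 5 := by
    have := (card_le_card (outerBoundary_layer_sdiff_subset hfar hi)).trans (hTlayer (i + 1))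
    exact_mod_cast this.trans (by omega)
  refine h.reachesHalf (by linarith) ?_ (fun i hi => ?_) hm
  · refine (hloss (i := 0) (pow_pos (by omega) 3)).trans ?_
    rw [Nat.cast_zero]
    linarith
  · rcases lt_or_ge i (q ^ 3) with hiq | hiq
    · exact (hloss hiq).trans (two_mul_add_five_le ht hi.le_card hi.le_roundBound)
    · have hT' : (#T : ℝ) ≤ 4 * m + 8 := by exact_mod_cast hT
      have hcard : #(outerBoundary G (layer G (fun _ => (U ∪ T.erase y)ᶜ) y i) \
          (U ∪ T.erase y)ᶜ) ≤ #U + #T := by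
        refine (card_le_card fun v hv => ?_).trans ((card_union_le U (T.erase y)).trans
          (Nat.add_le_add_left card_erase_le _))
        simpa [or_iff_not_imp_left] using (mem_sdiff.1 hv).2
      have hcard' := (Nat.cast_le (α := ℝ)).2 hcard
      push_cast at hcard'
      have hexp := hi.exp_div_le (by linarith) hq hiq
      have := Real.exp_pos ((q : ℝ) / 254)
      linarith

lemma IsRobustExpander.le_degree (h : IsRobustExpander G t) (ht : 4 ≤ t) (v : V) :
    t / 800 ≤ G.degree v := by
  refine (h.le_card_outerBoundary_singleton ht v).trans ?_
  rw [← SimpleGraph.card_neighborFinset_eq_degree]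
  refine Nat.cast_le.2 (card_le_card fun u hu => ?_)
  simp only [mem_outerBoundary, mem_singleton, exists_eq_left] at hu
  exact (SimpleGraph.mem_neighborFinset _ _ _).2 hu.2

lemma IsRobustExpander.two_mul_card_compl_lt (h : IsRobustExpander G t) (ht : 10 ^ 15 ≤ t)
    {S : Finset V} (hS : #S * (1 + 1600 * t ^ 2) < Fintype.card V) :
    2 * #Sᶜ < edgeCount G Sᶜ Sᶜ := by
  have hle : #Sᶜ * (t / 800) ≤ edgeCount G Sᶜ univ := by
    refine mul_le_edgeCount fun v _ => ?_
    rw [← SimpleGraph.neighborFinset_eq_filter, SimpleGraph.card_neighborFinset_eq_degree]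
    exact h.le_degree (by linarith) v
  have hsplit : (edgeCount G Sᶜ univ : ℝ) ≤ edgeCount G Sᶜ Sᶜ + edgeCount G Sᶜ S := by
    have := edgeCount_union_right_le (G := G) (A := S) (B := Sᶜ) (C := Sᶜ)
    rw [union_compl, add_comm] at this
    exact_mod_cast this
  have hcross : (edgeCount G Sᶜ S : ℝ) ≤ #S * (1600 * t ^ 2) := by
    rw [edgeCount_comm]
    exact edgeCount_le_mul fun v _ =>
      (Nat.cast_le.2 (card_filter_adj_le_degree Sᶜ v)).trans (h.degree_le v)
  have hcard : (#S : ℝ) + #Sᶜ = Fintype.card V := by exact_mod_cast card_add_card_compl S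
  have hten : (10 : ℝ) * #Sᶜ ≤ #Sᶜ * (t / 800) := by
    rw [mul_comm]
    gcongr
    linarith
  have : (#S : ℝ) * 1 ≤ #S * (1600 * t ^ 2) := by
    gcongr
    nlinarith
  exact_mod_cast (by linarith : (2 * #Sᶜ : ℝ) < edgeCount G Sᶜ Sᶜ)

lemma IsRobustExpander.card_thickening_le (h : IsRobustExpander G t) {z : ℕ}
    (hs : IsSparseScale t (Fintype.card V) z) (X : Finset V) (r : ℕ) :
    (#(thickening G r X) : ℝ) ≤ #X * Real.exp z ^ r := by
  refine (BalancedSubdivision.card_thickening_le (by positivity) h.degree_le).trans ?_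
  gcongr
  exact hs.sq_le

lemma IsRobustExpander.hasResilientCore_of_sparse (h : IsRobustExpander G t) {z : ℕ}
    (hs : IsSparseScale t (Fintype.card V) z) {U : Finset V}
    (hU : #U + (4 * (roundCount t (Fintype.card V) : ℝ) + 8) ≤ Real.exp z ^ (z ^ 6 + 1)) :
    HasResilientCore G (roundCount t (Fintype.card V)) U := by
  have hz := hs.le_scale
  refine ⟨(thickening G (z ^ 30) U)ᶜ, compl_subset_compl.2 subset_thickening,
    h.two_mul_card_compl_lt hs.le_degreeParam ?_, fun y hy => ?_⟩
  · calc #(thickening G (z ^ 30) U) * (1 + 1600 * t ^ 2)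
        ≤ #U * Real.exp z ^ z ^ 30 * Real.exp z := by
          gcongr
          · exact h.card_thickening_le hs U _
          · exact hs.sq_le
      _ ≤ Real.exp z ^ (z ^ 6 + 1) * Real.exp z ^ z ^ 30 * Real.exp z := by
          gcongr
          exact le_trans (le_add_of_nonneg_right (by positivity)) hU
      _ = Real.exp z ^ (z ^ 6 + z ^ 30 + 2) := by ring
      _ ≤ Real.exp z ^ (2 * z ^ 30 + 4) := by
          refine pow_le_pow_right₀ (by linarith [hs.le_exp]) ?_
          linarith [Nat.pow_le_pow_right (by omega : 1 ≤ z) (show 6 ≤ 30 by norm_num)]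
      _ < Fintype.card V := hs.exp_pow_lt
  · refine h.isResilient_of_far (q := z ^ 10) hs.le_degreeParam
      (hz.trans (Nat.le_self_pow (by norm_num) z)) (fun v hv => not_le.1 fun hle => ?_)
      (hU.trans hs.exp_pow_le) roundBound_lt_roundCount
    rw [SimpleGraph.edist_comm, ← pow_mul] at hle
    exact mem_compl.1 hy (mem_thickening.2 ⟨v, hv, hle⟩)

lemma IsRobustExpander.reachesHalf_lightSet_of_card_le_exp_pow (h : IsRobustExpander G t) {z : ℕ}
    (hs : IsSparseScale t (Fintype.card V) z) {w : V → ℝ} (hw : ∑ v, w v ^ 2 ≤ t / 10 ^ 50)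
    (l : ℕ) {Z : Finset V} {y : V} (hfar : ∀ v ∈ Z, v ≠ y → (z ^ 30 : ℕ) < G.edist y v)
    (hZ : (#Z : ℝ) ≤ Real.exp z ^ (z ^ 6 + 1)) :
    ReachesHalf G (lightSet w l Z) y (roundCount t (Fintype.card V)) := by
  rw [show z ^ 30 = (z ^ 10) ^ 3 from pow_mul z 10 3] at hfar
  exact h.reachesHalf_lightSet_of_far (by linarith [hs.le_degreeParam]) hw l
    (hs.le_scale.trans (Nat.le_self_pow (by norm_num) z)) hfar (hZ.trans hs.exp_pow_le)
    roundBound_lt_roundCount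

lemma IsRobustExpander.reachesHalf_lightSet_of_disjoint_thickening (h : IsRobustExpander G t)
    {z : ℕ} (hs : IsSparseScale t (Fintype.card V) z) {w : V → ℝ}
    (hw : ∑ v, w v ^ 2 ≤ t / 10 ^ 50) (l : ℕ) {B D : Finset V} {a : V}
    (hB : (#B : ℝ) ≤ Real.exp z) (hfar : ∀ v ∈ B, v ≠ a → (z ^ 6 : ℕ) < G.edist a v)
    (hD : #D ≤ avoidCount t (Fintype.card V)) (hDa : Disjoint D (thickening G (z ^ 6) {a})) :
    ReachesHalf G (lightSet w l (D ∪ B)) a (roundCount t (Fintype.card V)) := by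
  have hfar' : ∀ v ∈ D ∪ B, v ≠ a → ((z ^ 2) ^ 3 : ℕ) < G.edist a v := fun v hv hva => by
    rw [← pow_mul]
    rcases mem_union.1 hv with hv | hv
    · exact not_le.1 fun hle => disjoint_left.1 hDa hv (by simpa [mem_thickening])
    · exact hfar v hv hva
  have hcard : (#(D ∪ B) : ℝ) ≤ 2 * Real.exp z := by
    have : (#(D ∪ B) : ℝ) ≤ #D + #B := by exact_mod_cast card_union_le D B
    rify at hD
    linarith [hs.four_mul_exp_add_le, hs.avoidCount_le]
  exact h.reachesHalf_lightSet_of_far (by linarith [hs.le_degreeParam]) hw l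
    (hs.le_scale.trans (Nat.le_self_pow (by norm_num) z)) hfar' (hcard.trans hs.two_mul_exp_le)
    roundBound_lt_roundCount

lemma lt_edist_of_mem_thickening {r s : ℕ} {a b v : V} (h : (r + s : ℕ) < G.edist a b)
    (hv : v ∈ thickening G r {a}) : s < G.edist b v := by
  by_contra! hle
  refine h.not_ge ((SimpleGraph.edist_triangle (v := v)).trans ?_)
  push_cast
  exact add_le_add (by simpa [mem_thickening] using hv) (SimpleGraph.edist_comm ▸ hle)

theorem IsRobustExpander.hasLightPath_of_sparse (h : IsRobustExpander G t)
    (c : G.Coloring Bool) {z : ℕ} (hs : IsSparseScale t (Fintype.card V) z) {w : V → ℝ}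
    (hw0 : ∀ v, 0 ≤ w v) (hw : ∑ v, w v ^ 2 ≤ t / 10 ^ 50) {B : Finset V}
    (hB : (#B : ℝ) ≤ t / 10 ^ 9)
    (hsep : ∀ x ∈ B, ∀ y ∈ B, x ≠ y → (2 * z ^ 30 + 2 : ℕ) < G.edist x y) {a b : V} (ha : a ∈ B)
    (hb : b ∈ B) (hab : a ≠ b) (hc : c a = c b) :
    HasLightPath G w (pathLength t (Fintype.card V)) B a b := by
  have hz := hs.le_scale
  have havoid := hs.avoidCount_le
  have hBz : (#B : ℝ) ≤ Real.exp z := by linarith [hs.degreeParam_le, hs.le_degreeParam]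
  have hpow : z ^ 6 ≤ z ^ 30 := Nat.pow_le_pow_right (by omega) (by norm_num)
  have hsmall := hs.four_mul_exp_add_le
  have hl : 0 < pathLength t (Fintype.card V) := by unfold pathLength; positivity
  set l := pathLength t (Fintype.card V)
  set W : Finset V := {v | (l : ℝ)⁻¹ < w v} with hW
  set Z := thickening G (z ^ 6) {a}
  have hWz : (#W : ℝ) ≤ Real.exp z :=
    (card_filter_lt_le (by exact_mod_cast hl) hw).trans hs.heavy_le
  have hZz : (#Z : ℝ) ≤ Real.exp z ^ z ^ 6 := by simpa using h.card_thickening_le hs {a} (z ^ 6)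
  have hfarB {x v : V} (hx : x ∈ B) (hv : v ∈ B) (hvx : v ≠ x) {r : ℕ} (hr : r ≤ 2 * z ^ 30 + 2) :
      r < G.edist x v :=
    lt_of_le_of_lt (by exact_mod_cast hr) (hsep x hx v hv hvx.symm)
  have hfarZ {v : V} (hv : v ∈ Z) : (z ^ 30 : ℕ) < G.edist b v :=
    lt_edist_of_mem_thickening (hfarB ha hb hab.symm (by omega)) hv
  have hconn : IsConnectable G w (roundCount t (Fintype.card V)) l B Z (W ∪ B ∪ Z) a b :=
    { length_eq := rfl
      left_mem := ha
      ne := hab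
      right_notMem := fun hbZ => (hfarZ hbZ).not_ge (by simp)
      subset := union_subset subset_union_right (subset_union_right.trans subset_union_left)
      le := fun v hv => not_lt.1 fun hlt => hv (by simp [hW, hlt])
      reachesHalf_right := by
        refine h.reachesHalf_lightSet_of_card_le_exp_pow hs hw l (fun v hv hvb => ?_) ?_
        · exact (mem_union.1 hv).elim hfarZ fun hv => hfarB hb hv hvb (by omega)
        · have : (#(Z ∪ B) : ℝ) ≤ #Z + #B := by exact_mod_cast card_union_le Z B
          linarith [hs.le_exp]
      reachesHalf_left := fun D hD hDZ =>
        h.reachesHalf_lightSet_of_disjoint_thickening hs hw l hBz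
          (fun v hv hva => hfarB ha hv hva (by omega)) hD hDZ
      hasResilientCore := fun D hD => by
        have hD' : (#D : ℝ) ≤ avoidCount t (Fintype.card V) := by exact_mod_cast hD
        have : (#(W ∪ B ∪ Z ∪ D) : ℝ) ≤ #W + #B + #Z + #D := by
          exact_mod_cast (card_union_le _ _).trans (Nat.add_le_add_right ((card_union_le _ _).trans
            (Nat.add_le_add_right (card_union_le _ _) _)) _)
        exact h.hasResilientCore_of_sparse hs (by linarith) }
  exact hconn.hasLightPath c hc hw0 one_le_roundCount

end SparseConnection

section Assembly

variable {V : Type*} {G : SimpleGraph V} {l : ℕ} {K : ℝ}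

lemma hasTK_of_forall_isPathSet {k : ℕ} {b : Fin k → V} (hb : Function.Injective b)
    {S : {p : Fin k × Fin k // p.1 < p.2} → Finset V}
    (hS : ∀ p, IsPathSet G (b p.1.1) (b p.1.2) (l + 1) (S p))
    (hends : ∀ p, ∀ v ∈ S p, v ∈ Set.range b → v = b p.1.1 ∨ v = b p.1.2)
    (hdisj : Pairwise (Function.onFun Disjoint fun p => ((S p).erase (b p.1.1)).erase (b p.1.2))) :
    HasTK G k l := by
  choose P hpath hlen hsupp using hS
  refine ⟨_, b, hb, fun i j hij => P ⟨(i, j), hij⟩, fun i j hij => hpath _,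
    fun i j hij => hlen _, fun i j hij i' j' hij' hne v hv hv' => ?_, rfl⟩
  rw [← List.mem_toFinset, hsupp] at hv hv'
  by_cases hvb : v ∈ Set.range b
  · exact ⟨hends _ v hv hvb, hends _ v hv' hvb⟩
  · have hinterior : ∀ p, v ∈ S p → v ∈ ((S p).erase (b p.1.1)).erase (b p.1.2) := fun p hvp =>
      mem_erase.2 ⟨fun h => hvb ⟨_, h.symm⟩, mem_erase.2 ⟨fun h => hvb ⟨_, h.symm⟩, hvp⟩⟩
    exact (disjoint_left.1 (hdisj fun h => hne (congrArg Subtype.val h)) (hinterior _ hv)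
      (hinterior _ hv')).elim

variable [Fintype V]

/-- For every weighting of the vertices whose squares sum to at most `K`, any two vertices of `B`
are joined by a light path of length `l`. This is the dual form of the existence of a fractional
packing of such paths. -/
def IsFractionallyLinked (G : SimpleGraph V) (K : ℝ) (l : ℕ) (B : Finset V) : Prop :=
  ∀ w : V → ℝ, (∀ v, 0 ≤ w v) → ∑ v, w v ^ 2 ≤ K →
    ∀ a ∈ B, ∀ b ∈ B, a ≠ b → HasLightPath G w l B a b

theorem IsFractionallyLinked.hasTK {B : Finset V} (hB : IsFractionallyLinked G K (l + 1) B)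
    (hK0 : 0 < K) (hK : 256 * (#B : ℝ) ^ 2 ≤ K) : HasTK G #B l := by
  let b (i : Fin #B) : V := B.equivFin.symm i
  have hb : Function.Injective b := Subtype.val_injective.comp B.equivFin.symm.injective
  have hbB (i : Fin #B) : b i ∈ B := (B.equivFin.symm i).2
  let F (p : {p : Fin #B × Fin #B // p.1 < p.2}) : Finset (Finset V) :=
    {I | ∃ S, IsPathSet G (b p.1.1) (b p.1.2) (l + 1) S ∧
      (∀ v ∈ S, v ∈ B → v = b p.1.1 ∨ v = b p.1.2) ∧ (S.erase (b p.1.1)).erase (b p.1.2) = I}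
  have hpairs : (Fintype.card {p : Fin #B × Fin #B // p.1 < p.2} : ℝ) ≤ #B ^ 2 := by
    have := Fintype.card_subtype_le fun p : Fin #B × Fin #B => p.1 < p.2
    rw [Fintype.card_prod, Fintype.card_fin, ← pow_two] at this
    exact_mod_cast this
  obtain ⟨f, hf, hdisj⟩ := exists_pairwise_disjoint_selection (F := F) hK0
    (by norm_num : (0 : ℝ) ≤ 8) (fun p w hw0 hw => by
      obtain ⟨S, hS, hSB, hSw⟩ := hB w hw0 hw _ (hbB p.1.1) _ (hbB p.1.2) (hb.ne p.2.ne)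
      exact ⟨_, mem_filter.2 ⟨mem_univ _, S, hS, hSB, rfl⟩, hSw⟩) (by linarith)
  choose S hS hSB hSf using fun p => (mem_filter.1 (hf p)).2
  refine hasTK_of_forall_isPathSet hb hS (fun p v hv => ?_) (by simpa only [hSf] using hdisj)
  rintro ⟨i, rfl⟩
  exact hSB p _ hv (hbB i)

end Assembly

section BranchVertices

variable {V : Type*} [Fintype V] {G : SimpleGraph V} {t : ℝ} {k : ℕ}

lemma exists_card_le_two_mul_card_filter_eq (c : V → Bool) :
    ∃ i, (Fintype.card V : ℝ) ≤ 2 * #{v | c v = i} := by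
  obtain ⟨i, hi⟩ := Fintype.exists_le_card_fiber_of_nsmul_le_card c
    (b := (Fintype.card V : ℝ) / 2) (by simp [mul_div_cancel₀])
  exact ⟨i, by linarith⟩

lemma exists_subset_card_eq_forall_lt_edist {D : ℝ} (hD0 : 0 ≤ D)
    (hD : ∀ v, (G.degree v : ℝ) ≤ D) {S : Finset V} {r : ℕ} (hk : k * (1 + D) ^ r < #S) :
    ∃ B ⊆ S, #B = k ∧ ∀ x ∈ B, ∀ y ∈ B, x ≠ y → r < G.edist x y := by
  induction k with
  | zero => exact ⟨∅, by simp⟩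
  | succ k ih =>
    have hk' : k * (1 + D) ^ r < #S :=
      lt_of_le_of_lt (by gcongr; exact_mod_cast k.le_succ) hk
    obtain ⟨B, hBS, rfl, hB⟩ := ih hk'
    have hlt : #(thickening G r B) < #S := by
      exact_mod_cast (card_thickening_le hD0 hD).trans_lt hk'
    obtain ⟨x, hxS, hx⟩ := exists_mem_notMem_of_card_lt_card hlt
    have hfar : ∀ y ∈ B, r < G.edist y x := fun y hy =>
      not_le.1 fun hle => hx (mem_thickening.2 ⟨y, hy, hle⟩)
    refine ⟨insert x B, insert_subset hxS hBS,
      card_insert_of_notMem fun hxB => hx (subset_thickening hxB), fun u hu v hv huv => ?_⟩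
    rcases mem_insert.1 hu with rfl | huB <;> rcases mem_insert.1 hv with rfl | hvB
    · exact absurd rfl huv
    · exact SimpleGraph.edist_comm ▸ hfar v hvB
    · exact hfar u huB
    · exact hB u huB v hvB huv

lemma IsRobustExpander.exists_isFractionallyLinked_of_dense (h : IsRobustExpander G t)
    (ht : 4 ≤ t) (c : G.Coloring Bool) (hd : 10 ^ 27 * logFactor t (Fintype.card V) ^ 13 ≤ t)
    (hk : k ≤ t / 10 ^ 9) :
    ∃ B, #B = k ∧ IsFractionallyLinked G (t / 10 ^ 50) (pathLength t (Fintype.card V)) B := by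
  obtain ⟨i, hi⟩ := exists_card_le_two_mul_card_filter_eq c
  have hki : (k : ℝ) ≤ #{v | c v = i} := by linarith [h.half_le_card]
  obtain ⟨B, hBi, rfl⟩ := exists_subset_card_eq (Nat.cast_le.1 hki)
  have hcol : ∀ a ∈ B, c a = i := fun a ha => (mem_filter.1 (hBi ha)).2
  exact ⟨B, rfl, fun w hw0 hw a ha b hb hab => h.hasLightPath_of_dense ht c hd hw0 hw hk ha hab
    ((hcol a ha).trans (hcol b hb).symm)⟩

lemma IsRobustExpander.exists_isFractionallyLinked_of_sparse (h : IsRobustExpander G t)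
    (c : G.Coloring Bool) {z : ℕ} (hs : IsSparseScale t (Fintype.card V) z)
    (hk : k ≤ t / 10 ^ 9) :
    ∃ B, #B = k ∧ IsFractionallyLinked G (t / 10 ^ 50) (pathLength t (Fintype.card V)) B := by
  obtain ⟨i, hi⟩ := exists_card_le_two_mul_card_filter_eq c
  have hroom : k * (1 + 1600 * t ^ 2) ^ (2 * z ^ 30 + 2) < #{v | c v = i} := by
    have hkz : 2 * (k : ℝ) ≤ Real.exp z ^ 2 := by
      nlinarith [hs.degreeParam_le, hs.le_exp, hs.le_degreeParam]
    have : 2 * (k * (1 + 1600 * t ^ 2) ^ (2 * z ^ 30 + 2)) < (Fintype.card V : ℝ) := calc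
      2 * (k * (1 + 1600 * t ^ 2) ^ (2 * z ^ 30 + 2))
          = 2 * k * (1 + 1600 * t ^ 2) ^ (2 * z ^ 30 + 2) := by ring
      _ ≤ Real.exp z ^ 2 * Real.exp z ^ (2 * z ^ 30 + 2) := by
          gcongr
          exact hs.sq_le
      _ = Real.exp z ^ (2 * z ^ 30 + 4) := by ring
      _ < Fintype.card V := hs.exp_pow_lt
    linarith
  obtain ⟨B, hBi, rfl, hsep⟩ := exists_subset_card_eq_forall_lt_edist (by positivity) h.degree_le
    hroom
  have hcol : ∀ a ∈ B, c a = i := fun a ha => (mem_filter.1 (hBi ha)).2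
  exact ⟨B, rfl, fun w hw0 hw a ha b hb hab => h.hasLightPath_of_sparse c hs hw0 hw hk hsep ha hb
    hab ((hcol a ha).trans (hcol b hb).symm)⟩

end BranchVertices

section MainTheorem

theorem IsRobustExpander.exists_forall_hasTK.{u} : ∃ t₀ : ℝ, 10 ^ 15 ≤ t₀ ∧
    ∀ {V : Type u} [Fintype V] {G : SimpleGraph V} {t : ℝ} {k : ℕ}, IsRobustExpander G t →
      G.Coloring Bool → t₀ ≤ t → 256 * (k : ℝ) ^ 2 ≤ t / 10 ^ 50 → ∃ l, HasTK G k l := by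
  obtain ⟨t₀, ht₀, hscale⟩ := exists_isSparseScale
  refine ⟨t₀, ht₀, fun {V _ G t k} h c ht hk => ?_⟩
  have hkt : (k : ℝ) ≤ t / 10 ^ 9 := by
    have : (k : ℝ) ≤ (k : ℝ) ^ 2 := by exact_mod_cast Nat.le_self_pow two_ne_zero k
    linarith
  have hlinked : ∃ B, #B = k ∧
      IsFractionallyLinked G (t / 10 ^ 50) (pathLength t (Fintype.card V)) B := by
    rcases le_or_gt (10 ^ 27 * logFactor t (Fintype.card V) ^ 13) t with hd | hd
    · exact h.exists_isFractionallyLinked_of_dense (by linarith) c hd hkt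
    · obtain ⟨z, hz⟩ := hscale t _ ht (Nat.cast_nonneg _) hd
      exact h.exists_isFractionallyLinked_of_sparse c hz hkt
  obtain ⟨B, rfl, hB⟩ := hlinked
  obtain ⟨l, hl⟩ : ∃ l, pathLength t (Fintype.card V) = l + 1 :=
    Nat.exists_eq_succ_of_ne_zero (by unfold pathLength; positivity)
  exact ⟨l, (hl ▸ hB).hasTK (div_pos (by linarith) (by positivity)) hk⟩

lemma exists_forall_hasTK_of_forall_degree_le.{u} : ∃ C : ℝ, 10 ^ 54 ≤ C ∧
    ∀ {d : ℝ} {k : ℕ}, 0 < k → C * (k : ℝ) ^ 2 ≤ d →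
      ∀ (V : Type u) [Fintype V] [Nonempty V] (G : SimpleGraph V),
        d / 2 * Fintype.card V ≤ edgeCount G univ univ →
        (∀ v, (G.degree v : ℝ) ≤ 100 * d ^ 2) → ∃ l, HasTK G k l := by
  obtain ⟨t₀, ht₀, hexp⟩ := IsRobustExpander.exists_forall_hasTK
  refine ⟨10 ^ 54 * t₀, by linarith, fun {d k} hk hd V _ _ G hE hdeg => ?_⟩
  have hk1 : (1 : ℝ) ≤ (k : ℝ) ^ 2 := one_le_pow₀ (by exact_mod_cast hk)
  have ht₀d : 10 ^ 54 * t₀ ≤ d := (le_mul_of_one_le_right (by linarith) hk1).trans hd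
  have hkd : 10 ^ 54 * (k : ℝ) ^ 2 ≤ d := le_trans (by gcongr; linarith) hd
  obtain ⟨H, hHG, ⟨c⟩, hH⟩ := exists_coloring_edgeCount_le G
  have hdegH : ∀ v, (H.degree v : ℝ) ≤ 1600 * (d / 4) ^ 2 := fun v =>
    calc (H.degree v : ℝ) ≤ G.degree v := Nat.cast_le.2 (SimpleGraph.degree_le_of_le hHG)
      _ ≤ 100 * d ^ 2 := hdeg v
      _ = 1600 * (d / 4) ^ 2 := by ring
  have hEH : d / 4 * Fintype.card V ≤ edgeCount H univ univ := by
    have : (edgeCount G univ univ : ℝ) ≤ 2 * edgeCount H univ univ := by exact_mod_cast hH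
    linarith
  obtain ⟨A, -, hA⟩ := exists_isRobustExpander_induce (by linarith) hdegH hEH
  let f := SimpleGraph.Embedding.induce (G := H) (A : Set V)
  obtain ⟨l, hl⟩ := hexp (k := k) hA (c.comp f.toHom) (by linarith) (by linarith)
  exact ⟨l, hl.map ((SimpleGraph.Hom.ofLE hHG).comp f.toHom) f.injective⟩

theorem exists_forall_hasTK_of_mul_sq_le.{u} : ∃ C : ℝ, 0 < C ∧
    ∀ {d : ℝ} {k : ℕ}, 0 < k → C * (k : ℝ) ^ 2 ≤ d →
      ∀ {V : Type u} [Fintype V] [Nonempty V] (G : SimpleGraph V),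
        d * Fintype.card V ≤ edgeCount G univ univ → ∃ l, HasTK G k l := by
  obtain ⟨C, hC, hbase⟩ := exists_forall_hasTK_of_forall_degree_le
  refine ⟨C, by linarith, fun {d k} hk hd V _ _ G hE => ?_⟩
  have hk1 : (1 : ℝ) ≤ k := by exact_mod_cast hk
  have hkd : 10 ^ 54 * (k : ℝ) ≤ d :=
    le_trans (mul_le_mul hC (le_self_pow₀ hk1 two_ne_zero) (by positivity) (by linarith)) hd
  exact exists_hasTK_of_forall_degree_le (by linarith) (by linarith) (hbase hk hd) G hE

lemma nonempty_of_avgDeg_pos {V : Type*} {G : SimpleGraph V} (h : 0 < avgDeg G) : Nonempty V := by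
  by_contra hV
  rw [not_nonempty_iff] at hV
  simp [avgDeg] at h

lemma avgDeg_mul_card {V : Type*} [Fintype V] [Nonempty V] (G : SimpleGraph V) :
    avgDeg G * Fintype.card V = edgeCount G univ univ := by
  rw [avgDeg, Nat.card_eq_fintype_card, div_mul_cancel₀ _ (by positivity),
    finsum_eq_sum_of_fintype, edgeCount_univ_right]
  push_cast
  refine sum_congr rfl fun v _ => ?_
  rw [Set.ncard_eq_toFinset_card', ← SimpleGraph.card_neighborFinset_eq_degree,
    SimpleGraph.neighborFinset]

end MainTheorem

end BalancedSubdivision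

open BalancedSubdivision in
theorem statement_0_general.{u} :
    ∃ c : Real, 0 < c ∧
      ∀ d : Real, 0 < d →
        ∀ (V : Type u) [Fintype V] (G : SimpleGraph V), d ≤ avgDeg G →
          ∃ k : Nat, c * Real.sqrt d ≤ (k : Real) ∧ ∃ l : Nat, HasTK G k l := by
  obtain ⟨C, hC, hTK⟩ := exists_forall_hasTK_of_mul_sq_le
  refine ⟨(2 * √C)⁻¹, by positivity, fun d hd V _ G hG => ?_⟩
  have : Nonempty V := nonempty_of_avgDeg_pos (hd.trans_le hG)
  have hE : d * Fintype.card V ≤ edgeCount G Finset.univ Finset.univ := by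
    rw [← avgDeg_mul_card]
    gcongr
  set x := (2 * √C)⁻¹ * √d with hx
  rcases le_total x 1 with hx1 | hx1
  · exact ⟨1, by exact_mod_cast hx1, 0, hasTK_one G (Classical.arbitrary V)⟩
  · have hx2 : C * (2 * x) ^ 2 = d := by
      rw [hx, mul_inv, mul_pow, mul_pow, mul_pow, Real.sq_sqrt hd.le, inv_pow, inv_pow,
        Real.sq_sqrt hC.le]
      field_simp
    exact ⟨⌈x⌉₊, Nat.le_ceil x, hTK (Nat.ceil_pos.2 (by linarith))
      (hx2 ▸ by gcongr; exact Nat.ceil_le_two_mul (by linarith)) G hE⟩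

theorem statement_0 :
    ∃ c : Real, 0 < c ∧
      ∀ d : Real, 0 < d →
        ∀ (V : Type) [Fintype V] (G : SimpleGraph V), d ≤ avgDeg G →
          ∃ k : Nat, c * Real.sqrt d ≤ (k : Real) ∧ ∃ l : Nat, HasTK G k l := by
  exact statement_0_general
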